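/- Let K be a number field, let ι : K →+* ℂ be a ring embedding, let d ≥ 2, and let f be a polynomial with coefficients in 𝓞_K of degree d. If f is NOT linearly conjugate over ℂ to ±T_d (i.e., there do not exist ε ∈ {1,−1} and a, b ∈ ℂ with a ≠ 0 such that a·(ι f)(x) + b = ε·T_d(a·x + b) for all x ∈ ℂ), then Per_inf(f,K) = 0. -/

import Mathlib

/-!
The liminf is zero as soon as, for each `ε > 0`, the proportion of periodic points is at most `ε`
modulo some primes of arbitrarily large norm; primes of degree one chosen to our liking suffice.

**Reduction to finite prime fields.** Periodic points of a polynomial `g` over a finite field lie in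
the image of every iterate of `g`. So it is enough to show (`exists_perCount_le`): for a monic `g` of
degree `d` over a prime field `k` of large order `q` containing the `d ^ L`-th roots of unity, with `L`
large, the image of the `L`-th iterate has at most about `3 ε q` elements, unless `g` is conjugate by a
translation to a Dickson polynomial with parameter `κ`, `κ ^ (d - 1) = 1` (`IsDickson`). To apply this
over a number field, consider the finitely generated ring of algebraic numbers generated by the
integers of `K`, a root of unity `ζ` of order `d ^ L`, a number `l` with `l ^ (d - 1)` equal to the
leading coefficient, `1 / l`, `1 / d`, and the inverse of a nonzero obstruction `obs` to being
Dickson. It has homomorphisms to `𝔽_p` for arbitrarily large `p` (`Spec.exists_hom_zmod`). Scaling by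
`l` makes the polynomial monic, and if it were Dickson over `ℂ`, then `f` would be conjugate to `± T_d`
(`isLinConj_of_isDickson`).

**The monodromy group.** Let `Ω` be the splitting field of `g^L(X) = t` over `k(t)` and `G` its group.
The roots of the `g^l(X) = t`, `l ≤ L`, form a rooted tree on which `G` acts. Since the point `t = ∞` is
totally tamely ramified, inertia provides a `σ` in `G` permuting every level in a single cycle
(`Odometer`). Hence the number of fixed points of a random element of `G` at level `l` is a martingale
in `l` (`Odometer.sum_fx_cos`). If moreover the second moments above fixed points keep growing, only a
small proportion of `G` has a fixed point at a high level (`Odometer.exists_height`). Indeed second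
moments over a coset are integral multiples of its size, so that strict growth is linear growth, and
an element with few fixed points must change their number with definite probability; the potential
`Odometer.pot` then increases at each such change, yet is bounded.

The growth follows from the nonvanishing of sums of ratios of leading coefficients at infinity
(`Odometer.Mixing`). If such a sum vanished on a whole coset, the weighted sum of the corresponding
roots and the product formula would force each root to be of the form `c + u + κ / u`, where `σ`
multiplies `u` by a root of unity (`Core.shape`). This happening on three consecutive levels forces
`g` to be Dickson (`isDickson_of_steps`, `InftyData.mixing`).

**Counting.** If `a` in `k` is a value of the iterate and not a branch point, the Frobenius elements at
the places above `t = a` fix a root at level `L`. In place of the Chebotarev density theorem, an upper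
bound is enough: for each `g₀` in `G` at most `3 q` pairs `(a, τ)` have `g₀` as the Frobenius of the
translate by `τ` of a place above `a` (`InftyData.stepanov`). This is Stepanov's method: an auxiliary
function of the form `∑ c_i B_i u_i ^ q`, with distinct orders of the `u_i` at infinity, vanishes to
high order at all these places, because `u_i ^ q` has the residue of `g₀ u_i` there and is constant for
derivations. Summing over the small set of `g₀` with a fixed point and dividing by `|G|` bounds the
image (`Places.card_image_le`). The factor `3` does not depend on `L`, so it is harmless.
-/

open Polynomial NumberField Filter

/-- The number of periodic points of the evaluation map of a polynomial `g` over a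
commutative ring. -/
noncomputable def perCount {F : Type*} [CommRing F] (g : F[X]) : ℕ :=
  Nat.card {α : F | ∃ m, 1 ≤ m ∧ (fun x => g.eval x)^[m] α = α}

/-- `Per_inf(f, K)`: the liminf, as `N(𝔭) → ∞`, of the proportion of periodic points of the
reduction of `f` modulo a nonzero prime ideal `𝔭` of `𝓞 K`. -/
noncomputable def perInf (K : Type*) [Field K] [NumberField K] (f : (𝓞 K)[X]) : ℝ :=
  liminf
    (fun 𝔭 : {I : Ideal (𝓞 K) // I.IsPrime ∧ I ≠ ⊥} =>
      (perCount (f.map (Ideal.Quotient.mk 𝔭.1)) : ℝ) / (Ideal.absNorm 𝔭.1 : ℝ))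
    (comap (fun 𝔭 : {I : Ideal (𝓞 K) // I.IsPrime ∧ I ≠ ⊥} => Ideal.absNorm 𝔭.1) atTop)


/-- `f` is linearly conjugate over `ℂ` to `±T_d`: there are `ε ∈ {1, -1}` and `a b : ℂ` with
`a ≠ 0` such that `a·f(x) + b = ε·T_d(a·x + b)` for all `x : ℂ`. -/
def IsLinConjChebyshev {R : Type*} [CommRing R] (ρ : R →+* ℂ) (f : R[X]) (d : ℕ) : Prop :=
  ∃ ε a b : ℂ, (ε = 1 ∨ ε = -1) ∧ a ≠ 0 ∧
    ∀ x : ℂ, a * (f.map ρ).eval x + b = ε * (Polynomial.dickson 1 1 d : ℂ[X]).eval (a * x + b)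

set_option linter.unusedSectionVars false

/-! ### Odometers acting on rooted trees -/

/-- A group `G` acting on a `d`-ary tree whose level `l` is `X l` for `l ≤ L` and whose parent map
is `π`, together with an element `σ` that permutes the `d ^ l` vertices of each level `l` in a
single cycle. Only `X l` with `l ≤ L` is constrained; all levels live in one type `Ω`. -/
structure Odometer {G Ω : Type*} [Group G] [MulAction G Ω] (d L : ℕ) (X : ℕ → Finset Ω)
    (π : Ω → Ω) (σ : G) : Prop where
  smul_mem : ∀ l ≤ L, ∀ g : G, ∀ x ∈ X l, g • x ∈ X l
  map_mem : ∀ l, l + 1 ≤ L → ∀ x ∈ X (l + 1), π x ∈ X l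
  map_smul : ∀ (g : G) (x : Ω), π (g • x) = g • π x
  nonempty : ∀ l ≤ L, (X l).Nonempty
  trans : ∀ l ≤ L, ∀ x ∈ X l, ∀ y ∈ X l, ∃ i : ℕ, σ ^ i • x = y
  fix : ∀ l ≤ L, ∀ x ∈ X l, ∀ i : ℕ, σ ^ i • x = x ↔ d ^ l ∣ i

namespace Odometer

variable {G Ω : Type*} [Group G] [MulAction G Ω] {d L : ℕ} {X : ℕ → Finset Ω}
  {π : Ω → Ω} {σ : G}

open scoped Classical in
/-- The number of points of level `n + m` fixed by `θ` whose ancestor in level `n` lies in `A`. -/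
noncomputable def fx (X : ℕ → Finset Ω) (π : Ω → Ω) (n m : ℕ) (A : Finset Ω) (θ : G) : ℕ :=
  ((X (n + m)).filter (fun x => π^[m] x ∈ A ∧ θ • x = x)).card

open scoped Classical in
/-- The elements of `G` acting on level `n` as `h` does: the coset of `h` modulo the pointwise
stabiliser of level `n`. -/
noncomputable def cos [Fintype G] (X : ℕ → Finset Ω) (n : ℕ) (h : G) : Finset G :=
  Finset.univ.filter (fun θ => ∀ x ∈ X n, θ • x = h • x)

section
variable [Fintype G]

lemma mem_cos {n : ℕ} {h θ : G} : θ ∈ cos X n h ↔ ∀ x ∈ X n, θ • x = h • x := by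
  simp [cos]

lemma self_mem_cos {n : ℕ} {h : G} : h ∈ cos X n h := by simp [mem_cos]

end

lemma iter_smul (O : Odometer d L X π σ) (m : ℕ) (g : G) (x : Ω) :
    π^[m] (g • x) = g • π^[m] x := by
  induction m generalizing x with
  | zero => rfl
  | succ m ih => simp only [Function.iterate_succ, Function.comp, O.map_smul, ih]

lemma iter_mem (O : Odometer d L X π σ) (n m : ℕ) (h : n + m ≤ L) (x : Ω) (hx : x ∈ X (n + m)) :
    π^[m] x ∈ X n := by
  induction m generalizing x with
  | zero => exact hx
  | succ m ih =>
    rw [Function.iterate_succ_apply]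
    exact ih (by omega) _ (O.map_mem _ (by omega) x hx)

/-- A power of `σ` by a multiple of `d ^ n` fixes level `n`. -/
lemma pow_fix (O : Odometer d L X π σ) {n l : ℕ} (hn : n ≤ L) (hl : n ≤ l) (j : ℕ) {x : Ω}
    (hx : x ∈ X n) : σ ^ (d ^ l * j) • x = x :=
  (O.fix n hn x hx _).2 ((pow_dvd_pow d hl).mul_right j)

lemma mul_mem_cos [Fintype G] (O : Odometer d L X π σ) {n l : ℕ} (hn : n ≤ L) (hl : n ≤ l) (j : ℕ)
    {h θ : G} : σ ^ (d ^ l * j) * θ ∈ cos X n h ↔ θ ∈ cos X n h := by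
  simp only [mem_cos]
  refine forall₂_congr fun x hx => ?_
  rw [mul_smul, O.pow_fix hn hl j (O.smul_mem n hn θ x hx)]

lemma exists_lift (O : Odometer d L X π σ) {l : ℕ} (hl : l + 1 ≤ L) {y : Ω} (hy : y ∈ X l) :
    ∃ x ∈ X (l + 1), π x = y := by
  obtain ⟨x, hx⟩ := O.nonempty (l + 1) hl
  obtain ⟨i, hi⟩ := O.trans l (by omega) _ (O.map_mem l hl x hx) y hy
  exact ⟨σ ^ i • x, O.smul_mem _ hl _ _ hx, by rw [O.map_smul, hi]⟩

/-- Two points of a common fibre differ by exactly one of the `d` powers of `σ ^ (d ^ l)`. -/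
lemma exists_unique_shift (O : Odometer d L X π σ) (hd : 2 ≤ d) {l : ℕ} (hl : l + 1 ≤ L) {x y : Ω}
    (hx : x ∈ X (l + 1)) (hy : y ∈ X (l + 1)) (hxy : π x = π y) :
    ∃ j < d, σ ^ (d ^ l * j) • x = y ∧ ∀ j' < d, σ ^ (d ^ l * j') • x = y → j' = j := by
  obtain ⟨i, hi⟩ := O.trans (l + 1) hl x hx y hy
  have h1 : σ ^ i • π x = π x := by rw [← O.map_smul, hi, hxy]
  obtain ⟨i', rfl⟩ := (O.fix l (by omega) _ (O.map_mem l hl x hx) i).1 h1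
  have hd0 : 0 < d := by omega
  have key : ∀ a b : ℕ, a ≤ b → σ ^ (d ^ l * a) • x = σ ^ (d ^ l * b) • x → d ∣ b - a := by
    intro a b hab h
    have : σ ^ (d ^ l * (b - a)) • x = x := by
      have e : d ^ l * b = d ^ l * a + d ^ l * (b - a) := by
        rw [← Nat.mul_add]; congr 1; omega
      rw [e, pow_add, mul_smul] at h
      exact (MulAction.injective _ h).symm
    have := (O.fix (l + 1) hl x hx _).1 this
    rw [pow_succ] at this
    exact Nat.dvd_of_mul_dvd_mul_left (by positivity) this
  have hmod : σ ^ (d ^ l * (i' % d)) • x = y := by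
    rw [← hi]
    conv_rhs => rw [← Nat.mod_add_div i' d, Nat.mul_add, ← Nat.mul_assoc, ← pow_succ, pow_add,
      mul_smul, (O.fix (l + 1) hl x hx _).2 (Dvd.intro _ rfl)]
  refine ⟨i' % d, Nat.mod_lt _ hd0, hmod, fun j' hj' h => ?_⟩
  have hm := Nat.mod_lt i' hd0
  rcases le_total j' (i' % d) with hle | hle
  · have := key _ _ hle (h.trans hmod.symm)
    have := Nat.eq_zero_of_dvd_of_lt this (by omega)
    omega
  · have := key _ _ hle (hmod.trans h.symm)
    have := Nat.eq_zero_of_dvd_of_lt this (by omega)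
    omega

open scoped Classical in
lemma card_fiber (O : Odometer d L X π σ) (hd : 2 ≤ d) {l : ℕ} (hl : l + 1 ≤ L) {y : Ω}
    (hy : y ∈ X l) : ((X (l + 1)).filter (fun x => π x = y)).card = d := by
  obtain ⟨x, hx, hxy⟩ := O.exists_lift hl hy
  have : (X (l + 1)).filter (fun x => π x = y) =
      (Finset.range d).image (fun j => σ ^ (d ^ l * j) • x) := by
    ext z
    simp only [Finset.mem_filter, Finset.mem_image, Finset.mem_range]
    constructor
    · rintro ⟨hz, hzy⟩
      obtain ⟨j, hj, h, -⟩ := O.exists_unique_shift hd hl hx hz (by rw [hxy, hzy])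
      exact ⟨j, hj, h⟩
    · rintro ⟨j, hj, rfl⟩
      refine ⟨O.smul_mem _ hl _ _ hx, ?_⟩
      rw [O.map_smul, hxy, O.pow_fix (by omega) le_rfl j hy]
  rw [this, Finset.card_image_of_injOn, Finset.card_range]
  intro a ha b hb hab
  simp only [Finset.coe_range, Set.mem_Iio] at ha hb
  have hm : ∀ j, σ ^ (d ^ l * j) • x ∈ X (l + 1) := fun j => O.smul_mem _ hl _ _ hx
  obtain ⟨j, -, -, h⟩ := O.exists_unique_shift hd hl hx (hm a) (by
    rw [O.map_smul, O.pow_fix (by omega) le_rfl a (O.map_mem l hl x hx)])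
  rw [h a ha rfl, h b hb hab.symm]

/-- Averaging over the powers of `σ ^ (d ^ (n + m))`, the mean number of fixed points at level
`n + m + 1` is the number of fixed points at level `n + m`. -/
lemma sum_fx_succ (O : Odometer d L X π σ) (hd : 2 ≤ d) {n m : ℕ} (hl : n + m + 1 ≤ L)
    (A : Finset Ω) (θ : G) :
    ∑ j ∈ Finset.range d, fx X π n (m + 1) A (σ ^ (d ^ (n + m) * j) * θ) = d * fx X π n m A θ := by
  classical
  set l := n + m with hldef
  have e1 : ∀ j, fx X π n (m + 1) A (σ ^ (d ^ l * j) * θ) =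
      ∑ x ∈ (X (l + 1)).filter (fun x => π^[m] (π x) ∈ A),
        if σ ^ (d ^ l * j) • (θ • x) = x then 1 else 0 := by
    intro j
    rw [fx, ← Finset.card_filter, Finset.filter_filter]
    simp only [Function.iterate_succ_apply, mul_smul]
    rfl
  simp_rw [e1]
  rw [Finset.sum_comm]
  have e2 : ∀ x ∈ (X (l + 1)).filter (fun x => π^[m] (π x) ∈ A),
      (∑ j ∈ Finset.range d, if σ ^ (d ^ l * j) • (θ • x) = x then 1 else 0) =
        if θ • π x = π x then 1 else 0 := by
    intro x hx
    have hx := (Finset.mem_filter.1 hx).1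
    split_ifs with h
    · obtain ⟨j, hj, h1, h2⟩ := O.exists_unique_shift hd hl (O.smul_mem _ hl θ x hx) hx
        (by rw [O.map_smul, h])
      rw [Finset.sum_eq_single j]
      · rw [if_pos h1]
      · intro b hb hbj
        rw [if_neg]
        exact fun hh => hbj (h2 b (Finset.mem_range.1 hb) hh)
      · intro hh
        exact absurd (Finset.mem_range.2 hj) hh
    · refine Finset.sum_eq_zero fun j _ => ?_
      rw [if_neg]
      intro hh
      apply h
      have := congrArg π hh
      rwa [O.map_smul, O.map_smul, O.pow_fix (by omega) le_rfl j] at this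
      exact O.smul_mem _ (by omega) _ _ (O.map_mem l hl x hx)
  rw [Finset.sum_congr rfl e2, ← Finset.card_filter, Finset.filter_filter]
  rw [fx, mul_comm, ← smul_eq_mul, ← Finset.sum_const]
  rw [Finset.card_eq_sum_card_fiberwise (f := π)
    (t := (X l).filter (fun x => π^[m] x ∈ A ∧ θ • x = x))]
  · refine Finset.sum_congr rfl fun y hy => ?_
    obtain ⟨hy1, hy2, hy3⟩ := Finset.mem_filter.1 hy
    rw [← O.card_fiber hd hl hy1, Finset.filter_filter]
    congr 1
    refine Finset.filter_congr fun x _ => ?_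
    constructor
    · exact fun h => h.2
    · rintro rfl
      exact ⟨⟨hy2, hy3⟩, rfl⟩
  · intro x hx
    simp only [Finset.coe_filter, Set.mem_setOf_eq] at hx ⊢
    exact ⟨O.map_mem l hl x hx.1, hx.2⟩

end Odometer

/-! ### Second moments of fixed-point counts -/

namespace Odometer

variable {G Ω : Type*} [Group G] [MulAction G Ω] {d L : ℕ} {X : ℕ → Finset Ω}
  {π : Ω → Ω} {σ : G}

section
variable [Fintype G]

lemma sum_cos_shift (O : Odometer d L X π σ) {n l : ℕ} (hn : n ≤ L) (hl : n ≤ l) (j : ℕ)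
    (h : G) {M : Type*} [AddCommMonoid M] (f : G → M) :
    ∑ θ ∈ cos X n h, f (σ ^ (d ^ l * j) * θ) = ∑ θ ∈ cos X n h, f θ := by
  refine Finset.sum_bij (fun θ _ => σ ^ (d ^ l * j) * θ) ?_ ?_ ?_ ?_
  · intro θ hθ
    exact (O.mul_mem_cos hn hl j).2 hθ
  · intro a _ b _ hab
    exact mul_left_cancel hab
  · intro b hb
    refine ⟨(σ ^ (d ^ l * j))⁻¹ * b, ?_, by group⟩
    rw [← O.mul_mem_cos hn hl j]
    simpa using hb
  · intro θ _
    rfl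

/-- Martingale property: given its action on level `n`, an element of `G` has on average as many
fixed points in level `n + m` above `A` as it has in `A` itself. -/
lemma sum_fx_cos (O : Odometer d L X π σ) (hd : 2 ≤ d) {n m : ℕ} (hl : n + m ≤ L)
    (A : Finset Ω) (h : G) :
    ∑ θ ∈ cos X n h, fx X π n m A θ = (cos X n h).card * fx X π n 0 A h := by
  classical
  induction m with
  | zero =>
    rw [← smul_eq_mul, ← Finset.sum_const]
    refine Finset.sum_congr rfl fun θ hθ => ?_
    rw [fx, fx]
    congr 1
    refine Finset.filter_congr fun x hx => ?_
    rw [mem_cos.1 hθ x hx]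
  | succ m ih =>
    rw [← ih (by omega)]
    have h1 : ∑ θ ∈ cos X n h, ∑ j ∈ Finset.range d,
        fx X π n (m + 1) A (σ ^ (d ^ (n + m) * j) * θ) = ∑ θ ∈ cos X n h, d * fx X π n m A θ :=
      Finset.sum_congr rfl fun θ _ => O.sum_fx_succ hd hl A θ
    rw [Finset.sum_comm, Finset.sum_congr rfl fun j _ =>
      O.sum_cos_shift (by omega) (Nat.le_add_right n m) j h (fun θ => fx X π n (m + 1) A θ),
      Finset.sum_const, Finset.card_range, smul_eq_mul, ← Finset.mul_sum] at h1
    exact Nat.eq_of_mul_eq_mul_left (by omega) h1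

/-- Variance identity for one more level: the growth of the second moment of the number of fixed
points is the sum of the squared increments along the powers of `σ ^ d ^ (n + m)`. -/
lemma sum_sq_succ (O : Odometer d L X π σ) (hd : 2 ≤ d) {n m : ℕ} (hl : n + m + 1 ≤ L)
    (A : Finset Ω) (h : G) :
    (∑ θ ∈ cos X n h, ∑ j ∈ Finset.range d,
      ((fx X π n (m + 1) A (σ ^ (d ^ (n + m) * j) * θ) : ℤ) - fx X π n m A θ) ^ 2) =
    d * (∑ θ ∈ cos X n h, (fx X π n (m + 1) A θ : ℤ) ^ 2)
      - d * ∑ θ ∈ cos X n h, (fx X π n m A θ : ℤ) ^ 2 := by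
  have e1 : d * (∑ θ ∈ cos X n h, (fx X π n (m + 1) A θ : ℤ) ^ 2) =
      ∑ θ ∈ cos X n h, ∑ j ∈ Finset.range d,
        (fx X π n (m + 1) A (σ ^ (d ^ (n + m) * j) * θ) : ℤ) ^ 2 := by
    rw [Finset.sum_comm, Finset.sum_congr rfl fun j _ =>
      O.sum_cos_shift (by omega) (Nat.le_add_right n m) j h
        (fun θ => (fx X π n (m + 1) A θ : ℤ) ^ 2)]
    simp
  rw [e1, Finset.mul_sum, ← Finset.sum_sub_distrib]
  refine Finset.sum_congr rfl fun θ _ => ?_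
  have h2 : ∑ j ∈ Finset.range d, (fx X π n (m + 1) A (σ ^ (d ^ (n + m) * j) * θ) : ℤ) =
      d * fx X π n m A θ := by exact_mod_cast O.sum_fx_succ hd hl A θ
  simp only [sub_sq, Finset.sum_add_distrib, Finset.sum_sub_distrib, ← Finset.sum_mul,
    ← Finset.mul_sum, h2]
  simp
  ring

end

/-- Two points with the same `m`-th ancestor at level `n` differ by exactly one of the
`d ^ m` powers of `σ ^ (d ^ n)`. -/
lemma exists_unique_shift' (O : Odometer d L X π σ) (hd : 2 ≤ d) {n m : ℕ} (hl : n + m ≤ L)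
    {x y : Ω} (hx : x ∈ X (n + m)) (hy : y ∈ X (n + m)) (hxy : π^[m] x = π^[m] y) :
    ∃ j < d ^ m, ∀ j' < d ^ m, σ ^ (d ^ n * j') • x = y ↔ j' = j := by
  obtain ⟨i, hi⟩ := O.trans (n + m) hl x hx y hy
  have h1 : σ ^ i • π^[m] x = π^[m] x := by rw [← O.iter_smul, hi, hxy]
  obtain ⟨i', rfl⟩ := (O.fix n (by omega) _ (O.iter_mem n m hl x hx) i).1 h1
  have hd0 : 0 < d ^ m := by positivity
  have key : ∀ a b : ℕ, a ≤ b → σ ^ (d ^ n * a) • x = σ ^ (d ^ n * b) • x → d ^ m ∣ b - a := by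
    intro a b hab h
    have : σ ^ (d ^ n * (b - a)) • x = x := by
      have e : d ^ n * b = d ^ n * a + d ^ n * (b - a) := by
        rw [← Nat.mul_add]; congr 1; omega
      rw [e, pow_add, mul_smul] at h
      exact (MulAction.injective _ h).symm
    have := (O.fix (n + m) hl x hx _).1 this
    rw [pow_add] at this
    exact Nat.dvd_of_mul_dvd_mul_left (by positivity) this
  have hmod : σ ^ (d ^ n * (i' % d ^ m)) • x = y := by
    rw [← hi]
    conv_rhs => rw [← Nat.mod_add_div i' (d ^ m), Nat.mul_add, ← Nat.mul_assoc, ← pow_add, pow_add,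
      mul_smul, (O.fix (n + m) hl x hx _).2 (Dvd.intro _ rfl)]
  refine ⟨i' % d ^ m, Nat.mod_lt _ hd0, fun j' hj' => ⟨fun h => ?_, fun h => h ▸ hmod⟩⟩
  have hm := Nat.mod_lt i' hd0
  rcases le_total j' (i' % d ^ m) with hle | hle
  · have := key _ _ hle (h.trans hmod.symm)
    have := Nat.eq_zero_of_dvd_of_lt this ((Nat.sub_le _ _).trans_lt hm)
    exact le_antisymm hle (Nat.sub_eq_zero_iff_le.1 this)
  · have := key _ _ hle (hmod.trans h.symm)
    have := Nat.eq_zero_of_dvd_of_lt this ((Nat.sub_le _ _).trans_lt hj')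
    exact le_antisymm (Nat.sub_eq_zero_iff_le.1 this) hle

lemma sum_range_shift {M : Type*} [AddCommMonoid M] (N : ℕ) (f : ℕ → M)
    (hf : ∀ c, f (c + N) = f c) (s : ℕ) :
    ∑ c ∈ Finset.range N, f (c + s) = ∑ c ∈ Finset.range N, f c := by
  induction s with
  | zero => rfl
  | succ s ih =>
    rw [← ih]
    have h1 := Finset.sum_range_succ (fun c => f (c + s)) N
    have h2 := Finset.sum_range_succ' (fun c => f (c + s)) N
    rcases N with _ | N
    · simp
    · rw [Finset.sum_range_succ, Finset.sum_range_succ' (fun c => f (c + s))]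
      congr 1
      · refine Finset.sum_congr rfl fun c _ => ?_
        congr 1; ring
      · rw [zero_add, ← hf s]; congr 1; ring

open scoped Classical in
/-- The sum of `lc (θ • x) / lc x` over the points `x` of level `n + m` above `v`, a twisted count of
how `θ` permutes them. Here `lc` is to be a family of leading coefficients at infinity. -/
noncomputable def charSum {k : Type*} [Field k] (X : ℕ → Finset Ω) (π : Ω → Ω) (lc : Ω → k)
    (n m : ℕ) (v : Ω) (θ : G) : k :=
  ∑ x ∈ (X (n + m)).filter (fun x => π^[m] x = v), lc (θ • x) / lc x

/-- If the fixed-point counts of the translates of `θ` by powers of `σ ^ d ^ n` do not change under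
`σ ^ d ^ (n + m)`, the character sum of `θ` vanishes: it is the Fourier coefficient of
those counts at the character `c ↦ w ^ (d ^ n * c)`, which is nontrivial on that translation. -/
lemma charSum_eq_zero (O : Odometer d L X π σ) (hd : 2 ≤ d) {k : Type*} [Field k] {lc : Ω → k}
    {w : k} {n m : ℕ} (hl : n + m + 1 ≤ L) (hlc : ∀ x ∈ X (n + (m + 1)), lc x ≠ 0)
    (hw : ∀ x ∈ X (n + (m + 1)), lc (σ • x) = w * lc x) (hw1 : w ^ (d ^ (n + m)) ≠ 1)
    {v : Ω} (θ : G) (hθ : θ • v = v)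
    (hper : ∀ c, fx X π n (m + 1) {v} (σ ^ (d ^ (n + m)) * (σ ^ (d ^ n * c) * θ)) =
      fx X π n (m + 1) {v} (σ ^ (d ^ n * c) * θ)) :
    charSum X π lc n (m + 1) v θ = 0 := by
  classical
  have hpow : ∀ i, ∀ x ∈ X (n + (m + 1)), lc (σ ^ i • x) = w ^ i * lc x := by
    intro i
    induction i with
    | zero => simp
    | succ i ih =>
      intro x hx
      rw [pow_succ, mul_smul, ih _ (O.smul_mem _ hl _ _ hx), hw x hx]; ring
  set T := (X (n + (m + 1))).filter (fun x => π^[m + 1] x = v) with hT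
  have e1 : charSum X π lc n (m + 1) v θ = ∑ c ∈ Finset.range (d ^ (m + 1)),
      (w ^ (d ^ n * c))⁻¹ * (fx X π n (m + 1) {v} (σ ^ (d ^ n * c) * θ) : k) := by
    have : ∀ c, (fx X π n (m + 1) {v} (σ ^ (d ^ n * c) * θ) : k) =
        ∑ x ∈ T, if σ ^ (d ^ n * c) • (θ • x) = x then 1 else 0 := by
      intro c
      rw [fx, ← Finset.sum_filter, Finset.sum_const, nsmul_eq_mul, mul_one, hT,
        Finset.filter_filter]
      simp only [Finset.mem_singleton, mul_smul]
    simp_rw [this, Finset.mul_sum]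
    rw [Finset.sum_comm, charSum]
    refine Finset.sum_congr rfl fun x hx => ?_
    obtain ⟨hx1, hx2⟩ := Finset.mem_filter.1 hx
    obtain ⟨j, hj, hj'⟩ := O.exists_unique_shift' hd (n := n) (m := m + 1) hl
      (O.smul_mem _ hl θ x hx1) hx1
      (by rw [O.iter_smul, hx2, hθ])
    rw [Finset.sum_eq_single j]
    · rw [if_pos ((hj' j hj).2 rfl), mul_one]
      have := hpow (d ^ n * j) (θ • x) (O.smul_mem _ hl θ x hx1)
      rw [(hj' j hj).2 rfl] at this
      have h0 := hlc _ hx1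
      have h0' := hlc _ (O.smul_mem _ hl θ x hx1)
      rw [this] at h0 ⊢
      have := left_ne_zero_of_mul h0
      field_simp
    · intro b hb hbj
      rw [if_neg, mul_zero]
      exact fun hh => hbj ((hj' b (Finset.mem_range.1 hb)).1 hh)
    · exact fun hh => absurd (Finset.mem_range.2 hj) hh
  by_cases hTe : T = ∅
  · rw [charSum, ← hT, hTe, Finset.sum_empty]
  obtain ⟨x, hx⟩ := Finset.nonempty_iff_ne_empty.2 hTe
  have hx1 := (Finset.mem_filter.1 hx).1
  have hwN : w ^ (d ^ (n + (m + 1))) = 1 := by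
    have := hpow (d ^ (n + (m + 1))) x hx1
    rw [(O.fix (n + (m + 1)) hl x hx1 _).2 dvd_rfl] at this
    exact mul_right_cancel₀ (hlc x hx1) (by rw [one_mul, ← this])
  have hw0 : w ≠ 0 := by
    rintro rfl
    rw [zero_pow (by positivity)] at hwN
    exact zero_ne_one hwN
  set f : ℕ → k := fun c =>
    (w ^ (d ^ n * c))⁻¹ * (fx X π n (m + 1) {v} (σ ^ (d ^ n * c) * θ) : k) with hf
  have hshift : ∀ c, f (c + d ^ m) = (w ^ (d ^ (n + m)))⁻¹ * f c := by
    intro c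
    simp only [hf]
    have : d ^ n * (c + d ^ m) = d ^ (n + m) + d ^ n * c := by rw [pow_add]; ring
    rw [this, pow_add, pow_add σ, mul_assoc, hper c, mul_inv, mul_assoc]
  have hper' : ∀ r c, f (c + r * d ^ m) = ((w ^ (d ^ (n + m)))⁻¹) ^ r * f c := by
    intro r
    induction r with
    | zero => simp
    | succ r ih =>
      intro c
      rw [Nat.succ_mul, ← add_assoc, hshift, ih, pow_succ]; ring
  have hperN : ∀ c, f (c + d ^ (m + 1)) = f c := by
    intro c
    rw [pow_succ, mul_comm, hper', inv_pow, ← pow_mul, ← pow_succ]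
    rw [show n + m + 1 = n + (m + 1) from rfl, hwN]; simp
  have h2 := sum_range_shift (d ^ (m + 1)) f hperN (d ^ m)
  rw [Finset.sum_congr rfl fun c _ => hshift c, ← Finset.mul_sum] at h2
  rw [e1]
  by_contra hne
  have := mul_right_cancel₀ hne (h2.trans (one_mul _).symm)
  exact hw1 (by simpa using this)

/-- The pointwise stabiliser of level `n`. -/
def levelStab (X : ℕ → Finset Ω) (n : ℕ) : Subgroup G where
  carrier := {g | ∀ x ∈ X n, g • x = x}
  mul_mem' {a b} ha hb x hx := by rw [mul_smul, hb x hx, ha x hx]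
  one_mem' x _ := one_smul _ x
  inv_mem' {a} ha x hx := by rw [inv_smul_eq_iff, ha x hx]

lemma mem_levelStab {n : ℕ} {g : G} : g ∈ levelStab X n ↔ ∀ x ∈ X n, g • x = x := Iff.rfl

section
variable [Fintype G]

lemma card_cos (n : ℕ) (h : G) : (cos X n h).card = Nat.card (levelStab X n : Subgroup G) := by
  classical
  rw [Nat.card_eq_fintype_card, Fintype.card_subtype]
  refine Finset.card_bij' (fun θ _ => h⁻¹ * θ) (fun κ _ => h * κ) ?_ ?_ ?_ ?_
  · intro θ hθ
    simp only [Finset.mem_filter, Finset.mem_univ, true_and, mem_levelStab]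
    intro x hx
    rw [mul_smul, mem_cos.1 hθ x hx, inv_smul_smul]
  · intro κ hκ
    simp only [Finset.mem_filter, Finset.mem_univ, true_and, mem_levelStab] at hκ
    rw [mem_cos]
    intro x hx
    rw [mul_smul, hκ x hx]
  · intro θ _; group
  · intro θ _; group

/-- Orbit counting on pairs: the second moment over a coset is a multiple of its size. -/
lemma card_dvd_sum_sq (O : Odometer d L X π σ) {n m : ℕ} (hl : n + m ≤ L) {v : Ω} (hv : v ∈ X n)
    (h : G) : (cos X n h).card ∣ ∑ θ ∈ cos X n h, fx X π n m {v} θ ^ 2 := by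
  classical
  rw [card_cos]
  set K : Subgroup G := levelStab X n with hK
  set T := (X (n + m)).filter (fun x => π^[m] x = v) with hT
  have hTK : ∀ κ ∈ K, ∀ x ∈ T, κ • x ∈ T := by
    intro κ hκ x hx
    obtain ⟨h1, h2⟩ := Finset.mem_filter.1 hx
    exact Finset.mem_filter.2 ⟨O.smul_mem _ hl _ _ h1, by rw [O.iter_smul, h2, hκ v hv]⟩
  let A : SubMulAction K (Ω × Ω) :=
    { carrier := {p | p.1 ∈ T ∧ p.2 ∈ T ∧ ∃ θ ∈ cos X n h, θ • p = p}
      smul_mem' := by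
        rintro ⟨κ, hκ⟩ p ⟨h1, h2, θ, hθ, h3⟩
        refine ⟨hTK κ hκ _ h1, hTK κ hκ _ h2, κ * θ * κ⁻¹, ?_, ?_⟩
        · rw [mem_cos] at hθ ⊢
          intro x hx
          rw [mul_smul, (inv_mem hκ : κ⁻¹ ∈ K) x hx, mul_smul, hθ x hx,
            hκ _ (O.smul_mem n (by omega) h x hx)]
        · show (κ * θ * κ⁻¹) • (κ • p) = κ • p
          rw [← mul_smul, inv_mul_cancel_right, mul_smul, h3] }
  have hAmem : ∀ p, p ∈ A ↔ p.1 ∈ T ∧ p.2 ∈ T ∧ ∃ θ ∈ cos X n h, θ • p = p := fun p => Iff.rfl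
  have hAfin : Finite A := by
    refine Set.Finite.subset ((T ×ˢ T).finite_toSet) ?_
    rintro p ⟨h1, h2, -⟩
    exact Finset.mem_coe.2 (Finset.mem_product.2 ⟨h1, h2⟩)
  have : Fintype A := Fintype.ofFinite _
  have : ∀ κ : K, Fintype (MulAction.fixedBy A κ) := fun κ => Fintype.ofFinite _
  have : Fintype (Quotient (MulAction.orbitRel K A)) := Fintype.ofFinite _
  have burn := MulAction.sum_card_fixedBy_eq_card_orbits_mul_card_group K A
  have e1 : ∀ θ : G, fx X π n m {v} θ ^ 2 =
      ∑ p ∈ T ×ˢ T, if θ • p = p then 1 else 0 := by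
    intro θ
    rw [← Finset.card_filter, fx, sq, ← Finset.card_product]
    congr 1
    ext p
    simp only [hT, Finset.mem_filter, Finset.mem_product, Finset.mem_singleton, Prod.ext_iff,
      Prod.smul_fst, Prod.smul_snd]
    tauto
  simp_rw [e1]
  rw [Finset.sum_comm]
  have e2 : ∑ p ∈ T ×ˢ T, ∑ θ ∈ cos X n h, (if θ • p = p then 1 else 0) =
      ∑ p ∈ (T ×ˢ T).filter (fun p => p ∈ A), ∑ κ : K, if κ • p = p then 1 else 0 := by
    rw [Finset.sum_filter]
    refine Finset.sum_congr rfl fun p hp => ?_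
    rw [Finset.mem_product] at hp
    split_ifs with hA
    · obtain ⟨-, -, θ₀, hθ₀, h3⟩ := hA
      rw [← Finset.card_filter, ← Finset.card_filter]
      refine Finset.card_bij' (fun θ hθ => ⟨θ₀⁻¹ * θ, ?_⟩) (fun κ _ => θ₀ * κ) ?_ ?_ ?_ ?_
      · intro x hx
        rw [mul_smul, mem_cos.1 (Finset.mem_filter.1 hθ).1 x hx, inv_smul_eq_iff,
          mem_cos.1 hθ₀ x hx]
      · intro θ hθ
        simp only [Finset.mem_filter, Finset.mem_univ, true_and]
        show (θ₀⁻¹ * θ) • p = p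
        rw [mul_smul, (Finset.mem_filter.1 hθ).2, inv_smul_eq_iff, h3]
      · intro κ hκ
        simp only [Finset.mem_filter, Finset.mem_univ, true_and] at hκ
        refine Finset.mem_filter.2 ⟨mem_cos.2 fun x hx => ?_, ?_⟩
        · rw [mul_smul, κ.2 x hx, mem_cos.1 hθ₀ x hx]
        · rw [mul_smul]
          conv_rhs => rw [← h3, ← hκ]
          rfl
      · intro θ _; group
      · intro κ _; ext; simp
    · refine Finset.sum_eq_zero fun θ hθ => if_neg fun hh => hA ⟨hp.1, hp.2, θ, hθ, hh⟩
  have e3 : ∑ p ∈ (T ×ˢ T).filter (fun p => p ∈ A), (∑ κ : K, if κ • p = p then 1 else 0) =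
      ∑ a : A, ∑ κ : K, if κ • a = a then 1 else 0 := by
    symm
    refine Finset.sum_bij (fun a _ => a.1) ?_ ?_ ?_ ?_
    · intro a _
      exact Finset.mem_filter.2 ⟨Finset.mem_product.2 ⟨a.2.1, a.2.2.1⟩, a.2⟩
    · intro a _ b _ hab
      exact Subtype.ext hab
    · intro b hb
      exact ⟨⟨b, (Finset.mem_filter.1 hb).2⟩, Finset.mem_univ _, rfl⟩
    · intro a _
      refine Finset.sum_congr rfl fun κ _ => ?_
      simp only [Subtype.ext_iff, SetLike.val_smul]
  rw [e2, e3, Finset.sum_comm]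
  have e4 : ∀ κ : K, (∑ a : A, if κ • a = a then 1 else 0) =
      Fintype.card (MulAction.fixedBy A κ) := by
    intro κ
    rw [← Finset.card_filter, ← Fintype.card_subtype]
    exact Fintype.card_congr (Equiv.refl _)
  rw [Finset.sum_congr rfl fun κ _ => e4 κ, burn, Nat.card_eq_fintype_card]
  exact Dvd.intro_left _ rfl

end
end Odometer

/-! ### Few elements of a mixing tower have a fixed point -/

namespace Odometer

section
variable {G Ω : Type*} [Group G] [MulAction G Ω] {d L : ℕ} {X : ℕ → Finset Ω}
  {π : Ω → Ω} {σ : G} [Fintype G] {k : Type*} [Field k] {lc : Ω → k} {w : ℕ → k}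

/-- `lc` is a nowhere zero function on the tower that `σ` multiplies by `w l` on level `l`, where
`w (l + 1)` has order not dividing `d ^ l`, and for `h` fixing `v` in level `n` every level at
least three above `n` has a nonzero character sum over `v` in the coset `cos X n h`. -/
structure Mixing (d L : ℕ) (X : ℕ → Finset Ω) (π : Ω → Ω) (σ : G) (lc : Ω → k) (w : ℕ → k) :
    Prop where
  lc_ne : ∀ l ≤ L, ∀ x ∈ X l, lc x ≠ 0
  lc_smul : ∀ l ≤ L, ∀ x ∈ X l, lc (σ • x) = w l * lc x
  w_ne : ∀ l, l + 1 ≤ L → w (l + 1) ^ d ^ l ≠ 1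
  nonvanish : ∀ n m, 3 ≤ m → n + m ≤ L → ∀ v ∈ X n, ∀ h : G, h • v = v →
    ∃ θ ∈ cos X n h, charSum X π lc n m v θ ≠ 0

/-- The second moment of the number of fixed points above `v` grows strictly with the level:
equality would force these numbers to be constant along the powers of `σ`, and so all character
sums to vanish. -/
lemma sum_sq_lt (O : Odometer d L X π σ) (hd : 2 ≤ d) (Mx : Mixing d L X π σ lc w) {n m : ℕ}
    (hm : 2 ≤ m) (hl : n + m + 1 ≤ L) {v : Ω} (hv : v ∈ X n) {h : G} (hh : h • v = v) :
    ∑ θ ∈ cos X n h, fx X π n m {v} θ ^ 2 < ∑ θ ∈ cos X n h, fx X π n (m + 1) {v} θ ^ 2 := by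
  by_contra hcon
  rw [not_lt] at hcon
  have hvar := O.sum_sq_succ hd hl {v} h
  have hle : (∑ θ ∈ cos X n h, ∑ j ∈ Finset.range d,
      ((fx X π n (m + 1) {v} (σ ^ (d ^ (n + m) * j) * θ) : ℤ) - fx X π n m {v} θ) ^ 2) ≤ 0 := by
    rw [hvar, ← mul_sub]
    refine mul_nonpos_of_nonneg_of_nonpos (by positivity) (sub_nonpos.2 ?_)
    exact_mod_cast hcon
  have hz := le_antisymm hle (Finset.sum_nonneg fun θ _ => Finset.sum_nonneg fun j _ => sq_nonneg _)
  have hcst : ∀ θ ∈ cos X n h, ∀ j < d,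
      fx X π n (m + 1) {v} (σ ^ (d ^ (n + m) * j) * θ) = fx X π n m {v} θ := by
    intro θ hθ j hj
    have h1 := (Finset.sum_eq_zero_iff_of_nonneg
      (fun θ _ => Finset.sum_nonneg fun j _ => sq_nonneg _)).1 hz θ hθ
    have h2 := (Finset.sum_eq_zero_iff_of_nonneg (fun j _ => sq_nonneg _)).1 h1 j
      (Finset.mem_range.2 hj)
    have h3 := pow_eq_zero_iff (two_ne_zero) |>.1 h2
    exact_mod_cast sub_eq_zero.1 h3
  obtain ⟨θ, hθ, hne⟩ := Mx.nonvanish n (m + 1) (by omega) hl v hv h hh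
  apply hne
  refine O.charSum_eq_zero hd hl (Mx.lc_ne _ hl) (Mx.lc_smul _ hl) (Mx.w_ne _ hl) θ ?_ ?_
  · rw [mem_cos.1 hθ v hv, hh]
  · intro c
    have hc : σ ^ (d ^ n * c) * θ ∈ cos X n h := (O.mul_mem_cos (by omega) le_rfl c).2 hθ
    have h1 := hcst _ hc 1 (by omega)
    have h0 := hcst _ hc 0 (by omega)
    rw [mul_one] at h1
    rw [mul_zero, pow_zero, one_mul] at h0
    rw [h1, h0]

/-- The second moments over a coset are multiples of its size, so strict growth is linear growth. -/
lemma sum_sq_ge (O : Odometer d L X π σ) (hd : 2 ≤ d) (Mx : Mixing d L X π σ lc w) {n r : ℕ}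
    (hl : n + (r + 2) ≤ L) {v : Ω} (hv : v ∈ X n) {h : G} (hh : h • v = v) :
    r * (cos X n h).card ≤ ∑ θ ∈ cos X n h, fx X π n (r + 2) {v} θ ^ 2 := by
  induction r with
  | zero => simp
  | succ r ih =>
    have h1 := O.sum_sq_lt hd Mx (m := r + 2) (by omega) (by omega) hv hh
    have h2 := O.card_dvd_sum_sq (n := n) (m := r + 2) (by omega) hv h
    have h3 := O.card_dvd_sum_sq (n := n) (m := r + 2 + 1) (by omega) hv h
    have h4 := Nat.le_of_dvd (by omega) (Nat.dvd_sub h3 h2)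
    have h5 := ih (by omega)
    rw [Nat.succ_mul]
    have : r + 1 + 2 = r + 2 + 1 := by ring
    rw [this]
    omega

lemma fx_singleton_le (O : Odometer d L X π σ) (hd : 2 ≤ d) {n m : ℕ} (hl : n + m ≤ L) (v : Ω)
    (θ : G) : fx X π n m {v} θ ≤ d ^ m := by
  classical
  rw [fx]
  rcases Finset.eq_empty_or_nonempty
    ((X (n + m)).filter (fun x => π^[m] x ∈ ({v} : Finset Ω) ∧ θ • x = x)) with h | ⟨x, hx⟩
  · rw [h]; simp
  · simp only [Finset.mem_filter, Finset.mem_singleton] at hx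
    rw [← Finset.card_range (d ^ m)]
    refine le_trans (Finset.card_le_card (t := (Finset.range (d ^ m)).image
      (fun j => σ ^ (d ^ n * j) • x)) ?_) Finset.card_image_le
    intro y hy
    simp only [Finset.mem_filter, Finset.mem_singleton] at hy
    obtain ⟨j, hj, hj'⟩ := O.exists_unique_shift' hd hl hx.1 hy.1 (by rw [hx.2.1, hy.2.1])
    exact Finset.mem_image.2 ⟨j, Finset.mem_range.2 hj, (hj' j hj).2 rfl⟩

open scoped Classical in
/-- The number of fixed points of `θ` at level `l`. -/
noncomputable def numFix (X : ℕ → Finset Ω) (l : ℕ) (θ : G) : ℕ :=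
  ((X l).filter (fun x => θ • x = x)).card

lemma fx_eq_numFix (O : Odometer d L X π σ) {n m : ℕ} (hl : n + m ≤ L) (θ : G) :
    fx X π n m (X n) θ = numFix X (n + m) θ := by
  classical
  rw [fx, numFix]
  congr 1
  refine Finset.filter_congr fun x hx => ?_
  simp [O.iter_mem n m hl x hx]

lemma sum_numFix_cos (O : Odometer d L X π σ) (hd : 2 ≤ d) {n m : ℕ} (hl : n + m ≤ L) (g : G) :
    ∑ τ ∈ cos X n g, numFix X (n + m) τ = (cos X n g).card * numFix X n g := by
  have := O.sum_fx_cos hd hl (X n) g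
  rw [O.fx_eq_numFix (m := 0) (by omega)] at this
  simpa only [O.fx_eq_numFix hl, add_zero] using this

/-- An element with between `1` and `B` fixed points in level `n` changes their number by level
`n + B ^ 2 + 3` in a definite proportion of its coset, since otherwise the second moment would stay
bounded by about `B ^ 2`. -/
lemma card_ne_ge (O : Odometer d L X π σ) (hd : 2 ≤ d) (Mx : Mixing d L X π σ lc w) {n B : ℕ}
    (hl : n + (B ^ 2 + 1 + 2) ≤ L) {g : G} (h1 : 1 ≤ numFix X n g) (hB : numFix X n g ≤ B) :
    (cos X n g).card ≤ ((cos X n g).filter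
      (fun τ => numFix X (n + (B ^ 2 + 1 + 2)) τ ≠ numFix X n g)).card *
        (d ^ (B ^ 2 + 1 + 2)) ^ 2 := by
  classical
  obtain ⟨v, hv⟩ := Finset.card_pos.1 h1
  obtain ⟨hv, hgv⟩ := Finset.mem_filter.1 hv
  set m := B ^ 2 + 1 + 2 with hm
  have hS := O.sum_sq_ge hd Mx (r := B ^ 2 + 1) hl hv hgv
  rw [← Finset.sum_filter_add_sum_filter_not _ (fun τ => numFix X (n + m) τ ≠ numFix X n g)] at hS
  have hb1 := Finset.sum_le_card_nsmul ((cos X n g).filter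
    (fun τ => numFix X (n + m) τ ≠ numFix X n g)) (fun θ => fx X π n m {v} θ ^ 2)
    ((d ^ m) ^ 2) (fun θ _ => Nat.pow_le_pow_left (O.fx_singleton_le hd hl v θ) 2)
  have hb2 := Finset.sum_le_card_nsmul ((cos X n g).filter
    (fun τ => ¬ numFix X (n + m) τ ≠ numFix X n g)) (fun θ => fx X π n m {v} θ ^ 2)
    (B ^ 2) (fun θ hθ => by
      refine Nat.pow_le_pow_left ?_ 2
      have := (Finset.mem_filter.1 hθ).2
      rw [not_not] at this
      rw [← this, ← O.fx_eq_numFix hl] at hB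
      refine le_trans (Finset.card_le_card ?_) hB
      intro x hx
      simp only [Finset.mem_filter, Finset.mem_singleton] at hx ⊢
      exact ⟨hx.1, by rw [hx.2.1]; exact hv, hx.2.2⟩)
  have hb3 : ((cos X n g).filter
    (fun τ => ¬ numFix X (n + m) τ ≠ numFix X n g)).card ≤ (cos X n g).card :=
    Finset.card_filter_le _ _
  simp only [smul_eq_mul] at hb1 hb2
  have hb4 := Nat.mul_le_mul_right (B ^ 2) hb3
  rw [← hm] at hS
  have : (B ^ 2 + 1) * (cos X n g).card = (cos X n g).card * B ^ 2 + (cos X n g).card := by ring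
  omega

lemma sum_sum_cos (n : ℕ) {M : Type*} [AddCommMonoid M] (f : G → M) :
    ∑ g, ∑ τ ∈ cos X n g, f τ = Nat.card (levelStab X n : Subgroup G) • ∑ g, f g := by
  classical
  have : ∀ g, ∑ τ ∈ cos X n g, f τ = ∑ τ, if g ∈ cos X n τ then f τ else 0 := by
    intro g
    rw [cos, Finset.sum_filter]
    refine Finset.sum_congr rfl fun τ _ => ?_
    congr 1
    rw [mem_cos, eq_iff_iff]
    exact forall₂_congr fun x _ => eq_comm
  simp_rw [this]
  rw [Finset.sum_comm, Finset.smul_sum]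
  refine Finset.sum_congr rfl fun τ _ => ?_
  rw [← Finset.sum_filter, Finset.sum_const, ← card_cos n τ]
  congr 2
  ext; simp

/-- The sum of `1 / (numFix + 1)` over `G`. By convexity and the martingale property it can only
grow with the level; it never exceeds the order of `G`. -/
noncomputable def pot (X : ℕ → Finset Ω) (l : ℕ) : ℝ := ∑ g : G, 1 / ((numFix X l g : ℝ) + 1)

open scoped Classical in
/-- Quantitative growth of the potential, in proportion to the number of elements having between
`1` and `B` fixed points. -/
lemma pot_growth (O : Odometer d L X π σ) (hd : 2 ≤ d) (Mx : Mixing d L X π σ lc w) {n B : ℕ}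
    (hl : n + (B ^ 2 + 1 + 2) ≤ L) :
    pot (G := G) X n + (1 / (((d ^ (B ^ 2 + 1 + 2)) ^ 2 : ℕ) * ((B : ℝ) + 2) ^ 3)) *
      ((Finset.univ.filter (fun g : G => 1 ≤ numFix X n g ∧ numFix X n g ≤ B)).card : ℝ) ≤
    pot (G := G) X (n + (B ^ 2 + 1 + 2)) := by
  set m := B ^ 2 + 1 + 2 with hm
  set c : ℝ := 1 / (((d ^ m) ^ 2 : ℕ) * ((B : ℝ) + 2) ^ 3) with hc
  have hK : (0 : ℝ) < Nat.card (levelStab X n : Subgroup G) := by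
    exact_mod_cast Nat.card_pos
  obtain ⟨κ, hκ⟩ : ∃ κ : ℝ, κ = ((Nat.card (levelStab X n : Subgroup G) : ℕ) : ℝ) := ⟨_, rfl⟩
  rw [← hκ] at hK
  have hcard : ∀ g : G, ((cos X n g).card : ℝ) = κ := fun g => by rw [hκ, card_cos]
  have main : ∀ g : G, κ * (1 / ((numFix X n g : ℝ) + 1)) +
      κ * (if 1 ≤ numFix X n g ∧ numFix X n g ≤ B then c else 0) ≤
      ∑ τ ∈ cos X n g, 1 / ((numFix X (n + m) τ : ℝ) + 1) := by
    intro g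
    obtain ⟨a, ha⟩ : ∃ a : ℝ, a = ((numFix X n g : ℕ) : ℝ) := ⟨_, rfl⟩
    rw [← ha]
    have ha0 : 0 ≤ a := by rw [ha]; exact Nat.cast_nonneg _
    have hlin : ∑ τ ∈ cos X n g, ((numFix X (n + m) τ : ℝ) - a) = 0 := by
      rw [Finset.sum_sub_distrib, Finset.sum_const, nsmul_eq_mul, sub_eq_zero, ha]
      exact_mod_cast O.sum_numFix_cos hd hl g
    have hlin' : ∑ τ ∈ cos X n g, ((numFix X (n + m) τ : ℝ) - a) / (a + 1) ^ 2 = 0 := by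
      rw [← Finset.sum_div, hlin, zero_div]
    -- The second-order expansion of `1 / (x + 1)` at `x = a`; its linear term averages to zero.
    have htan : ∀ τ : G, 1 / ((numFix X (n + m) τ : ℝ) + 1) = 1 / (a + 1) -
        ((numFix X (n + m) τ : ℝ) - a) / (a + 1) ^ 2 +
        ((numFix X (n + m) τ : ℝ) - a) ^ 2 / (((numFix X (n + m) τ : ℝ) + 1) * (a + 1) ^ 2) := by
      intro τ
      have hx : (0 : ℝ) ≤ numFix X (n + m) τ := Nat.cast_nonneg _
      field_simp
      ring
    rw [Finset.sum_congr rfl fun τ _ => htan τ, Finset.sum_add_distrib, Finset.sum_sub_distrib,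
      hlin', Finset.sum_const, nsmul_eq_mul, hcard, sub_zero]
    refine add_le_add le_rfl ?_
    have hnn : ∀ τ : G, 0 ≤ ((numFix X (n + m) τ : ℝ) - a) ^ 2 /
        (((numFix X (n + m) τ : ℝ) + 1) * (a + 1) ^ 2) := fun τ => by positivity
    split_ifs with hcase
    · have h1 := O.card_ne_ge hd Mx hl hcase.1 hcase.2
      rw [← hm] at h1
      have h1' : κ ≤ (((cos X n g).filter
        (fun τ => numFix X (n + m) τ ≠ numFix X n g)).card : ℝ) * ((d ^ m) ^ 2 : ℕ) := by
        rw [← hcard g]; exact_mod_cast h1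
      have hdpos : (0 : ℝ) < ((d ^ m) ^ 2 : ℕ) := by
        have : 0 < d := by omega
        exact_mod_cast (by positivity)
      calc κ * c ≤ ((((cos X n g).filter
            (fun τ => numFix X (n + m) τ ≠ numFix X n g)).card : ℝ) * ((d ^ m) ^ 2 : ℕ)) * c :=
            mul_le_mul_of_nonneg_right h1' (by positivity)
        _ = ∑ τ ∈ (cos X n g).filter (fun τ => numFix X (n + m) τ ≠ numFix X n g),
            1 / ((B : ℝ) + 2) ^ 3 := by
          rw [Finset.sum_const, nsmul_eq_mul, hc]
          field_simp
        _ ≤ ∑ τ ∈ (cos X n g).filter (fun τ => numFix X (n + m) τ ≠ numFix X n g),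
            ((numFix X (n + m) τ : ℝ) - a) ^ 2 /
              (((numFix X (n + m) τ : ℝ) + 1) * (a + 1) ^ 2) := by
          refine Finset.sum_le_sum fun τ hτ => ?_
          have hne := (Finset.mem_filter.1 hτ).2
          have hx : (0 : ℝ) ≤ numFix X (n + m) τ := Nat.cast_nonneg _
          have haB : a ≤ B := by rw [ha]; exact_mod_cast hcase.2
          obtain ⟨x, hxdef⟩ : ∃ x : ℝ, x = ((numFix X (n + m) τ : ℕ) : ℝ) := ⟨_, rfl⟩
          rw [← hxdef] at hx ⊢
          have hy1 : (1 : ℝ) ≤ (x - a) ^ 2 := by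
            have : (1 : ℤ) ≤ ((numFix X (n + m) τ : ℤ) - numFix X n g) ^ 2 := by
              have h0 : ((numFix X (n + m) τ : ℤ) - numFix X n g) ≠ 0 :=
                sub_ne_zero.2 (by exact_mod_cast hne)
              have := pow_pos (abs_pos.2 h0) 2
              rw [sq_abs] at this
              omega
            rw [hxdef, ha]
            exact_mod_cast this
          have hy2 : x - a ≤ (x - a) ^ 2 := by
            rcases le_total (x - a) 1 with h | h <;> nlinarith
          rw [div_le_div_iff₀ (by positivity) (by positivity), one_mul]
          have e1 : x + 1 ≤ (x - a) ^ 2 * (B + 2) := by nlinarith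
          have e2 : (a + 1) ^ 2 ≤ ((B : ℝ) + 2) ^ 2 := by
            apply pow_le_pow_left₀ (by positivity); linarith
          calc (x + 1) * (a + 1) ^ 2 ≤ ((x - a) ^ 2 * (B + 2)) * ((B : ℝ) + 2) ^ 2 :=
                mul_le_mul e1 e2 (by positivity) (by positivity)
            _ = _ := by ring
        _ ≤ _ := Finset.sum_le_sum_of_subset_of_nonneg (Finset.filter_subset _ _)
            fun τ _ _ => hnn τ
    · rw [mul_zero]
      exact Finset.sum_nonneg fun τ _ => hnn τ
  have hsum := Finset.sum_le_sum fun g (_ : g ∈ Finset.univ) => main g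
  rw [sum_sum_cos, Finset.sum_add_distrib, ← Finset.mul_sum, ← Finset.mul_sum, ← mul_add,
    nsmul_eq_mul, ← hκ] at hsum
  have := le_of_mul_le_mul_left hsum hK
  rw [← Finset.sum_filter, Finset.sum_const, nsmul_eq_mul, mul_comm _ c] at this
  exact this

lemma sum_numFix_le (O : Odometer d L X π σ) (hd : 2 ≤ d) {n : ℕ} (hl : n ≤ L) :
    ∑ g : G, numFix X n g ≤ Fintype.card G := by
  classical
  have h0 := Nat.zero_add n
  have h1 := sum_sum_cos (X := X) 0 (fun g : G => numFix X n g)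
  have h2 : ∀ g : G, ∑ τ ∈ cos X 0 g, numFix X n τ ≤ Nat.card (levelStab X 0 : Subgroup G) := by
    intro g
    have := O.sum_numFix_cos hd (n := 0) (m := n) (by omega) g
    rw [h0] at this
    rw [this, card_cos]
    refine (Nat.mul_le_mul_left _ ?_).trans (mul_one _).le
    refine (Finset.card_filter_le _ _).trans (Finset.card_le_one.2 fun x hx y hy => ?_)
    obtain ⟨i, hi⟩ := O.trans 0 (Nat.zero_le _) x hx y hy
    rw [← hi, (O.fix 0 (Nat.zero_le _) x hx i).2 (by simp)]
  have h3 := Finset.sum_le_sum fun g (_ : g ∈ Finset.univ) => h2 g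
  rw [h1, Finset.sum_const, smul_eq_mul, smul_eq_mul, mul_comm] at h3
  exact Nat.le_of_mul_le_mul_right h3 Nat.card_pos

end

universe u

open scoped Classical in
/-- In a mixing tower of sufficient height few group elements have a fixed point at the top, and
the height needed depends only on `d` and the proportion. -/
theorem exists_height (d : ℕ) (hd : 2 ≤ d) (ε : ℝ) (hε : 0 < ε) :
    ∃ L : ℕ, ∀ (G Ω k : Type u) [Group G] [MulAction G Ω] [Fintype G] [Field k]
      (X : ℕ → Finset Ω) (π : Ω → Ω) (σ : G) (lc : Ω → k) (w : ℕ → k),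
      Odometer d L X π σ → Mixing d L X π σ lc w →
      ((Finset.univ.filter (fun g : G => 0 < numFix X L g)).card : ℝ) ≤ ε * Fintype.card G := by
  obtain ⟨B, hB⟩ := exists_nat_gt (2 / ε)
  set m := B ^ 2 + 1 + 2 with hm
  set c : ℝ := 1 / (((d ^ m) ^ 2 : ℕ) * ((B : ℝ) + 2) ^ 3) with hc
  have hcpos : 0 < c := by
    have : 0 < d := by omega
    have : (0 : ℝ) < ((d ^ m) ^ 2 : ℕ) := by exact_mod_cast (by positivity)
    positivity
  obtain ⟨S, hS⟩ := exists_nat_gt (1 / (c * (ε / 2)))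
  refine ⟨S * m, ?_⟩
  intro G Ω k _ _ _ _ X π σ lc w O Mx
  have hG : (0 : ℝ) < Fintype.card G := by exact_mod_cast Fintype.card_pos
  have hBpos : (0 : ℝ) < B := lt_trans (by positivity) hB
  -- If many elements had between `1` and `B` fixed points at every height `s * m`, the potential
  -- would grow past its bound `|G|`.
  have hex : ∃ s < S, ((Finset.univ.filter
      (fun g : G => 1 ≤ numFix X (s * m) g ∧ numFix X (s * m) g ≤ B)).card : ℝ) <
        ε / 2 * Fintype.card G := by
    by_contra hcon
    push Not at hcon
    have hind : ∀ s ≤ S, s * (c * (ε / 2 * Fintype.card G)) ≤ pot (G := G) X (s * m) := by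
      intro s
      induction s with
      | zero =>
        intro _
        simp only [CharP.cast_eq_zero, zero_mul, pot]
        exact Finset.sum_nonneg fun g _ => by positivity
      | succ s ih =>
        intro hs
        have h1 := O.pot_growth hd Mx (n := s * m) (B := B) (by
          rw [← hm, ← Nat.succ_mul]; exact Nat.mul_le_mul_right _ hs)
        rw [← hm, ← hc, ← Nat.succ_mul] at h1
        have h2 := ih (by omega)
        have h3 := mul_le_mul_of_nonneg_left (hcon s (by omega)) hcpos.le
        push_cast
        linarith
    have h1 := hind S le_rfl
    have h2 : pot (G := G) X (S * m) ≤ Fintype.card G := by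
      rw [pot]
      refine (Finset.sum_le_card_nsmul _ _ 1 fun g _ => ?_).trans (by simp)
      rw [div_le_one (by positivity)]
      linarith [(Nat.cast_nonneg (numFix X (S * m) g) : (0 : ℝ) ≤ _)]
    rw [div_lt_iff₀ (by positivity)] at hS
    nlinarith
  obtain ⟨s, hs, hlt⟩ := hex
  set n := s * m with hn
  have hnL : n ≤ S * m := Nat.mul_le_mul_right _ hs.le
  -- Markov's inequality, as the mean number of fixed points is at most `1`.
  have hmarkov : (((Finset.univ.filter (fun g : G => B < numFix X n g)).card : ℕ) : ℝ) ≤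
      ε / 2 * Fintype.card G := by
    have h1 := O.sum_numFix_le hd hnL
    have h2 : (Finset.univ.filter (fun g : G => B < numFix X n g)).card * B ≤
        ∑ g : G, numFix X n g := by
      rw [← smul_eq_mul]
      exact (Finset.card_nsmul_le_sum _ _ _ fun g hg => (Finset.mem_filter.1 hg).2.le).trans
        (Finset.sum_le_sum_of_subset (Finset.filter_subset _ _))
    have h3 : ((Finset.univ.filter (fun g : G => B < numFix X n g)).card : ℝ) * B ≤
        Fintype.card G := by exact_mod_cast h2.trans h1
    rw [div_lt_iff₀ hε] at hB
    have h4 : (1 : ℝ) / B ≤ ε / 2 := by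
      rw [div_le_div_iff₀ hBpos two_pos]; linarith
    calc _ ≤ (Fintype.card G : ℝ) / B := by rwa [le_div_iff₀ hBpos]
      _ = 1 / B * Fintype.card G := by ring
      _ ≤ _ := mul_le_mul_of_nonneg_right h4 hG.le
  have hsub : Finset.univ.filter (fun g : G => 0 < numFix X (S * m) g) ⊆
      (Finset.univ.filter (fun g : G => 1 ≤ numFix X n g ∧ numFix X n g ≤ B)) ∪
        Finset.univ.filter (fun g : G => B < numFix X n g) := by
    intro g hg
    have hg := (Finset.mem_filter.1 hg).2
    obtain ⟨x, hx⟩ := Finset.card_pos.1 hg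
    obtain ⟨hx, hgx⟩ := Finset.mem_filter.1 hx
    have hpos : 1 ≤ numFix X n g := by
      refine Finset.card_pos.2 ⟨π^[S * m - n] x, Finset.mem_filter.2 ⟨?_, ?_⟩⟩
      · exact O.iter_mem n _ (by omega) x (by rwa [Nat.add_sub_cancel' hnL])
      · rw [← O.iter_smul, hgx]
    simp only [Finset.mem_union, Finset.mem_filter, Finset.mem_univ, true_and]
    omega
  calc _ ≤ (((Finset.univ.filter (fun g : G => 1 ≤ numFix X n g ∧ numFix X n g ≤ B)).card +
        (Finset.univ.filter (fun g : G => B < numFix X n g)).card : ℕ) : ℝ) := by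
        exact_mod_cast (Finset.card_le_card hsub).trans (Finset.card_union_le _ _)
    _ ≤ _ := by push_cast; linarith

end Odometer

/-! ### A characterisation of Dickson polynomials -/

section DicksonChar

variable {k : Type*} [Field k]

/-- `g` is conjugate by a translation to the Dickson polynomial `D_d(x, κ)` for some `κ` with
`κ ^ (d - 1) = 1`; equivalently `κ ≠ 0` and `κ ^ d = κ`, so that the iterates are again Dickson
polynomials with parameter `κ`. -/
def IsDickson (g : k[X]) (d : ℕ) : Prop :=
  ∃ c κ : k, κ ^ (d - 1) = 1 ∧ g = (dickson 1 κ d).comp (X - C c) + C c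

/-- The polynomial in `u` obtained from `p (u + κ / u)` by clearing the denominator `u ^ n`, for
`p` of degree at most `n`. -/
noncomputable def palin (κ : k) (p : k[X]) (n : ℕ) : k[X] :=
  ∑ i ∈ Finset.range (n + 1), C (p.coeff i) * (X ^ 2 + C κ) ^ i * X ^ (n - i)

lemma natDegree_palin_term (κ : k) (a : k) (n i : ℕ) (hi : i ≤ n) :
    (C a * (X ^ 2 + C κ) ^ i * X ^ (n - i)).natDegree ≤ n + i := by
  have h1 : (X ^ 2 + C κ : k[X]).natDegree ≤ 2 := by compute_degree
  have h2 : ((X ^ 2 + C κ : k[X]) ^ i).natDegree ≤ i * 2 := natDegree_pow_le_of_le i h1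
  have h3 := natDegree_C_mul_le a ((X ^ 2 + C κ : k[X]) ^ i)
  have h4 := natDegree_mul_le (p := C a * (X ^ 2 + C κ) ^ i) (q := (X : k[X]) ^ (n - i))
  have h5 : ((X : k[X]) ^ (n - i)).natDegree = n - i := natDegree_X_pow _
  omega

lemma natDegree_palin (κ : k) (p : k[X]) (n : ℕ) : (palin κ p n).natDegree ≤ 2 * n := by
  refine natDegree_sum_le_of_forall_le _ _ fun i hi => ?_
  have := natDegree_palin_term κ (p.coeff i) n i (by simpa [Nat.lt_succ_iff] using hi)
  have := Finset.mem_range.mp hi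
  omega

lemma coeff_palin_top (κ : k) (p : k[X]) (n : ℕ) : (palin κ p n).coeff (2 * n) = p.coeff n := by
  rw [palin, Finset.sum_range_succ, coeff_add, finsetSum_coeff, Finset.sum_eq_zero, zero_add]
  · have h1 : (X ^ 2 + C κ : k[X]).Monic := monic_X_pow_add_C κ two_ne_zero
    have h2 : ((X ^ 2 + C κ : k[X]) ^ n).natDegree = 2 * n := by
      rw [h1.natDegree_pow, natDegree_X_pow_add_C, mul_comm]
    have h3 := (h1.pow n).coeff_natDegree
    rw [h2] at h3
    simp [coeff_C_mul, h3]
  · intro i hi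
    have hi := Finset.mem_range.mp hi
    apply coeff_eq_zero_of_natDegree_lt
    have := natDegree_palin_term κ (p.coeff i) n i hi.le
    omega

lemma coeff_palin_zero (κ : k) (p : k[X]) (n : ℕ) :
    (palin κ p n).coeff 0 = p.coeff n * κ ^ n := by
  rw [palin, Finset.sum_range_succ, coeff_add, finsetSum_coeff, Finset.sum_eq_zero, zero_add]
  · simp [coeff_zero_eq_eval_zero]
  · intro i hi
    have hi := Finset.mem_range.mp hi
    have : n - i ≠ 0 := by omega
    simp [coeff_zero_eq_eval_zero, this]

variable {Ω : Type*} [Field Ω] [Algebra k Ω]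

lemma aeval_palin (κ : k) (p : k[X]) (n : ℕ) (hp : p.natDegree ≤ n) (u : Ω) (hu : u ≠ 0) :
    aeval u (palin κ p n) = u ^ n * aeval (u + algebraMap k Ω κ * u⁻¹) p := by
  rw [palin, map_sum, aeval_eq_sum_range' (n := n + 1) (by omega), Finset.mul_sum]
  refine Finset.sum_congr rfl fun i hi => ?_
  have hi := Finset.mem_range.mp hi
  have e : u ^ n = u ^ i * u ^ (n - i) := by rw [← pow_add]; congr 1; omega
  have : u ^ 2 + algebraMap k Ω κ = u * (u + algebraMap k Ω κ * u⁻¹) := by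
    field_simp
  simp only [map_mul, aeval_C, map_pow, map_add, aeval_X, this, Algebra.smul_def, e]
  rw [mul_pow]
  ring

lemma transcendental_add_inv (κ : k) (u : Ω) (hu : Transcendental k u) :
    Transcendental k (u + algebraMap k Ω κ * u⁻¹) := by
  rw [transcendental_iff] at hu ⊢
  intro p hp
  by_contra hne
  have hu0 : u ≠ 0 := by
    rintro rfl
    exact X_ne_zero (hu X (by simp))
  have := aeval_palin κ p p.natDegree le_rfl u hu0
  rw [hp, mul_zero] at this
  have h2 := coeff_palin_top κ p p.natDegree
  rw [hu _ this, coeff_zero] at h2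
  exact hne (leadingCoeff_eq_zero.mp h2.symm)

lemma eval_dickson_add_inv (κ : k) (n : ℕ) (u : Ω) (hu : u ≠ 0) :
    aeval (u + algebraMap k Ω κ * u⁻¹) (dickson 1 κ n) =
      u ^ n + algebraMap k Ω (κ ^ n) * (u ^ n)⁻¹ := by
  induction n using Nat.twoStepInduction with
  | zero =>
    have h3 : aeval (u + algebraMap k Ω κ * u⁻¹) (3 : k[X]) = 3 := map_ofNat _ 3
    simp [h3]; norm_num
  | one => simp
  | more n ih1 ih2 =>
    rw [dickson_add_two, map_sub, map_mul, map_mul, ih1, ih2]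
    simp only [aeval_X, aeval_C, map_pow]
    field_simp
    ring

lemma dickson_natDegree_le (κ : k) (n : ℕ) : (dickson 1 κ n).natDegree ≤ n := by
  induction n using Nat.twoStepInduction with
  | zero =>
    rw [dickson_zero]
    have : (3 - ((1:ℕ) : k[X])) = C 2 := by
      simp only [map_ofNat, Nat.cast_one]; norm_num
    rw [this]; simp
  | one => simp
  | more n ih1 ih2 =>
    rw [dickson_add_two]
    refine (natDegree_sub_le _ _).trans (max_le ?_ ?_)
    · refine natDegree_mul_le.trans ?_
      have := natDegree_X_le (R := k)
      omega
    · exact (natDegree_C_mul_le _ _).trans (by omega)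

/-- The Dickson polynomial begins `x ^ n - n κ x ^ (n - 2)`. -/
lemma dickson_coeffs (κ : k) (n : ℕ) :
    (dickson 1 κ (n + 2)).coeff (n + 2) = 1 ∧ (dickson 1 κ (n + 2)).coeff (n + 1) = 0 ∧
      (dickson 1 κ (n + 2)).coeff n = - ((n + 2 : ℕ) : k) * κ := by
  induction n with
  | zero => 
    have h3 : (3 - ((1 : ℕ) : k[X])) = C 2 := by
      simp only [map_ofNat, Nat.cast_one]; norm_num
    have h2 : dickson 1 κ (0 + 2) = X ^ 2 + C (-(2 * κ)) := by
      rw [dickson_add_two, dickson_zero, dickson_one, h3]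
      simp only [map_neg, map_mul]; ring
    rw [h2]
    simp [coeff_X_pow, -map_neg, -map_mul, coeff_C]
  | succ n ih =>
    obtain ⟨h1, h2, h3⟩ := ih
    have e : n + 1 + 2 = (n + 1) + 2 := rfl
    rw [dickson_add_two]
    refine ⟨?_, ?_, ?_⟩
    · rw [coeff_sub, coeff_X_mul, coeff_C_mul, h1,
        coeff_eq_zero_of_natDegree_lt (lt_of_le_of_lt (dickson_natDegree_le _ _) (by omega))]
      simp
    · rw [coeff_sub, coeff_X_mul, coeff_C_mul, h2,
        coeff_eq_zero_of_natDegree_lt (lt_of_le_of_lt (dickson_natDegree_le _ _) (by omega))]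
      simp
    · rw [coeff_sub, coeff_X_mul, coeff_C_mul, h3]
      have : (dickson 1 κ (n + 1)).coeff (n + 1) = 1 := by
        cases n with
        | zero => simp
        | succ n =>
          rw [dickson_add_two, coeff_sub, coeff_X_mul, coeff_C_mul,
            coeff_eq_zero_of_natDegree_lt (lt_of_le_of_lt (dickson_natDegree_le κ n) (by omega))]
          have := h1
          rw [dickson_add_two, coeff_sub, coeff_X_mul, coeff_C_mul,
            coeff_eq_zero_of_natDegree_lt
              (lt_of_le_of_lt (dickson_natDegree_le κ (n + 1)) (by omega)),
            mul_zero, sub_zero, dickson_add_two, coeff_sub, coeff_X_mul, coeff_C_mul,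
            coeff_eq_zero_of_natDegree_lt
              (lt_of_le_of_lt (dickson_natDegree_le κ n) (by omega))] at this
          exact this
      rw [this]
      push_cast
      ring

/-- Comparing coefficients of `x ^ (d - 1)` determines the centre `c` from `g`. -/
lemma coeff_pred_of_dickson {d : ℕ} (hd : 2 ≤ d) {g : k[X]} {c κ γ : k}
    (h : g.comp (X + C c) = dickson 1 κ d + C γ) : (d : k) * c = - g.coeff (d - 1) := by
  obtain ⟨n, rfl⟩ : ∃ n, d = n + 2 := ⟨d - 2, by omega⟩
  have hg : g = (dickson 1 κ (n + 2)).comp (X - C c) + C γ := by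
    have := congrArg (fun q : k[X] => q.comp (X - C c)) h
    simpa [comp_assoc] using this
  have hdd : (dickson 1 κ (n + 2)).natDegree ≤ n + 2 := dickson_natDegree_le _ _
  obtain ⟨h1, h2, -⟩ := dickson_coeffs κ n
  have key : ((dickson 1 κ (n + 2)).comp (X - C c)).coeff (n + 1) = - ((n + 2 : ℕ) : k) * c := by
    rw [comp_eq_sum_left, sum_over_range' _ (by simp) (n + 3) (by omega), finsetSum_coeff,
      Finset.sum_range_succ, Finset.sum_range_succ, Finset.sum_eq_zero]
    · rw [h1, h2]
      have : (X - C c : k[X]) = X + C (-c) := by simp [sub_eq_add_neg]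
      rw [this]
      simp only [coeff_C_mul, coeff_X_add_C_pow]
      simp
      ring
    · intro i hi
      have hi := Finset.mem_range.mp hi
      have : ((X - C c : k[X]) ^ i).natDegree < n + 1 := by
        rw [natDegree_pow, natDegree_X_sub_C]; omega
      rw [coeff_C_mul, coeff_eq_zero_of_natDegree_lt this, mul_zero]
  rw [hg]
  simp only [show n + 2 - 1 = n + 1 by omega, coeff_add, key, coeff_C_succ]
  ring

/-- If `g (c + u + κ / u)` is invariant under `u ↦ θ u` with `θ` a primitive `d`-th root of unity,
it has the form `γ + u ^ d + κ ^ d / u ^ d`, and `g` is a Dickson polynomial up to translations. -/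
lemma dickson_step {d : ℕ} (hd : 2 ≤ d) {g : k[X]} (hg : g.Monic) (hgd : g.natDegree = d)
    {θ : k} (hθ : IsPrimitiveRoot θ d) {u : Ω} (hu : Transcendental k u) (S : Ω →ₐ[k] Ω)
    (hS : S u = algebraMap k Ω θ * u) (c κ : k)
    (hfix : S (aeval (algebraMap k Ω c + u + algebraMap k Ω κ * u⁻¹) g) =
      aeval (algebraMap k Ω c + u + algebraMap k Ω κ * u⁻¹) g) :
    ∃ γ, g.comp (X + C c) = dickson 1 κ d + C γ ∧
      aeval (algebraMap k Ω c + u + algebraMap k Ω κ * u⁻¹) g =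
        algebraMap k Ω γ + u ^ d + algebraMap k Ω (κ ^ d) * (u ^ d)⁻¹ := by
  have hu0 : u ≠ 0 := by
    rintro rfl
    exact hu isAlgebraic_zero
  set p := g.comp (X + C c) with hp
  have hpm : p.Monic := hg.comp_X_add_C c
  have hpd : p.natDegree = d := by rw [hp, natDegree_comp, natDegree_X_add_C, hgd, mul_one]
  have hpe : ∀ w : Ω, aeval w p = aeval (algebraMap k Ω c + w) g := by
    intro w; rw [hp, aeval_comp]; simp [add_comm]
  rw [add_assoc, ← hpe] at hfix ⊢
  have hQ := aeval_palin κ p d hpd.le u hu0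
  have hQS : aeval u ((palin κ p d).comp (C θ * X)) = aeval u (palin κ p d) := by
    have : aeval u ((palin κ p d).comp (C θ * X)) = S (aeval u (palin κ p d)) := by
      rw [aeval_comp, ← aeval_algHom_apply, hS]; simp
    rw [this, hQ, map_mul, hfix, map_pow, hS, mul_pow, ← map_pow, hθ.pow_eq_one, map_one, one_mul]
  have hcomp : (palin κ p d).comp (C θ * X) = palin κ p d := by
    have h := (transcendental_iff.mp hu) ((palin κ p d).comp (C θ * X) - palin κ p d)
      (by rw [map_sub, hQS, sub_self])
    exact sub_eq_zero.mp h
  have hcoef : ∀ i, (palin κ p d).coeff i ≠ 0 → d ∣ i := by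
    intro i hi
    have := congrArg (fun q => coeff q i) hcomp
    simp only [comp_C_mul_X_coeff] at this
    exact hθ.dvd_of_pow_eq_one i (mul_left_cancel₀ hi (by rw [this, mul_one]))
  have hpc : p.coeff d = 1 := by rw [← hpd]; exact hpm
  have hform : palin κ p d = X ^ (2 * d) + C ((palin κ p d).coeff d) * X ^ d + C (κ ^ d) := by
    ext i
    have hd0 : d ≠ 0 := by omega
    have h2 := coeff_palin_top κ p d
    have h0 := coeff_palin_zero κ p d
    rw [hpc] at h2 h0
    simp only [coeff_add, coeff_X_pow, coeff_C_mul, coeff_C]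
    by_cases h : (palin κ p d).coeff i = 0
    · have e1 : i ≠ 2 * d := by rintro rfl; simp [h2] at h
      rw [h, if_neg e1]
      by_cases e2 : i = d
      · subst e2; simp [hd0, h]
      · by_cases e3 : i = 0
        · subst e3; rw [h0, one_mul] at h; simp [e2, h]
        · simp [e2, e3]
    · obtain ⟨m, rfl⟩ := hcoef i h
      have : d * m ≤ 2 * d := by
        by_contra hlt
        exact h (coeff_eq_zero_of_natDegree_lt
          (lt_of_le_of_lt (natDegree_palin κ p d) (not_le.mp hlt)))
      have hm : m ≤ 2 := by
        rw [mul_comm] at this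
        exact Nat.le_of_mul_le_mul_right this (by omega)
      interval_cases m
      · simp [h0, hd0, hd0.symm]
      · have : d ≠ 2 * d := by omega
        simp [hd0, this]
      · rw [mul_comm, h2]
        have : 2 * d ≠ d := by omega
        simp [this, hd0]
  set γ := (palin κ p d).coeff d with hγ
  have hval : aeval (u + algebraMap k Ω κ * u⁻¹) p =
      algebraMap k Ω γ + u ^ d + algebraMap k Ω (κ ^ d) * (u ^ d)⁻¹ := by
    have hud : u ^ d ≠ 0 := pow_ne_zero _ hu0
    apply mul_left_cancel₀ hud
    rw [← hQ, hform]
    simp only [map_add, map_mul, aeval_X, aeval_C, map_pow]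
    field_simp
    ring
  refine ⟨γ, ?_, hval⟩
  have ht := transcendental_iff.mp (transcendental_add_inv κ u hu) (p - (dickson 1 κ d + C γ)) (by
    rw [map_sub, hval, map_add, eval_dickson_add_inv κ d u hu0, aeval_C]; ring)
  exact sub_eq_zero.mp ht

lemma transcendental_pow' {u : Ω} (hu : Transcendental k u) {n : ℕ} (hn : 0 < n) :
    Transcendental k (u ^ n) :=
  hu.pow hn

/-- Three consecutive levels force the translations on both sides to agree, and two of them force
`κ ^ d = κ`. -/
lemma isDickson_of_steps {d : ℕ} (hd : 2 ≤ d) (hdk : (d : k) ≠ 0) {g : k[X]} (hg : g.Monic)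
    (hgd : g.natDegree = d) {θ : k} (hθ : IsPrimitiveRoot θ d) {u : Ω} (hu : Transcendental k u)
    (S1 S2 S3 : Ω →ₐ[k] Ω) (h1 : S1 u = algebraMap k Ω θ * u)
    (h2 : S2 (u ^ d) = algebraMap k Ω θ * u ^ d)
    (h3 : S3 ((u ^ d) ^ d) = algebraMap k Ω θ * (u ^ d) ^ d) (c κ : k) (hκ : κ ≠ 0)
    {y : Ω} (hy : y = algebraMap k Ω c + u + algebraMap k Ω κ * u⁻¹)
    (f1 : S1 (aeval y g) = aeval y g)
    (f2 : S2 (aeval (aeval y g) g) = aeval (aeval y g) g)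
    (f3 : S3 (aeval (aeval (aeval y g) g) g) = aeval (aeval (aeval y g) g) g) :
    IsDickson g d := by
  have hd0 : 0 < d := by omega
  have hud := transcendental_pow' hu hd0
  have hudd := transcendental_pow' hud hd0
  rw [hy] at f1
  obtain ⟨γ1, e1, v1⟩ := dickson_step hd hg hgd hθ hu S1 h1 c κ f1
  rw [hy, v1] at f2 f3
  obtain ⟨γ2, e2, v2⟩ := dickson_step hd hg hgd hθ hud S2 h2 γ1 (κ ^ d) f2
  rw [v2] at f3
  obtain ⟨γ3, e3, v3⟩ := dickson_step hd hg hgd hθ hudd S3 h3 γ2 ((κ ^ d) ^ d) f3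
  have c1 := coeff_pred_of_dickson hd e1
  have c2 := coeff_pred_of_dickson hd e2
  have hc : c = γ1 := mul_left_cancel₀ hdk (c1.trans c2.symm)
  have c3 := coeff_pred_of_dickson hd e3
  have hc2 : γ1 = γ2 := mul_left_cancel₀ hdk (c2.trans c3.symm)
  rw [← hc] at e1 e2 hc2
  rw [e1] at e2
  obtain ⟨n, rfl⟩ : ∃ n, d = n + 2 := ⟨d - 2, by omega⟩
  rw [← hc2] at e2
  have e4 := add_right_cancel e2
  have e5 := congrArg (fun q : k[X] => q.coeff n) e4
  simp only [(dickson_coeffs _ n).2.2] at e5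
  have e6 := mul_left_cancel₀ (neg_ne_zero.mpr hdk) e5
  refine ⟨c, κ, ?_, ?_⟩
  · apply mul_left_cancel₀ hκ
    rw [show n + 2 - 1 = n + 1 by omega, ← pow_succ', mul_one]
    exact e6.symm
  · have := congrArg (fun q : k[X] => q.comp (X - C c)) e1
    simpa [comp_assoc] using this

end DicksonChar

/-! ### Correlations of leading coefficients at infinity -/

/-- A finite orbit of functions with poles at infinity. `Ω` is a function field over `k` with a finite
group `Γ` of `k`-automorphisms, `Φ` expands functions at one place at infinity, so that
`Φ (g • ·)` expands them at its conjugates, and `I` is a ring of functions regular away from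
infinity; `deg` is the product formula, that a function in `I` has no more zeros than poles at
infinity. The functions `z x` have a pole of order `e` with leading coefficient `lc x` at every
conjugate place, and their principal parts there are monomials, with no other term of degree
below `e`. -/
structure Core {k Γ T Ω : Type*} [Field k] [Group Γ] [Fintype Γ] [Fintype T] [MulAction Γ T]
    [Field Ω] [Algebra k Ω] [MulSemiringAction Γ Ω] (Φ : Ω →+* LaurentSeries k)
    (I : Subalgebra k Ω) (z : T → Ω) (lc : T → k) (e : ℤ) : Prop where
  map_alg : ∀ c, Φ (algebraMap k Ω c) = HahnSeries.C c
  smul_alg : ∀ (g : Γ) (c : k), g • algebraMap k Ω c = algebraMap k Ω c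
  smul_I : ∀ (g : Γ), ∀ u ∈ I, g • u ∈ I
  deg : ∀ u ∈ I, u ≠ 0 → ∑ g : Γ, (Φ (g • u)).order ≤ 0
  e_pos : 0 < e
  z_mem : ∀ x, z x ∈ I
  z_smul : ∀ (g : Γ) x, g • z x = z (g • x)
  z_coeff : ∀ x j, j < e → j ≠ -e → (Φ (z x)).coeff j = 0
  z_lc : ∀ x, (Φ (z x)).coeff (-e) = lc x
  lc_ne : ∀ x, lc x ≠ 0

namespace Core

variable {k Γ T Ω : Type*} [Field k] [Group Γ] [Fintype Γ] [Fintype T] [MulAction Γ T]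
    [Field Ω] [Algebra k Ω] [MulSemiringAction Γ Ω] {Φ : Ω →+* LaurentSeries k}
    {I : Subalgebra k Ω} {z : T → Ω} {lc : T → k} {e : ℤ}

lemma coeff_map_smul (hC : ∀ c, Φ (algebraMap k Ω c) = HahnSeries.C c) (c : k) (w : Ω) (j : ℤ) :
    (Φ (c • w)).coeff j = c * (Φ w).coeff j := by
  rw [Algebra.smul_def, map_mul, hC, HahnSeries.C_mul_eq_smul, HahnSeries.coeff_smul, smul_eq_mul]

lemma smul_comm' (H : Core (Γ := Γ) Φ I z lc e) (g : Γ) (c : k) (w : Ω) :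
    g • (c • w) = c • (g • w) := by
  rw [Algebra.smul_def, smul_mul', H.smul_alg, ← Algebra.smul_def]

/-- A function in `I` whose expansion at each conjugate place at infinity has no terms of degree below
`e`, except possibly in degree `-e`. -/
def Adm (Γ : Type*) [Group Γ] [MulSemiringAction Γ Ω] (Φ : Ω →+* LaurentSeries k)
    (I : Subalgebra k Ω) (e : ℤ) (w : Ω) : Prop :=
  w ∈ I ∧ ∀ (g : Γ) j, j < e → j ≠ -e → (Φ (g • w)).coeff j = 0

lemma Adm.sub {w w' : Ω} (h : Adm Γ Φ I e w) (h' : Adm Γ Φ I e w') : Adm Γ Φ I e (w - w') :=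
  ⟨I.sub_mem h.1 h'.1, fun g j h1 h2 => by
    rw [smul_sub, map_sub, HahnSeries.coeff_sub, h.2 g j h1 h2, h'.2 g j h1 h2, sub_zero]⟩

lemma Adm.smul (H : Core (Γ := Γ) Φ I z lc e) {w : Ω} (h : Adm Γ Φ I e w) (c : k) :
    Adm Γ Φ I e (c • w) :=
  ⟨I.smul_mem h.1 c, fun g j h1 h2 => by
    rw [H.smul_comm', coeff_map_smul H.map_alg, h.2 g j h1 h2, mul_zero]⟩

lemma Adm.act (H : Core (Γ := Γ) Φ I z lc e) {w : Ω} (h : Adm Γ Φ I e w) (g' : Γ) :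
    Adm Γ Φ I e (g' • w) :=
  ⟨H.smul_I g' w h.1, fun g j h1 h2 => by rw [← mul_smul]; exact h.2 _ j h1 h2⟩

lemma Adm.sum {ι : Type*} (s : Finset ι) {w : ι → Ω} (h : ∀ i ∈ s, Adm Γ Φ I e (w i)) :
    Adm Γ Φ I e (∑ i ∈ s, w i) :=
  ⟨I.sum_mem fun i hi => (h i hi).1, fun g j h1 h2 => by
    rw [Finset.smul_sum, map_sum, HahnSeries.coeff_sum]
    exact Finset.sum_eq_zero fun i hi => (h i hi).2 g j h1 h2⟩

lemma adm_z (H : Core (Γ := Γ) Φ I z lc e) (x : T) : Adm Γ Φ I e (z x) :=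
  ⟨H.z_mem x, fun g j h1 h2 => by rw [H.z_smul]; exact H.z_coeff _ j h1 h2⟩

lemma smul_ne {k Γ Ω : Type*} [Field k] [Group Γ] [Field Ω] [MulSemiringAction Γ Ω]
    {Φ : Ω →+* LaurentSeries k} (g : Γ) {w : Ω} (h : w ≠ 0) : Φ (g • w) ≠ 0 := by
  rw [map_ne_zero_iff _ Φ.injective]
  exact (smul_ne_zero_iff_ne g).mpr h

lemma order_of_ne {w : Ω} (h : Adm Γ Φ I e w) (he : 0 < e) (g : Γ)
    (hp : (Φ (g • w)).coeff (-e) ≠ 0) : (Φ (g • w)).order = -e := by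
  apply le_antisymm (HahnSeries.order_le_of_coeff_ne_zero hp)
  by_contra hlt
  push Not at hlt
  have hne : Φ (g • w) ≠ 0 := by
    intro h0; rw [h0] at hp; simp at hp
  exact HahnSeries.coeff_order_eq_zero.not.mpr hne (h.2 g _ (by omega) (by omega))

lemma order_of_eq {w : Ω} (h : Adm Γ Φ I e w) (hw : w ≠ 0) (g : Γ)
    (hp : (Φ (g • w)).coeff (-e) = 0) : e ≤ (Φ (g • w)).order := by
  by_contra hlt
  push Not at hlt
  refine HahnSeries.coeff_order_eq_zero.not.mpr (smul_ne (Φ := Φ) g hw) ?_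
  by_cases h2 : (Φ (g • w)).order = -e
  · rw [h2, hp]
  · exact h.2 g _ hlt h2

open scoped Classical in
/-- A nonzero admissible function has a zero of order at least `e` at every conjugate place where it has
no pole, so by the product formula it has a pole at no fewer than half of the places. -/
lemma dichotomy (H : Core (Γ := Γ) Φ I z lc e) {w : Ω} (h : Adm Γ Φ I e w) (hw : w ≠ 0) :
    (Finset.univ.filter fun g : Γ => (Φ (g • w)).coeff (-e) = 0).card ≤
      (Finset.univ.filter fun g : Γ => ¬ (Φ (g • w)).coeff (-e) = 0).card := by
  have h1 := H.deg w h.1 hw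
  rw [← Finset.sum_filter_add_sum_filter_not _ (fun g : Γ => (Φ (g • w)).coeff (-e) = 0)] at h1
  have h2 : ((Finset.univ.filter fun g : Γ => (Φ (g • w)).coeff (-e) = 0).card : ℤ) * e ≤
      ∑ g ∈ Finset.univ.filter (fun g : Γ => (Φ (g • w)).coeff (-e) = 0), (Φ (g • w)).order := by
    rw [← nsmul_eq_mul]
    exact Finset.card_nsmul_le_sum _ _ _ fun g hg =>
      order_of_eq h hw g (Finset.mem_filter.mp hg).2
  have h3 : ((Finset.univ.filter fun g : Γ => ¬ (Φ (g • w)).coeff (-e) = 0).card : ℤ) * (-e) =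
      ∑ g ∈ Finset.univ.filter (fun g : Γ => ¬ (Φ (g • w)).coeff (-e) = 0), (Φ (g • w)).order := by
    rw [Finset.sum_congr rfl fun g hg => order_of_ne h H.e_pos g (Finset.mem_filter.mp hg).2]
    simp
  have := H.e_pos
  zify
  nlinarith

/-- Elements without poles at the given places which vanish at one of them are zero. -/
lemma eq_zero_of_order (H : Core (Γ := Γ) Φ I z lc e) {w : Ω} (h : w ∈ I)
    (h1 : ∀ g : Γ, ∀ j < 0, (Φ (g • w)).coeff j = 0) (g0 : Γ) (h2 : (Φ (g0 • w)).coeff 0 = 0) :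
    w = 0 := by
  by_contra hw
  have hd := H.deg w h hw
  have h3 : ∀ g : Γ, 0 ≤ (Φ (g • w)).order := by
    intro g
    by_contra hlt
    exact HahnSeries.coeff_order_eq_zero.not.mpr (smul_ne (Φ := Φ) g hw) (h1 g _ (by omega))
  have h4 : 0 < (Φ (g0 • w)).order := by
    refine lt_of_le_of_ne (h3 g0) fun h0 => ?_
    apply HahnSeries.coeff_order_eq_zero.not.mpr (smul_ne (Φ := Φ) g0 hw)
    rw [← h0, h2]
  have := Finset.sum_pos' (fun g _ => h3 g) ⟨g0, Finset.mem_univ _, h4⟩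
  omega

/-- The sum of `lc (g • x) / lc x`, which is the coefficient of degree `-e` of `wt z lc` at the place
moved by `g`. -/
noncomputable def corr (lc : T → k) (g : Γ) : k := ∑ x, lc (g • x) / lc x

/-- The combination of the `z x` with weights `1 / lc x`, whose leading coefficients at infinity are
the values of `corr`. -/
noncomputable def wt (z : T → Ω) (lc : T → k) : Ω := ∑ x, (lc x)⁻¹ • z x

lemma adm_wt (H : Core (Γ := Γ) Φ I z lc e) : Adm Γ Φ I e (wt z lc) :=
  Adm.sum _ fun x _ => (H.adm_z x).smul H _

lemma coeff_wt (H : Core (Γ := Γ) Φ I z lc e) (g : Γ) :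
    (Φ (g • wt z lc)).coeff (-e) = corr lc g := by
  rw [wt, Finset.smul_sum, map_sum, HahnSeries.coeff_sum, corr]
  refine Finset.sum_congr rfl fun x _ => ?_
  rw [H.smul_comm', coeff_map_smul H.map_alg, H.z_smul, H.z_lc, div_eq_inv_mul]

section cyclic

variable {s : Γ} {ω : k} {M : ℕ}

lemma lc_pow (hs : ∀ x, lc (s • x) = ω * lc x) (j : ℕ) (x : T) :
    lc (s ^ j • x) = ω ^ j * lc x := by
  induction j with
  | zero => simp
  | succ j ih => rw [pow_succ', mul_smul, hs, ih, pow_succ']; ring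

lemma sum_orbit (hlc : ∀ x, lc x ≠ 0) (hs : ∀ x, lc (s • x) = ω * lc x)
    (hω : IsPrimitiveRoot ω M)
    (hT : Fintype.card T = M) {A : Type*} [AddCommMonoid A] (F : T → A) (x : T) :
    ∑ j ∈ Finset.range M, F (s ^ j • x) = ∑ y, F y := by
  rw [← Fin.sum_univ_eq_sum_range (fun j => F (s ^ j • x)) M]
  have hinj : Function.Injective (fun j : Fin M => s ^ (j : ℕ) • x) := by
    intro i j hij
    have := congrArg lc hij
    simp only [lc_pow hs] at this
    exact Fin.ext (hω.pow_inj i.2 j.2 (mul_right_cancel₀ (hlc x) this))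
  have hbij : Function.Bijective (fun j : Fin M => s ^ (j : ℕ) • x) := by
    rw [Fintype.bijective_iff_injective_and_card]
    exact ⟨hinj, by simp [hT]⟩
  exact Fintype.sum_bijective _ hbij _ _ fun _ => rfl

lemma exists_pow (hlc : ∀ x, lc x ≠ 0) (hs : ∀ x, lc (s • x) = ω * lc x)
    (hω : IsPrimitiveRoot ω M)
    (hT : Fintype.card T = M) (x y : T) : ∃ j : ℕ, s ^ j • x = y := by
  classical
  by_contra h
  push Not at h
  have := sum_orbit hlc hs hω hT (fun y' => if y' = y then (1 : ℕ) else 0) x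
  simp [h] at this

/-- The cyclic group generated by `s` projects any function onto the line of `lc`. -/
lemma projector (hlc : ∀ x, lc x ≠ 0) (hs : ∀ x, lc (s • x) = ω * lc x)
    (hω : IsPrimitiveRoot ω M)
    (hT : Fintype.card T = M) (f : T → k) (x : T) :
    ∑ j ∈ Finset.range M, (ω ^ j)⁻¹ * f (s ^ j • x) = (∑ y, f y / lc y) * lc x := by
  rw [Finset.sum_mul, ← sum_orbit hlc hs hω hT _ x]
  refine Finset.sum_congr rfl fun j hj => ?_
  have hj := Finset.mem_range.mp hj
  have hω0 : ω ≠ 0 := hω.ne_zero (by omega)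
  rw [lc_pow hs]
  have := hlc x
  field_simp

end cyclic

/-- The span of the translates of `lc` by a subgroup `N`. -/
def tspan (lc : T → k) (N : Subgroup Γ) : Submodule k (T → k) :=
  Submodule.span k ((fun (g : Γ) (x : T) => lc (g • x)) '' N)

/-- The translate of `lc` by `g`. -/
def trans (lc : T → k) (g : Γ) : T → k := fun x => lc (g • x)

/-- Translation by `c` on functions on `T`. -/
def shift (c : Γ) : (T → k) →ₗ[k] (T → k) := LinearMap.funLeft k k (fun x : T => c • x)

lemma shift_trans (c g : Γ) : shift c (trans lc g) = trans lc (g * c) := by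
  ext x; simp [shift, trans, LinearMap.funLeft_apply, mul_smul]

lemma mem_tspan {N : Subgroup Γ} {g : Γ} (hg : g ∈ N) : trans lc g ∈ tspan lc N :=
  Submodule.subset_span ⟨g, hg, rfl⟩

lemma shift_mem {N : Subgroup Γ} [hN : N.Normal] {c : Γ} (hc : trans lc c ∈ tspan lc N)
    {f : T → k} (hf : f ∈ tspan lc N) : shift c f ∈ tspan lc N := by
  have h1 : ∀ ν ∈ N, ∀ f ∈ tspan lc N, shift ν f ∈ tspan lc N := by
    intro ν hν f hf
    induction hf using Submodule.span_induction with
    | mem f hf =>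
      obtain ⟨g, hg, rfl⟩ := hf
      exact (shift_trans (lc := lc) ν g) ▸ mem_tspan (N.mul_mem hg hν)
    | zero => simp
    | add f g _ _ h1 h2 => rw [map_add]; exact Submodule.add_mem _ h1 h2
    | smul a f _ h1 => rw [map_smul]; exact Submodule.smul_mem _ _ h1
  induction hf using Submodule.span_induction with
  | mem f hf =>
    obtain ⟨g, hg, rfl⟩ := hf
    have e : shift c (trans lc g) = shift (c⁻¹ * g * c) (trans lc c) := by
      rw [shift_trans, shift_trans]; congr 1; group
    change shift c (trans lc g) ∈ _
    rw [e]
    exact h1 _ (by simpa using hN.conj_mem g hg c⁻¹) _ hc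
  | zero => simp
  | add f g _ _ h1 h2 => rw [map_add]; exact Submodule.add_mem _ h1 h2
  | smul a f _ h1 => rw [map_smul]; exact Submodule.smul_mem _ _ h1

/-- The group elements preserving `tspan lc N`. -/
def stab (lc : T → k) (N : Subgroup Γ) [N.Normal] : Subgroup Γ where
  carrier := {c | trans lc c ∈ tspan lc N}
  one_mem' := mem_tspan N.one_mem
  mul_mem' := fun {a b} ha hb => by
    have := shift_mem hb ha
    rwa [shift_trans] at this
  inv_mem' := fun {c} hc => by
    change trans lc c ∈ tspan lc N at hc
    have hmul : ∀ n : ℕ, trans lc (c ^ n) ∈ tspan lc N := by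
      intro n
      induction n with
      | zero => rw [pow_zero]; exact mem_tspan N.one_mem
      | succ n ih =>
        have := shift_mem hc ih
        rwa [shift_trans, ← pow_succ] at this
    have h1 : c⁻¹ = c ^ (orderOf c - 1) := by
      rw [inv_eq_iff_mul_eq_one, ← pow_succ', Nat.sub_add_cancel (orderOf_pos c), pow_orderOf_eq_one]
    change trans lc c⁻¹ ∈ tspan lc N
    have h2 := hmul (orderOf c - 1)
    rwa [← h1] at h2

lemma mem_stab {N : Subgroup Γ} [N.Normal] {c : Γ} :
    c ∈ stab lc N ↔ trans lc c ∈ tspan lc N := Iff.rfl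

/-- By the projection formula, `corr lc c` times the translate of `lc` by `c⁻¹` is a combination of its
translates by the conjugates `c * s ^ j * c⁻¹`, which lie in `N`. -/
lemma mem_stab_of_corr {s : Γ} {ω : k} {M : ℕ} (hlc : ∀ x, lc x ≠ 0)
    (hs : ∀ x, lc (s • x) = ω * lc x) (hω : IsPrimitiveRoot ω M) (hT : Fintype.card T = M)
    {N : Subgroup Γ} [hN : N.Normal] (hsN : s ∈ N) {c : Γ} (hc : corr lc c ≠ 0) :
    c ∈ stab lc N := by
  rw [← inv_mem_iff, mem_stab]
  have h1 : corr lc c • trans lc c⁻¹ =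
      ∑ j ∈ Finset.range M, (ω ^ j)⁻¹ • trans lc (c * s ^ j * c⁻¹) := by
    ext x
    have := projector hlc hs hω hT (trans lc c) (c⁻¹ • x)
    simp only [Finset.sum_apply, Pi.smul_apply, smul_eq_mul, trans, mul_smul] at this ⊢
    exact this.symm
  have h2 : corr lc c • trans lc c⁻¹ ∈ tspan lc N := by
    rw [h1]
    exact Submodule.sum_mem _ fun j _ => Submodule.smul_mem _ _
      (mem_tspan (hN.conj_mem _ (N.pow_mem hsN j) c))
  exact (Submodule.smul_mem_iff _ hc).mp h2

/-- If `h` preserved the span, `lc` would lie in the span of its translates by `h N`, on which the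
functional `f ↦ ∑ f / lc` vanishes, although its value at `lc` is `|T|`. -/
lemma notMem_stab {M : ℕ} (hlc : ∀ x, lc x ≠ 0) (hT : Fintype.card T = M) (hM : (M : k) ≠ 0)
    {N : Subgroup Γ} [hN : N.Normal] {h : Γ} (hh : ∀ ν ∈ N, corr lc (h * ν) = 0) :
    h ∉ stab lc N := by
  intro hmem
  have key : ∀ f ∈ tspan lc N, ∑ x, shift h f x / lc x = 0 := by
    intro f hf
    induction hf using Submodule.span_induction with
    | mem f hf =>
      obtain ⟨g, hg, rfl⟩ := hf
      have := hh (h⁻¹ * g * h) (by simpa using hN.conj_mem g hg h⁻¹)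
      rw [corr] at this
      rw [← this]
      refine Finset.sum_congr rfl fun x _ => ?_
      change lc (g • h • x) / _ = _
      rw [← mul_smul]; congr 3; group
    | zero => simp
    | add f g _ _ h1 h2 =>
      simp only [map_add, Pi.add_apply, add_div, Finset.sum_add_distrib, h1, h2, add_zero]
    | smul a f _ h1 =>
      simp only [map_smul, Pi.smul_apply, smul_eq_mul, mul_div_assoc, ← Finset.mul_sum, h1,
        mul_zero]
  have h2 := key _ ((stab lc N).inv_mem hmem)
  rw [shift_trans, inv_mul_cancel] at h2
  simp [trans, hlc, hT] at h2
  exact hM h2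

end Core

namespace Core

variable {k Γ T Ω : Type*} [Field k] [Group Γ] [Fintype Γ] [Fintype T] [MulAction Γ T]
    [Field Ω] [Algebra k Ω] [MulSemiringAction Γ Ω] {Φ : Ω →+* LaurentSeries k}
    {I : Subalgebra k Ω} {z : T → Ω} {lc : T → k} {e : ℤ}

lemma corr_one {M : ℕ} (H : Core (Γ := Γ) Φ I z lc e) (hT : Fintype.card T = M) :
    corr lc (1 : Γ) = M := by
  simp [corr, H.lc_ne, hT]

lemma corr_s {M : ℕ} (H : Core (Γ := Γ) Φ I z lc e) (hT : Fintype.card T = M) {s : Γ} {ω : k}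
    (hs : ∀ x, lc (s • x) = ω * lc x) : corr lc s = ω * M := by
  simp [corr, hs, H.lc_ne, hT, mul_comm]

open scoped Classical in
/-- The support of `corr` is a subgroup of index two, and `wt` has orders `∓e` on and off it. -/
lemma support {M : ℕ} (H : Core (Γ := Γ) Φ I z lc e) (hT : Fintype.card T = M)
    (hM : (M : k) ≠ 0) (Δ : Subgroup Γ) (h1 : ∀ c, corr lc c ≠ 0 → c ∈ Δ) {h : Γ} (hh : h ∉ Δ) :
    (∀ c, corr lc c ≠ 0 ↔ c ∈ Δ) ∧ Δ.index = 2 ∧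
      ∀ c, (Φ (c • wt z lc)).order = if c ∈ Δ then -e else e := by
  have hW : wt z lc ≠ 0 := by
    intro h0
    have := H.coeff_wt 1
    rw [h0, smul_zero, map_zero, HahnSeries.coeff_zero, H.corr_one hT] at this
    exact hM this.symm
  have hd := dichotomy H H.adm_wt hW
  simp only [H.coeff_wt] at hd
  have hsub : (Finset.univ.filter fun g : Γ => ¬ corr lc g = 0) ⊆
      Finset.univ.filter fun g : Γ => g ∈ Δ := by
    intro g hg
    simp only [Finset.mem_filter, Finset.mem_univ, true_and] at hg ⊢
    exact h1 g hg
  have hcard := Finset.card_le_card hsub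
  have htot := Finset.card_filter_add_card_filter_not (s := (Finset.univ : Finset Γ))
    (fun g : Γ => corr lc g = 0)
  have hΔ : (Finset.univ.filter fun g : Γ => g ∈ Δ).card = Nat.card Δ := by
    rw [Nat.card_eq_fintype_card, Fintype.card_subtype]
  have hidx := Δ.card_mul_index
  have hi2 : 2 ≤ Δ.index := by
    have h0 : Δ.index ≠ 0 := Subgroup.FiniteIndex.index_ne_zero
    have h1 : Δ.index ≠ 1 := fun h => hh (by rw [Subgroup.index_eq_one.mp h]; trivial)
    omega
  rw [Finset.card_univ, ← Nat.card_eq_fintype_card] at htot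
  have hpos : 0 < Nat.card Δ := Nat.card_pos
  have hi : Δ.index = 2 := by
    by_contra hne
    have : 3 ≤ Δ.index := by omega
    nlinarith
  rw [hi] at hidx
  have heq : (Finset.univ.filter fun g : Γ => ¬ corr lc g = 0) =
      Finset.univ.filter fun g : Γ => g ∈ Δ :=
    Finset.eq_of_subset_of_card_le hsub (by omega)
  have hiff : ∀ c, corr lc c ≠ 0 ↔ c ∈ Δ := by
    intro c
    have := Finset.ext_iff.mp heq c
    simpa using this
  refine ⟨hiff, hi, ?_⟩
  have hle : ∀ c, (if c ∈ Δ then -e else e) ≤ (Φ (c • wt z lc)).order := by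
    intro c
    split_ifs with hc
    · exact (order_of_ne H.adm_wt H.e_pos c (by rw [H.coeff_wt]; exact (hiff c).mpr hc)).ge
    · exact order_of_eq H.adm_wt hW c (by
        rw [H.coeff_wt]; by_contra h0; exact hc ((hiff c).mp h0))
  have hsum : ∑ c : Γ, (if c ∈ Δ then -e else e) = 0 := by
    have ht2 := Finset.card_filter_add_card_filter_not (s := (Finset.univ : Finset Γ))
      (fun g : Γ => g ∈ Δ)
    rw [Finset.card_univ, ← Nat.card_eq_fintype_card] at ht2
    have : (Finset.univ.filter fun g : Γ => ¬ g ∈ Δ).card = Nat.card Δ := by omega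
    rw [Finset.sum_ite, Finset.sum_const, Finset.sum_const, this, hΔ]
    simp
  have hsum2 := H.deg _ H.adm_wt.1 hW
  have := (Finset.sum_eq_sum_iff_of_le (s := Finset.univ) fun c _ => hle c).mp
    (le_antisymm (Finset.sum_le_sum fun c _ => hle c) (hsum2.trans hsum.ge))
  intro c
  exact (this c (Finset.mem_univ c)).symm

/-- `wt` is an eigenvector of the index-two subgroup. -/
lemma smul_wt {M : ℕ} (H : Core (Γ := Γ) Φ I z lc e) (hT : Fintype.card T = M)
    (hM : (M : k) ≠ 0) (Δ : Subgroup Γ) (h1 : ∀ c, corr lc c ≠ 0 ↔ c ∈ Δ) (h2 : Δ.index = 2)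
    {τ : Γ} (hτ : τ ∈ Δ) : τ • wt z lc = (corr lc τ / M) • wt z lc := by
  classical
  rw [← sub_eq_zero]
  set U := τ • wt z lc - (corr lc τ / M) • wt z lc with hU
  by_contra hne
  have hadm : Adm Γ Φ I e U := (H.adm_wt.act H τ).sub (H.adm_wt.smul H _)
  have hco : ∀ g : Γ, (Φ (g • U)).coeff (-e) = corr lc (g * τ) - corr lc τ / M * corr lc g := by
    intro g
    rw [hU, smul_sub, map_sub, HahnSeries.coeff_sub, H.smul_comm', coeff_map_smul H.map_alg,
      H.coeff_wt, ← mul_smul, H.coeff_wt]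
  have hd := dichotomy H hadm hne
  simp only [hco] at hd
  have htot := Finset.card_filter_add_card_filter_not (s := (Finset.univ : Finset Γ))
    (fun g : Γ => corr lc (g * τ) - corr lc τ / M * corr lc g = 0)
  have hsub : (Finset.univ.filter fun g : Γ =>
      ¬ (corr lc (g * τ) - corr lc τ / M * corr lc g = 0)) ⊆
      (Finset.univ.filter fun g : Γ => g ∈ Δ).erase 1 := by
    intro g hg
    simp only [Finset.mem_filter, Finset.mem_univ, true_and, Finset.mem_erase] at hg ⊢
    refine ⟨?_, ?_⟩
    · rintro rfl
      apply hg
      rw [one_mul, H.corr_one hT, div_mul_cancel₀ _ hM, sub_self]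
    · by_contra hgΔ
      apply hg
      have e1 : corr lc g = 0 := by by_contra h0; exact hgΔ ((h1 g).mp h0)
      have e2 : corr lc (g * τ) = 0 := by
        by_contra h0
        exact hgΔ ((Δ.mul_mem_cancel_right hτ).mp ((h1 _).mp h0))
      rw [e1, e2]; ring
  have hcard := Finset.card_le_card hsub
  have hΔ : (Finset.univ.filter fun g : Γ => g ∈ Δ).card = Nat.card Δ := by
    rw [Nat.card_eq_fintype_card, Fintype.card_subtype]
  rw [Finset.card_erase_of_mem (by simp [Δ.one_mem]), hΔ] at hcard
  have hidx := Δ.card_mul_index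
  rw [Finset.card_univ, ← Nat.card_eq_fintype_card] at htot
  have hpos : 0 < Nat.card Δ := Nat.card_pos
  rw [h2] at hidx
  omega

lemma corr_mul {M : ℕ} (H : Core (Γ := Γ) Φ I z lc e) (hT : Fintype.card T = M)
    (hM : (M : k) ≠ 0) (Δ : Subgroup Γ) (h1 : ∀ c, corr lc c ≠ 0 ↔ c ∈ Δ) (h2 : Δ.index = 2)
    {τ : Γ} (hτ : τ ∈ Δ) (g : Γ) : corr lc (g * τ) = corr lc τ / M * corr lc g := by
  rw [← H.coeff_wt, mul_smul, H.smul_wt hT hM Δ h1 h2 hτ, H.smul_comm', coeff_map_smul H.map_alg,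
    H.coeff_wt]

/-- Elements of the index-two subgroup multiply `lc` by a scalar: averaging the translates of `lc`
over the subgroup against the multiplicative character `corr / M` gives an eigenvector, which is
`lc` up to a scalar since it is also one for `s`. -/
lemma lc_smul {M : ℕ} (H : Core (Γ := Γ) Φ I z lc e) (hT : Fintype.card T = M)
    (hM : (M : k) ≠ 0) (Δ : Subgroup Γ) (h1 : ∀ c, corr lc c ≠ 0 ↔ c ∈ Δ) (h2 : Δ.index = 2)
    (hchar : (Nat.card Δ : k) ≠ 0) {s : Γ} {ω : k} (hs : ∀ x, lc (s • x) = ω * lc x)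
    (hω : IsPrimitiveRoot ω M) {τ : Γ} (hτ : τ ∈ Δ) (x : T) :
    lc (τ • x) = corr lc τ / M * lc x := by
  classical
  set c : Γ → k := fun τ => corr lc τ / M with hc
  have hc0 : ∀ τ ∈ Δ, c τ ≠ 0 := fun τ hτ => div_ne_zero ((h1 τ).mpr hτ) hM
  have hcm : ∀ τ ∈ Δ, ∀ g, c (g * τ) = c τ * c g := by
    intro τ hτ g
    simp only [hc]
    rw [H.corr_mul hT hM Δ h1 h2 hτ g]; ring
  let E : T → k := fun x => ∑ τ : Δ, (c τ)⁻¹ * lc ((τ : Γ) • x)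
  have hE : ∀ ρ ∈ Δ, ∀ x, E (ρ • x) = c ρ * E x := by
    intro ρ hρ x
    simp only [E, Finset.mul_sum]
    refine Fintype.sum_equiv (Equiv.mulRight (⟨ρ, hρ⟩ : Δ)) _ _ fun τ => ?_
    simp only [Equiv.coe_mulRight, Subgroup.coe_mul, hcm ρ hρ, mul_smul]
    have := hc0 ρ hρ
    have := hc0 τ τ.2
    field_simp
  have hωs : c s = ω := by
    simp only [hc]; rw [H.corr_s hT hs, mul_div_assoc, div_self hM, mul_one]
  have hω0 : ω ≠ 0 := hω.ne_zero (by rintro rfl; simp at hM)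
  have hsΔ : s ∈ Δ := by
    rw [← h1, H.corr_s hT hs]
    exact mul_ne_zero hω0 hM
  have hEx : ∀ y, E y / lc y = E x / lc x := by
    intro y
    obtain ⟨j, rfl⟩ := exists_pow H.lc_ne hs hω hT x y
    induction j with
    | zero => simp
    | succ j ih =>
      rw [← ih, pow_succ', mul_smul, hE s hsΔ, hs, hωs, mul_div_mul_left _ _ hω0]
  have hsum : ∑ y, E y / lc y = Nat.card Δ * M := by
    simp only [E, Finset.sum_div]
    rw [Finset.sum_comm, Nat.card_eq_fintype_card]
    have : ∀ τ : Δ, ∑ y, (c τ)⁻¹ * lc ((τ : Γ) • y) / lc y = M := by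
      intro τ
      simp only [mul_div_assoc, ← Finset.mul_sum]
      change (c τ)⁻¹ * corr lc (τ : Γ) = M
      rw [show corr lc (τ : Γ) = c τ * M from (div_mul_cancel₀ _ hM).symm, ← mul_assoc,
        inv_mul_cancel₀ (hc0 τ τ.2), one_mul]
    simp [this]
  have hEl : ∀ y, E y = Nat.card Δ * lc y := by
    intro y
    simp only [hEx, Finset.sum_const, Finset.card_univ, hT, nsmul_eq_mul] at hsum
    have : E x / lc x = Nat.card Δ := by
      apply mul_left_cancel₀ hM; rw [hsum]; ring
    rw [← hEx y] at this
    rw [← this, div_mul_cancel₀ _ (H.lc_ne y)]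
  have := hE τ hτ x
  rw [hEl, hEl] at this
  apply mul_left_cancel₀ hchar
  rw [this]; ring

/-- If the correlation vanishes on a whole coset of a normal subgroup containing the cyclic
generator, every `z y` has the shape `u + κ / u`. -/
theorem shape {M : ℕ} (H : Core (Γ := Γ) Φ I z lc e) (hT : Fintype.card T = M)
    (hM : (M : k) ≠ 0) (hchar : ∀ j : ℕ, 0 < j → j ≤ Nat.card Γ → (j : k) ≠ 0)
    {s : Γ} {ω : k} (hs : ∀ x, lc (s • x) = ω * lc x)
    (hω : IsPrimitiveRoot ω M) (N : Subgroup Γ) [N.Normal] (hsN : s ∈ N) {h : Γ}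
    (hh : ∀ ν ∈ N, corr lc (h * ν) = 0) (y : T) :
    ∃ (u : Ω) (κ : k), κ ≠ 0 ∧ z y = u + algebraMap k Ω κ * u⁻¹ ∧ s • u = algebraMap k Ω ω * u ∧
      (Φ u).order = -e := by
  classical
  obtain ⟨h1, h2, h3⟩ := H.support hT hM (stab lc N)
    (fun c hc => mem_stab_of_corr H.lc_ne hs hω hT hsN hc) (notMem_stab H.lc_ne hT hM hh)
  have hhΔ : h ∉ stab lc N := notMem_stab H.lc_ne hT hM hh
  generalize stab lc N = Δ at h1 h2 h3 hhΔ
  have hcΔ : (Nat.card Δ : k) ≠ 0 :=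
    hchar _ Nat.card_pos (Nat.le_of_dvd Nat.card_pos (Subgroup.card_subgroup_dvd_card Δ))
  have hlc := fun {τ : Γ} (hτ : τ ∈ Δ) x => H.lc_smul hT hM Δ h1 h2 hcΔ hs hω hτ x
  have hzero : ∀ {c}, c ∉ Δ → corr lc c = 0 := fun {c} hc => by
    by_contra h0; exact hc ((h1 c).mp h0)
  set W := wt z lc with hW
  have hW0 : W ≠ 0 := by
    intro h0
    have := h3 1
    rw [h0, smul_zero, map_zero, HahnSeries.order_zero, if_pos Δ.one_mem] at this
    have := H.e_pos
    omega
  set W' := h⁻¹ • W with hW'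
  have hW'0 : W' ≠ 0 := (smul_ne_zero_iff_ne _).mpr hW0
  have hswap : ∀ g, g * h⁻¹ ∈ Δ ↔ ¬ g ∈ Δ := by
    intro g
    rw [Subgroup.mul_mem_iff_of_index_two h2, inv_mem_iff]
    tauto
  -- the decomposition of `z y`
  have hz : z y = (lc y / M) • W + (lc (h • y) / M) • W' := by
    rw [← sub_eq_zero]
    set U := z y - ((lc y / M) • W + (lc (h • y) / M) • W') with hU
    have hadm : Adm Γ Φ I e U := by
      have := ((H.adm_z y).sub (H.adm_wt.smul H (lc y / M))).sub
        ((H.adm_wt.act H h⁻¹).smul H (lc (h • y) / M))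
      rwa [sub_sub] at this
    have hco : ∀ g : Γ, (Φ (g • U)).coeff (-e) =
        lc (g • y) - (lc y / M * corr lc g + lc (h • y) / M * corr lc (g * h⁻¹)) := by
      intro g
      rw [hU, smul_sub, smul_add, map_sub, map_add, HahnSeries.coeff_sub, HahnSeries.coeff_add,
        H.smul_comm', H.smul_comm', coeff_map_smul H.map_alg, coeff_map_smul H.map_alg,
        H.coeff_wt, hW', ← mul_smul, H.coeff_wt, H.z_smul, H.z_lc]
    have hco0 : ∀ g : Γ, (Φ (g • U)).coeff (-e) = 0 := by
      intro g
      rw [hco]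
      by_cases hg : g ∈ Δ
      · rw [hzero (c := g * h⁻¹) (by rw [hswap]; simpa using hg), hlc hg]
        ring
      · have hg' := (hswap g).mpr hg
        have : g • y = (g * h⁻¹) • (h • y) := by rw [mul_smul, inv_smul_smul]
        rw [hzero hg, this, hlc hg']
        ring
    have he := H.e_pos
    refine eq_zero_of_order H hadm.1 (fun g j hj => ?_) 1 (hadm.2 1 0 he (by omega))
    by_cases hj' : j = -e
    · rw [hj', hco0]
    · exact (hadm.2 g j (by omega) hj')
  -- the product `W * W'` is constant
  have hWW : ∃ κ0 : k, κ0 ≠ 0 ∧ W * W' = algebraMap k Ω κ0 := by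
    have hord : ∀ g : Γ, (Φ (g • (W * W'))).order = 0 := by
      intro g
      have n1 : Φ (g • W) ≠ 0 := smul_ne (Φ := Φ) g hW0
      have n2 : Φ (g • W') ≠ 0 := smul_ne (Φ := Φ) g hW'0
      rw [smul_mul', map_mul, HahnSeries.order_mul n1 n2, h3, hW', ← mul_smul, h3]
      by_cases hg : g ∈ Δ
      · rw [if_pos hg, if_neg (by rw [hswap]; simpa using hg)]; ring
      · rw [if_neg hg, if_pos ((hswap g).mpr hg)]; ring
    have hP0 : W * W' ≠ 0 := mul_ne_zero hW0 hW'0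
    refine ⟨(Φ (W * W')).coeff 0, ?_, ?_⟩
    · have h0 := hord 1
      rw [one_smul] at h0
      rw [← h0]
      exact HahnSeries.coeff_order_eq_zero.not.mpr ((map_ne_zero_iff _ Φ.injective).mpr hP0)
    · rw [← sub_eq_zero]
      have hI : W * W' - algebraMap k Ω ((Φ (W * W')).coeff 0) ∈ I :=
        I.sub_mem (I.mul_mem H.adm_wt.1 (H.smul_I _ _ H.adm_wt.1)) (I.algebraMap_mem _)
      refine eq_zero_of_order H hI (fun g j hj => ?_) 1 ?_
      · rw [smul_sub, H.smul_alg, map_sub, HahnSeries.coeff_sub, H.map_alg,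
          HahnSeries.coeff_eq_zero_of_lt_order (by rw [hord]; exact hj), HahnSeries.C_apply,
          HahnSeries.coeff_single_of_ne (by omega), sub_zero]
      · rw [one_smul, map_sub, HahnSeries.coeff_sub, H.map_alg, HahnSeries.C_apply,
          HahnSeries.coeff_single_same, sub_self]
  obtain ⟨κ0, hκ0, hκ⟩ := hWW
  have hly := H.lc_ne y
  have hlhy := H.lc_ne (h • y)
  have hsΔ : s ∈ Δ := by
    rw [← h1, H.corr_s hT hs]
    exact mul_ne_zero (hω.ne_zero (by rintro rfl; simp at hM)) hM
  have hm : algebraMap k Ω (lc y / M) ≠ 0 := by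
    rw [map_ne_zero_iff _ (algebraMap k Ω).injective]
    exact div_ne_zero hly hM
  refine ⟨(lc y / M) • W, lc y / M * (lc (h • y) / M) * κ0,
    mul_ne_zero (mul_ne_zero (div_ne_zero hly hM) (div_ne_zero hlhy hM)) hκ0, ?_, ?_, ?_⟩
  · rw [hz, map_mul, map_mul, ← hκ, Algebra.smul_def, Algebra.smul_def]
    field_simp
  · rw [H.smul_comm', H.smul_wt hT hM Δ h1 h2 hsΔ, H.corr_s hT hs, mul_div_assoc, div_self hM,
      mul_one, Algebra.smul_def ω, Algebra.smul_def, Algebra.smul_def]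
    ring
  · rw [Algebra.smul_def, map_mul, H.map_alg, HahnSeries.order_mul, HahnSeries.order_C, zero_add]
    · have := h3 1
      rwa [one_smul, if_pos Δ.one_mem] at this
    · rw [← H.map_alg]; exact (map_ne_zero_iff _ Φ.injective).mpr hm
    · exact (map_ne_zero_iff _ Φ.injective).mpr hW0

/-- A function with a pole is transcendental over the constants. -/
lemma transcendental_of_order {Φ : Ω →+* LaurentSeries k}
    (hC : ∀ c, Φ (algebraMap k Ω c) = HahnSeries.C c) {u : Ω} (hu : (Φ u).order < 0) :
    Transcendental k u := by
  rw [transcendental_iff]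
  intro p hp
  by_contra hne
  have hu0 : Φ u ≠ 0 := by
    intro h; rw [h, HahnSeries.order_zero] at hu; omega
  have h1 : ∀ i : ℕ, (Φ u ^ i).order = (i : ℤ) * (Φ u).order := by
    intro i
    rw [HahnSeries.order_pow, nsmul_eq_mul]
  have h2 := congrArg (fun w => (Φ w).coeff ((p.natDegree : ℤ) * (Φ u).order)) hp
  simp only [map_zero, HahnSeries.coeff_zero] at h2
  rw [aeval_eq_sum_range, map_sum, HahnSeries.coeff_sum, Finset.sum_range_succ,
    Finset.sum_eq_zero, zero_add, coeff_map_smul hC, map_pow, ← h1] at h2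
  · have h3 : (Φ u ^ p.natDegree).coeff ((Φ u ^ p.natDegree).order) ≠ 0 :=
      HahnSeries.coeff_order_eq_zero.not.mpr (pow_ne_zero _ hu0)
    exact (mul_ne_zero (leadingCoeff_ne_zero.mpr hne) h3) h2
  · intro i hi
    have hi := Finset.mem_range.mp hi
    rw [coeff_map_smul hC, map_pow, HahnSeries.coeff_eq_zero_of_lt_order, mul_zero]
    rw [h1]
    have : (i : ℤ) < p.natDegree := by exact_mod_cast hi
    nlinarith

end Core

/-! ### The tower of preimages and its place at infinity -/

/-- A Galois extension `Ω` of the rational function field `k(t)`, with group `G`, that contains an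
`L`-fold preimage `y` of `t` under `g`. The map `Φ` expands elements of `Ω` at a place at infinity
where `y` has a simple pole with leading coefficient `1`, `σ` is the generator of tame inertia,
multiplying the uniformiser by a power of the primitive `d ^ L`-th root of unity `ζ`, and `I` is
the ring of functions integral over `k[t]`. The field `k(t)` itself is not mentioned: `fix` says
that `t = g^L (y)` is invariant, and `deg` is the product formula for elements of `I`. -/
structure InftyData {k Ω G : Type*} [Field k] [Field Ω] [Algebra k Ω] [Group G] [Fintype G]
    [MulSemiringAction G Ω] (d L : ℕ) (g : k[X]) (Φ : Ω →+* LaurentSeries k)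
    (I : Subalgebra k Ω) (σ : G) (ζ : k) (y : Ω) : Prop where
  monic : g.Monic
  natDegree : g.natDegree = d
  map_alg : ∀ c, Φ (algebraMap k Ω c) = HahnSeries.C c
  smul_alg : ∀ (h : G) (c : k), h • algebraMap k Ω c = algebraMap k Ω c
  smul_I : ∀ (h : G), ∀ u ∈ I, h • u ∈ I
  deg : ∀ u ∈ I, u ≠ 0 → ∑ h : G, (Φ (h • u)).order ≤ 0
  prim : IsPrimitiveRoot ζ (d ^ L)
  coeff_σ : ∀ u j, (Φ (σ • u)).coeff j = ζ ^ (-j) * (Φ u).coeff j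
  y_mem : y ∈ I
  y_order : (Φ y).order = -1
  y_lc : (Φ y).leadingCoeff = 1
  fix : ∀ h : G, h • (fun x => aeval x g)^[L] y = (fun x => aeval x g)^[L] y

namespace InftyData

variable {k Ω G : Type*} [Field k] [Field Ω] [Algebra k Ω] [Group G] [Fintype G]
    [MulSemiringAction G Ω] {d L : ℕ} {g : k[X]} {Φ : Ω →+* LaurentSeries k}
    {I : Subalgebra k Ω} {σ : G} {ζ : k} {y : Ω}

lemma ζ_ne (D : InftyData d L g Φ I σ ζ y) (hd : 2 ≤ d) : ζ ≠ 0 :=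
  D.prim.ne_zero (pow_ne_zero _ (by omega))

lemma coeff_σ_pow (D : InftyData d L g Φ I σ ζ y) (hd : 2 ≤ d) (i : ℕ) (u : Ω) (j : ℤ) :
    (Φ (σ ^ i • u)).coeff j = ζ ^ (-(i * j)) * (Φ u).coeff j := by
  induction i with
  | zero => simp
  | succ i ih =>
    rw [pow_succ', mul_smul, D.coeff_σ, ih, ← mul_assoc, ← zpow_add₀ (D.ζ_ne hd)]
    congr 2; push_cast; ring

lemma order_σ_pow (D : InftyData d L g Φ I σ ζ y) (hd : 2 ≤ d) (i : ℕ) (u : Ω) :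
    (Φ (σ ^ i • u)).order = (Φ u).order := by
  by_cases hu : u = 0
  · simp [hu]
  have hζ : ∀ n : ℤ, ζ ^ n ≠ 0 := fun n => zpow_ne_zero _ (D.ζ_ne hd)
  have h1 : Φ u ≠ 0 := (map_ne_zero_iff _ Φ.injective).mpr hu
  have h2 : Φ (σ ^ i • u) ≠ 0 := Core.smul_ne (Φ := Φ) _ hu
  apply le_antisymm
  · apply HahnSeries.order_le_of_coeff_ne_zero
    rw [D.coeff_σ_pow hd]
    exact mul_ne_zero (hζ _) (HahnSeries.coeff_order_eq_zero.not.mpr h1)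
  · apply HahnSeries.order_le_of_coeff_ne_zero
    have := HahnSeries.coeff_order_eq_zero.not.mpr h2
    rw [D.coeff_σ_pow hd] at this
    exact right_ne_zero_of_mul this

lemma lc_σ_pow (D : InftyData d L g Φ I σ ζ y) (hd : 2 ≤ d) (i : ℕ) (u : Ω) :
    (Φ (σ ^ i • u)).leadingCoeff = ζ ^ (-(i * (Φ u).order)) * (Φ u).leadingCoeff := by
  rw [HahnSeries.leadingCoeff_eq, D.order_σ_pow hd, D.coeff_σ_pow hd, HahnSeries.leadingCoeff_eq]

lemma leadingCoeff_pow' (a : LaurentSeries k) (i : ℕ) :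
    (a ^ i).leadingCoeff = a.leadingCoeff ^ i := by
  induction i with
  | zero => simp [HahnSeries.leadingCoeff_one]
  | succ i ih => rw [pow_succ, HahnSeries.leadingCoeff_mul, ih, pow_succ]

/-- At a pole, `g` acts on the order and on the leading coefficient as `x ↦ x ^ d` does. -/
lemma order_aeval (D : InftyData d L g Φ I σ ζ y) (hd : 2 ≤ d) {u : Ω} (hu : (Φ u).order < 0) :
    (Φ (aeval u g)).order = d * (Φ u).order ∧
      (Φ (aeval u g)).leadingCoeff = (Φ u).leadingCoeff ^ d := by
  have hu0 : Φ u ≠ 0 := by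
    intro h; rw [h, HahnSeries.order_zero] at hu; omega
  have hp : ∀ i : ℕ, (Φ u ^ i).order = i * (Φ u).order := by
    intro i; rw [HahnSeries.order_pow, nsmul_eq_mul]
  have hcoef : ∀ j : ℤ, j ≤ d * (Φ u).order → (Φ (aeval u g)).coeff j = (Φ u ^ d).coeff j := by
    intro j hj
    rw [aeval_eq_sum_range, map_sum, HahnSeries.coeff_sum, Finset.sum_range_succ,
      Finset.sum_eq_zero, zero_add, Core.coeff_map_smul D.map_alg, D.monic.coeff_natDegree,
      one_mul, D.natDegree, map_pow]
    intro i hi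
    have hi := Finset.mem_range.mp hi
    rw [D.natDegree] at hi
    rw [Core.coeff_map_smul D.map_alg, map_pow, HahnSeries.coeff_eq_zero_of_lt_order, mul_zero]
    rw [hp]
    have : (i : ℤ) < d := by exact_mod_cast hi
    nlinarith
  have hne : (Φ (aeval u g)).coeff (d * (Φ u).order) ≠ 0 := by
    rw [hcoef _ le_rfl, ← hp]
    exact HahnSeries.coeff_order_eq_zero.not.mpr (pow_ne_zero _ hu0)
  have hord : (Φ (aeval u g)).order = d * (Φ u).order := by
    apply le_antisymm (HahnSeries.order_le_of_coeff_ne_zero hne)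
    by_contra hlt
    push Not at hlt
    have h1 := hcoef _ hlt.le
    rw [HahnSeries.coeff_eq_zero_of_lt_order (x := Φ u ^ d) (by rw [hp]; exact hlt)] at h1
    rw [HahnSeries.coeff_order_eq_zero] at h1
    rw [h1] at hne
    simp at hne
  refine ⟨hord, ?_⟩
  rw [HahnSeries.leadingCoeff_eq, hord, hcoef _ le_rfl, ← hp, ← HahnSeries.leadingCoeff_eq,
    leadingCoeff_pow']

/-- The map `x ↦ g (x)` on `Ω`. -/
noncomputable def dyn (g : k[X]) (x : Ω) : Ω := aeval x g

lemma dyn_smul (D : InftyData d L g Φ I σ ζ y) (h : G) (x : Ω) :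
    dyn g (h • x) = h • dyn g x := by
  simp only [dyn, aeval_eq_sum_range, Finset.smul_sum, Algebra.smul_def, smul_mul', D.smul_alg,
    smul_pow']

lemma order_iter (D : InftyData d L g Φ I σ ζ y) (hd : 2 ≤ d) (n : ℕ) :
    (Φ ((dyn g)^[n] y)).order = -(d ^ n : ℤ) ∧ (Φ ((dyn g)^[n] y)).leadingCoeff = 1 := by
  induction n with
  | zero => simp [D.y_order, D.y_lc]
  | succ n ih =>
    rw [Function.iterate_succ_apply']
    have : (0 : ℤ) < d ^ n := by positivity
    have := D.order_aeval hd (u := (dyn g)^[n] y) (by rw [ih.1]; omega)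
    rw [ih.1, ih.2, one_pow] at this
    refine ⟨?_, this.2⟩
    rw [dyn, this.1]; ring

lemma iter_mem_I (D : InftyData d L g Φ I σ ζ y) (n : ℕ) : (dyn g)^[n] y ∈ I := by
  induction n with
  | zero => exact D.y_mem
  | succ n ih =>
    rw [Function.iterate_succ_apply', dyn, aeval_eq_sum_range]
    exact I.sum_mem fun i _ => I.smul_mem (I.pow_mem ih i) _

/-- Level `l` of the preimage tree of `t = g^L (y)`: the solutions of `g^l (x) = t`, listed as the
`σ`-orbit of `g^(L - l) (y)`. -/
noncomputable def lev [DecidableEq Ω] (d L : ℕ) (g : k[X]) (σ : G) (y : Ω) (l : ℕ) : Finset Ω :=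
  (Finset.range (d ^ l)).image fun i => σ ^ i • (dyn g)^[L - l] y

variable [DecidableEq Ω]

lemma iter_smul (D : InftyData d L g Φ I σ ζ y) (h : G) (n : ℕ) (x : Ω) :
    (dyn g)^[n] (h • x) = h • (dyn g)^[n] x := by
  induction n generalizing x with
  | zero => rfl
  | succ n ih => rw [Function.iterate_succ_apply, D.dyn_smul, ih, Function.iterate_succ_apply]

lemma σ_pow_inj (D : InftyData d L g Φ I σ ζ y) (hd : 2 ≤ d) {l : ℕ} (hl : l ≤ L) {i : ℕ}
    {x : Ω} (hx : (Φ x).order = -(d ^ (L - l) : ℤ))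
    (h : (Φ (σ ^ i • x)).leadingCoeff = (Φ x).leadingCoeff) : d ^ l ∣ i := by
  rw [D.lc_σ_pow hd, hx] at h
  have hx0 : (Φ x).leadingCoeff ≠ 0 := by
    rw [HahnSeries.leadingCoeff_ne_zero]
    intro h0
    rw [h0, HahnSeries.order_zero] at hx
    have : (0 : ℤ) < d ^ (L - l) := by positivity
    omega
  have h1 : ζ ^ (i * d ^ (L - l)) = 1 := by
    have := mul_right_cancel₀ hx0 (h.trans (one_mul _).symm)
    rw [← this, ← zpow_natCast]; congr 1; push_cast; ring
  have h2 := D.prim.dvd_of_pow_eq_one _ h1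
  have h3 : d ^ L = d ^ l * d ^ (L - l) := by rw [← pow_add]; congr 1; omega
  rw [h3] at h2
  exact Nat.dvd_of_mul_dvd_mul_right (by positivity) h2

/-- The `σ`-orbit exhausts the roots of `g^l (x) = t`, as it already has `d ^ l` elements. -/
lemma mem_lev (D : InftyData d L g Φ I σ ζ y) (hd : 2 ≤ d) {l : ℕ} (hl : l ≤ L) {x : Ω} :
    x ∈ lev d L g σ y l ↔ (dyn g)^[l] x = (dyn g)^[L] y := by
  set v := (dyn g)^[L - l] y with hv
  have hvt : (dyn g)^[l] v = (dyn g)^[L] y := by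
    rw [hv, ← Function.iterate_add_apply]; congr 2; omega
  have hforw : ∀ i, (dyn g)^[l] (σ ^ i • v) = (dyn g)^[L] y := by
    intro i; rw [D.iter_smul, hvt]; exact D.fix _
  set q : Polynomial Ω := (g.map (algebraMap k Ω)).comp^[l] X - C ((dyn g)^[L] y) with hq
  have hqd : q.natDegree = d ^ l := by
    rw [hq, natDegree_sub_C, natDegree_iterate_comp, D.monic.natDegree_map, D.natDegree,
      natDegree_X, mul_one]
  have hq0 : q ≠ 0 := by
    intro h0
    rw [h0, natDegree_zero] at hqd
    exact (pow_ne_zero _ (by omega)) hqd.symm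
  have hroot : ∀ w, (dyn g)^[l] w = (dyn g)^[L] y ↔ w ∈ q.roots.toFinset := by
    intro w
    have hdyn : (dyn g : Ω → Ω) = fun x => (g.map (algebraMap k Ω)).eval x := by
      ext x; rw [dyn, eval_map_algebraMap]
    rw [Multiset.mem_toFinset, mem_roots hq0, IsRoot.def, hq, eval_sub, eval_C,
      iterate_comp_eval, eval_X, sub_eq_zero, hdyn]
  have hsub : lev d L g σ y l ⊆ q.roots.toFinset := by
    intro w hw
    simp only [lev, Finset.mem_image] at hw
    obtain ⟨i, -, rfl⟩ := hw
    exact (hroot _).mp (hforw i)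
  have hcard : (lev d L g σ y l).card = d ^ l := by
    rw [lev, Finset.card_image_of_injOn, Finset.card_range]
    have key : ∀ i < d ^ l, ∀ j < d ^ l, i ≤ j → σ ^ i • v = σ ^ j • v → i = j := by
      intro i hi j hj hij h
      have h1 : σ ^ (j - i) • v = v := by
        have e : j = i + (j - i) := by omega
        rw [e, pow_add, mul_smul] at h
        exact (MulAction.injective _ h).symm
      have h2 := D.σ_pow_inj hd hl (i := j - i) (x := v) (D.order_iter hd _).1 (by rw [h1])
      have := Nat.eq_zero_of_dvd_of_lt h2 (by omega)
      omega
    intro i hi j hj h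
    simp only [Finset.coe_range, Set.mem_Iio] at hi hj
    rcases le_total i j with hij | hij
    · exact key i hi j hj hij h
    · exact (key j hj i hi hij h.symm).symm
  have heq : lev d L g σ y l = q.roots.toFinset := by
    apply Finset.eq_of_subset_of_card_le hsub
    rw [hcard, ← hqd]
    exact (Multiset.toFinset_card_le _).trans (card_roots' q)
  rw [heq, hroot]

lemma exists_of_mem (_ : InftyData d L g Φ I σ ζ y) {l : ℕ} {x : Ω}
    (hx : x ∈ lev d L g σ y l) : ∃ i < d ^ l, x = σ ^ i • (dyn g)^[L - l] y := by
  simp only [lev, Finset.mem_image, Finset.mem_range] at hx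
  obtain ⟨i, hi, h⟩ := hx
  exact ⟨i, hi, h.symm⟩

lemma order_lev (D : InftyData d L g Φ I σ ζ y) (hd : 2 ≤ d) {l : ℕ} {x : Ω}
    (hx : x ∈ lev d L g σ y l) : (Φ x).order = -(d ^ (L - l) : ℤ) := by
  obtain ⟨i, -, rfl⟩ := D.exists_of_mem hx
  rw [D.order_σ_pow hd, (D.order_iter hd _).1]

lemma fix_base (D : InftyData d L g Φ I σ ζ y) (hd : 2 ≤ d) {l : ℕ} (hl : l ≤ L) :
    σ ^ d ^ l • (dyn g)^[L - l] y = (dyn g)^[L - l] y := by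
  have h1 : σ ^ d ^ l • (dyn g)^[L - l] y ∈ lev d L g σ y l := by
    rw [D.mem_lev hd hl, D.iter_smul, ← Function.iterate_add_apply, show l + (L - l) = L by omega]
    exact D.fix _
  obtain ⟨i, hi, h⟩ := D.exists_of_mem h1
  have h2 : σ ^ (d ^ l - i) • (dyn g)^[L - l] y = (dyn g)^[L - l] y := by
    have e : d ^ l = i + (d ^ l - i) := by omega
    rw [e, pow_add, mul_smul] at h
    exact MulAction.injective _ h
  have h3 := D.σ_pow_inj hd hl (i := d ^ l - i) (x := (dyn g)^[L - l] y)
    (D.order_iter hd _).1 (by rw [h2])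
  have h4 : i = 0 := by
    by_contra h0
    have := Nat.le_of_dvd (by omega) h3
    omega
  rw [h, h4, pow_zero, one_smul]

lemma odometer (D : InftyData d L g Φ I σ ζ y) (hd : 2 ≤ d) :
    Odometer d L (lev d L g σ y) (dyn g) σ where
  smul_mem l hl h x hx := by
    rw [D.mem_lev hd hl] at hx ⊢
    rw [D.iter_smul, hx]; exact D.fix _
  map_mem l hl x hx := by
    rw [D.mem_lev hd hl, Function.iterate_succ_apply] at hx
    exact (D.mem_lev hd (by omega)).mpr hx
  map_smul := D.dyn_smul
  nonempty l hl := ⟨(dyn g)^[L - l] y, (D.mem_lev hd hl).mpr (by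
    rw [← Function.iterate_add_apply]; congr 2; omega)⟩
  trans l hl x hx x' hx' := by
    obtain ⟨i, hi, rfl⟩ := D.exists_of_mem hx
    obtain ⟨j, hj, rfl⟩ := D.exists_of_mem hx'
    refine ⟨j + (d ^ l - i), ?_⟩
    rw [← mul_smul, ← pow_add, show j + (d ^ l - i) + i = j + d ^ l by omega, pow_add, mul_smul,
      D.fix_base hd hl]
  fix l hl x hx i := by
    constructor
    · intro h
      exact D.σ_pow_inj hd hl (D.order_lev hd hx) (by rw [h])
    · rintro ⟨m, rfl⟩
      obtain ⟨j, -, rfl⟩ := D.exists_of_mem hx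
      rw [← mul_smul, ← pow_add, add_comm, pow_add, mul_smul]
      congr 1
      induction m with
      | zero => simp
      | succ m ih => rw [Nat.mul_succ, pow_add, mul_smul, D.fix_base hd hl, ih]

end InftyData

namespace InftyData

variable {k Ω G : Type*} [Field k] [Field Ω] [Algebra k Ω] [Group G] [Fintype G]
    [MulSemiringAction G Ω] {d L : ℕ} {g : k[X]} {Φ : Ω →+* LaurentSeries k}
    {I : Subalgebra k Ω} {σ : G} {ζ : k} {y : Ω} [DecidableEq Ω]

lemma card_fibre (D : InftyData d L g Φ I σ ζ y) (hd : 2 ≤ d) {n m : ℕ} (hnm : n + m ≤ L)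
    {x : Ω} (hx : x ∈ lev d L g σ y (n + m)) :
    ((lev d L g σ y (n + m)).filter (fun x' => (dyn g)^[m] x' = (dyn g)^[m] x)).card = d ^ m := by
  have O := D.odometer hd
  have hn : (dyn g)^[m] x ∈ lev d L g σ y n := O.iter_mem n m hnm x hx
  have : (lev d L g σ y (n + m)).filter (fun x' => (dyn g)^[m] x' = (dyn g)^[m] x) =
      (Finset.range (d ^ m)).image fun j => σ ^ (d ^ n * j) • x := by
    ext z
    simp only [Finset.mem_filter, Finset.mem_image, Finset.mem_range]
    constructor
    · rintro ⟨h1, h2⟩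
      obtain ⟨j, hj, h⟩ := O.exists_unique_shift' hd hnm hx h1 h2.symm
      exact ⟨j, hj, (h j hj).mpr rfl⟩
    · rintro ⟨j, hj, rfl⟩
      refine ⟨O.smul_mem _ hnm _ _ hx, ?_⟩
      rw [O.iter_smul, O.pow_fix (by omega) le_rfl j hn]
  rw [this, Finset.card_image_of_injOn, Finset.card_range]
  intro i hi j hj h
  simp only [Finset.coe_range, Set.mem_Iio] at hi hj
  have h1 : σ ^ (d ^ n * j) • x ∈ lev d L g σ y (n + m) := O.smul_mem _ hnm _ _ hx
  have h2 : (dyn g)^[m] x = (dyn g)^[m] (σ ^ (d ^ n * j) • x) := by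
    rw [O.iter_smul, O.pow_fix (by omega) le_rfl j hn]
  obtain ⟨j', -, hj''⟩ := O.exists_unique_shift' hd hnm hx h1 h2
  rw [(hj'' i hi).mp h, (hj'' j hj).mp rfl]

/-- The degree inequality descends to the stabiliser of a point of the tower, because `σ`
preserves orders. -/
lemma deg_stabilizer (D : InftyData d L g Φ I σ ζ y) (hd : 2 ≤ d) {n : ℕ} (hn : n ≤ L) {v : Ω}
    (hv : v ∈ lev d L g σ y n) [Fintype (MulAction.stabilizer G v)] {u : Ω} (hu : u ∈ I)
    (hu0 : u ≠ 0) : ∑ h : MulAction.stabilizer G v, (Φ (h • u)).order ≤ 0 := by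
  have O := D.odometer hd
  have hdn : 0 < d ^ n := by positivity
  let F : Fin (d ^ n) × MulAction.stabilizer G v → G := fun p => σ ^ (p.1 : ℕ) * (p.2 : G)
  have hF : Function.Bijective F := by
    constructor
    · rintro ⟨i, a⟩ ⟨j, b⟩ h
      have ha : (a : G) • v = v := a.2
      have hb : (b : G) • v = v := b.2
      have h1 : σ ^ (i : ℕ) • v = σ ^ (j : ℕ) • v := by
        have := congrArg (fun c => c • v) h
        simpa only [F, mul_smul, ha, hb] using this
      have key : ∀ i j : Fin (d ^ n), i ≤ j → σ ^ (i : ℕ) • v = σ ^ (j : ℕ) • v → i = j := by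
        intro i j hij h
        have e : (j : ℕ) = i + (j - i) := by omega
        rw [e, pow_add, mul_smul] at h
        have h2 := (O.fix n hn v hv _).mp (MulAction.injective _ h).symm
        have := Nat.eq_zero_of_dvd_of_lt h2 (by omega)
        omega
      have hij : i = j := by
        rcases le_total i j with hij | hij
        · exact key i j hij h1
        · exact (key j i hij h1.symm).symm
      subst hij
      have : (a : G) = b := mul_left_cancel h
      rw [Subtype.ext this]
    · intro h
      obtain ⟨i, hi⟩ := O.trans n hn v hv (h • v) (O.smul_mem n hn h v hv)
      have hi' : σ ^ (i % d ^ n) • v = h • v := by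
        rw [← hi]
        conv_rhs => rw [← Nat.mod_add_div i (d ^ n), pow_add, mul_smul, O.pow_fix hn le_rfl _ hv]
      refine ⟨(⟨i % d ^ n, Nat.mod_lt _ hdn⟩, ⟨(σ ^ (i % d ^ n))⁻¹ * h, ?_⟩), ?_⟩
      · rw [MulAction.mem_stabilizer_iff, mul_smul, ← hi', inv_smul_smul]
      · simp [F]
  have h1 := D.deg u hu hu0
  rw [← Fintype.sum_bijective F hF (fun p => (Φ (p.2 • u)).order) _ (fun p => by
    simp only [F, mul_smul]; rw [D.order_σ_pow hd]; rfl), Fintype.sum_prod_type] at h1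
  simp only [Finset.sum_const, Finset.card_univ, Fintype.card_fin, nsmul_eq_mul] at h1
  have h2 : (0 : ℤ) < (d ^ n : ℕ) := by exact_mod_cast hdn
  by_contra h3
  push Not at h3
  have := mul_pos h2 h3
  omega

/-- If all the character sums over one vertex vanished on a coset, then some `y` would be of the form
`c + u + κ / u` on three consecutive levels, and `g` would be a Dickson polynomial. -/
lemma mixing (D : InftyData d L g Φ I σ ζ y) (hd : 2 ≤ d) (hg : ¬ IsDickson g d)
    (hchar : ∀ j : ℕ, 0 < j → j ≤ Nat.card G → (j : k) ≠ 0) (hdk : (d : k) ≠ 0) :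
    Odometer.Mixing d L (lev d L g σ y) (dyn g) σ (fun x => (Φ x).leadingCoeff)
      (fun l => ζ ^ d ^ (L - l)) where
  lc_ne l hl x hx := by
    rw [HahnSeries.leadingCoeff_ne_zero]
    intro h0
    have := D.order_lev hd hx
    rw [h0, HahnSeries.order_zero] at this
    have h1 : (0 : ℤ) < d ^ (L - l) := by positivity
    omega
  lc_smul l hl x hx := by
    have := D.lc_σ_pow hd 1 x
    rw [pow_one, D.order_lev hd hx] at this
    rw [this, ← zpow_natCast]
    congr 2
    push_cast; ring
  w_ne l hl h := by
    rw [← pow_mul, ← pow_add] at h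
    have := D.prim.dvd_of_pow_eq_one _ h
    have h2 := Nat.le_of_dvd (by positivity) this
    have h3 := (Nat.pow_le_pow_iff_right (by omega : 1 < d)).mp h2
    omega
  nonvanish n m hm hnm v hv h hhv := by
    classical
    by_contra hcon
    push Not at hcon
    apply hg
    have O := D.odometer hd
    have hn : n ≤ L := by omega
    set X := lev d L g σ y with hX
    let Γ := MulAction.stabilizer G v
    let T := {x : Ω // x ∈ (X (n + m)).filter (fun x => (dyn g)^[m] x = v)}
    have hTmem : ∀ x : T, x.1 ∈ X (n + m) := fun x => (Finset.mem_filter.mp x.2).1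
    let _ : MulAction Γ T :=
      { smul := fun c x => ⟨c.1 • x.1, by
          obtain ⟨h1, h2⟩ := Finset.mem_filter.mp x.2
          refine Finset.mem_filter.mpr ⟨O.smul_mem _ hnm _ _ h1, ?_⟩
          rw [O.iter_smul, h2]; exact c.2⟩
        one_smul := fun x => Subtype.ext (one_smul G x.1)
        mul_smul := fun a b x => Subtype.ext (mul_smul a.1 b.1 x.1) }
    have hsmul : ∀ (c : Γ) (x : T), ((c • x : T) : Ω) = (c : G) • (x : Ω) := fun _ _ => rfl
    -- a base point of the fibre
    obtain ⟨x0, hx0⟩ : ∃ x0 ∈ X (n + m), (dyn g)^[m] x0 = v := by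
      obtain ⟨x, hx⟩ := O.nonempty (n + m) hnm
      obtain ⟨i, hi⟩ := O.trans n hn _ (O.iter_mem n m hnm x hx) v hv
      exact ⟨σ ^ i • x, O.smul_mem _ hnm _ _ hx, by rw [O.iter_smul, hi]⟩
    have hcardT : Fintype.card T = d ^ m := by
      rw [Fintype.card_coe, ← hx0.2]
      exact D.card_fibre hd hnm hx0.1
    set c0 := (Φ ((dyn g)^[L - (n + m)] y)).coeff 0 with hc0
    obtain ⟨e, he⟩ : ∃ e : ℤ, e = ((d ^ (L - (n + m)) : ℕ) : ℤ) := ⟨_, rfl⟩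
    have he0 : 0 < e := by rw [he]; positivity
    have hord : ∀ x ∈ X (n + m), (Φ x).order = -e := fun x hx => by
      rw [D.order_lev hd hx, he]; push_cast; ring
    have hcoef0 : ∀ x ∈ X (n + m), (Φ x).coeff 0 = c0 := by
      intro x hx
      obtain ⟨i, -, rfl⟩ := D.exists_of_mem hx
      rw [D.coeff_σ_pow hd]; simp [hc0]
    have hgap : ∀ x ∈ X (n + m), ∀ j, (Φ x).coeff j ≠ 0 → e ∣ j := by
      intro x hx j hj
      have h1 : σ ^ d ^ (n + m) • x = x := (O.fix _ hnm x hx _).mpr dvd_rfl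
      have h2 := D.coeff_σ_pow hd (d ^ (n + m)) x j
      rw [h1] at h2
      have h3 : ζ ^ (-((d ^ (n + m) : ℕ) * j : ℤ)) = 1 := mul_right_cancel₀ hj (by rw [← h2, one_mul])
      have h4 := (D.prim.zpow_eq_one_iff_dvd _).mp h3
      rw [Int.dvd_neg] at h4
      have h5 : ((d ^ L : ℕ) : ℤ) = (d ^ (n + m) : ℕ) * e := by
        rw [he, ← Nat.cast_mul, ← pow_add]; congr 2; omega
      rw [h5] at h4
      exact Int.dvd_of_mul_dvd_mul_left (by positivity) h4
    have hI : ∀ x ∈ X (n + m), x ∈ I := by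
      intro x hx
      obtain ⟨i, -, rfl⟩ := D.exists_of_mem hx
      exact D.smul_I _ _ (D.iter_mem_I _)
    have H : Core (Γ := Γ) Φ I (fun x : T => x.1 - algebraMap k Ω c0)
        (fun x : T => (Φ x.1).leadingCoeff) e :=
      { map_alg := D.map_alg
        smul_alg := fun c a => D.smul_alg c.1 a
        smul_I := fun c u hu => D.smul_I c.1 u hu
        deg := fun u hu hu0 => D.deg_stabilizer hd hn hv hu hu0
        e_pos := he0
        z_mem := fun x => I.sub_mem (hI _ (hTmem x)) (I.algebraMap_mem _)
        z_smul := fun c x => by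
          rw [smul_sub, hsmul]
          congr 1
          exact D.smul_alg c.1 c0
        z_coeff := fun x j hj hj' => by
          rw [map_sub, HahnSeries.coeff_sub, D.map_alg, HahnSeries.C_apply]
          by_cases hj0 : j = 0
          · subst hj0
            rw [hcoef0 _ (hTmem x), HahnSeries.coeff_single_same, sub_self]
          · rw [HahnSeries.coeff_single_of_ne hj0, sub_zero]
            by_contra hne
            obtain ⟨a, rfl⟩ := hgap _ (hTmem x) j hne
            have h1 : -e ≤ e * a := by
              rw [← hord _ (hTmem x)]; exact HahnSeries.order_le_of_coeff_ne_zero hne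
            have ha1 : a < 1 := by nlinarith
            have ha2 : -1 ≤ a := by nlinarith
            have ha0 : a ≠ 0 := by rintro rfl; simp at hj0
            have : a = -1 := by omega
            subst this
            simp at hj'
        z_lc := fun x => by
          rw [map_sub, HahnSeries.coeff_sub, D.map_alg, HahnSeries.C_apply,
            HahnSeries.coeff_single_of_ne (by omega), sub_zero, HahnSeries.leadingCoeff_eq,
            hord _ (hTmem x)]
        lc_ne := fun x => by
          rw [HahnSeries.leadingCoeff_ne_zero]
          intro h0
          have := hord _ (hTmem x)
          rw [h0, HahnSeries.order_zero] at this
          omega }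
    have hsΓ : σ ^ d ^ n ∈ Γ := (O.fix n hn v hv _).mpr dvd_rfl
    let s : Γ := ⟨σ ^ d ^ n, hsΓ⟩
    set ω := ζ ^ d ^ (L - m) with hω
    have hωp : IsPrimitiveRoot ω (d ^ m) := by
      refine D.prim.pow (by positivity) ?_
      rw [← pow_add]; congr 1; omega
    have hs : ∀ x : T, (fun x : T => (Φ x.1).leadingCoeff) (s • x) =
        ω * (fun x : T => (Φ x.1).leadingCoeff) x := by
      intro x
      change (Φ (σ ^ d ^ n • x.1)).leadingCoeff = ω * (Φ x.1).leadingCoeff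
      rw [D.lc_σ_pow hd, hord _ (hTmem x), hω, he, ← zpow_natCast]
      congr 2
      rw [mul_neg, neg_neg, ← Nat.cast_mul, ← pow_add]
      congr 2; omega
    let N : Subgroup Γ := (Odometer.levelStab X n).subgroupOf Γ
    have hNn : (Odometer.levelStab X n : Subgroup G).Normal := by
      refine ⟨fun a ha c x hx => ?_⟩
      rw [mul_smul, mul_smul, ha _ (O.smul_mem n hn _ _ hx), smul_inv_smul]
    have : N.Normal := Subgroup.normal_subgroupOf
    have hsN : s ∈ N := by
      rw [Subgroup.mem_subgroupOf]
      exact fun x hx => (O.fix n hn x hx _).mpr dvd_rfl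
    have hcard : Nat.card Γ ≤ Nat.card G := Subgroup.card_le_card_group Γ
    have hh : ∀ ν ∈ N, Core.corr (fun x : T => (Φ x.1).leadingCoeff) ((⟨h, hhv⟩ : Γ) * ν) = 0 := by
      intro ν hν
      have hmem : h * ν.1 ∈ Odometer.cos X n h := by
        rw [Odometer.mem_cos]
        intro x hx
        rw [mul_smul, (Subgroup.mem_subgroupOf.mp hν) x hx]
      rw [← hcon _ hmem, Odometer.charSum]
      have := Finset.sum_coe_sort ((X (n + m)).filter (fun x => (dyn g)^[m] x = v))
        (fun x => (Φ ((h * ν.1) • x)).leadingCoeff / (Φ x).leadingCoeff)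
      convert this
      rfl
    obtain ⟨u, κ, hκ, hy, hsu, hou⟩ := Core.shape H hcardT (by exact_mod_cast pow_ne_zero m hdk)
      (fun j h1 h2 => hchar j h1 (h2.trans hcard)) hs hωp N hsN hh ⟨x0, Finset.mem_filter.mpr hx0⟩
    have htr : Transcendental k u := Core.transcendental_of_order D.map_alg (by rw [hou]; omega)
    let S : ℕ → (Ω →ₐ[k] Ω) := fun i =>
      { MulSemiringAction.toRingHom G Ω (σ ^ i) with
        commutes' := fun c => D.smul_alg _ c }
    have hS : ∀ i w, S i w = σ ^ i • w := fun _ _ => rfl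
    have hθ : IsPrimitiveRoot (ω ^ d ^ (m - 1)) d := by
      refine hωp.pow (by positivity) ?_
      rw [← pow_succ]; congr 1; omega
    have hsu' : σ ^ d ^ n • u = algebraMap k Ω ω * u := hsu
    have hpow : ∀ i : ℕ, S (d ^ n * i) u = algebraMap k Ω (ω ^ i) * u := by
      intro i
      rw [hS]
      induction i with
      | zero => simp
      | succ i ih =>
        rw [Nat.mul_succ, pow_add, mul_smul, hsu', smul_mul', D.smul_alg, ih, pow_succ, map_mul]
        ring
    have hpow2 : ∀ (i j : ℕ), i + j = m - 1 → S (d ^ n * d ^ i) (u ^ d ^ j) =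
        algebraMap k Ω (ω ^ d ^ (m - 1)) * u ^ d ^ j := by
      intro i j hij
      rw [map_pow, hpow, mul_pow, ← map_pow, ← pow_mul, ← pow_add, hij]
    have hfx : ∀ i j : ℕ, i + j = m → S (d ^ n * d ^ i) ((dyn g)^[j] x0) = (dyn g)^[j] x0 := by
      intro i j hij
      rw [hS, ← pow_add]
      have h1 : n + i + j = n + m := by omega
      have h2 := O.iter_mem (n + i) j (by omega) x0 (by rw [h1]; exact hx0.1)
      exact (O.fix _ (by omega) _ h2 _).mpr dvd_rfl
    have hy' : x0 = algebraMap k Ω c0 + u + algebraMap k Ω κ * u⁻¹ := by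
      rw [add_assoc, ← hy]; ring
    refine isDickson_of_steps hd hdk D.monic D.natDegree hθ htr (S (d ^ n * d ^ (m - 1)))
      (S (d ^ n * d ^ (m - 2))) (S (d ^ n * d ^ (m - 3))) (by simpa using hpow2 (m - 1) 0 (by omega))
      (by simpa using hpow2 (m - 2) 1 (by omega))
      (by simpa [pow_two, pow_mul] using hpow2 (m - 3) 2 (by omega)) c0 κ hκ hy'
      (hfx (m - 1) 1 (by omega)) (hfx (m - 2) 2 (by omega)) (hfx (m - 3) 3 (by omega))

end InftyData

/-! ### Derivations, orders of vanishing and independent orders -/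

namespace Stepanov

section Taylor

variable {K : Type*} [Field K]

/-- The derivation `δ · d/dT` on power series. -/
noncomputable def eul (δ : PowerSeries K) (f : PowerSeries K) : PowerSeries K :=
  δ * PowerSeries.derivative K f

/-- Each application of `δ · d/dT` lowers an order of vanishing prime to the characteristic by exactly
one. -/
lemma constantCoeff_eul_iterate {δ : PowerSeries K} (hδ : PowerSeries.constantCoeff δ ≠ 0) (v : ℕ) :
    ∀ h : PowerSeries K, PowerSeries.constantCoeff h ≠ 0 →
      (∀ j : ℕ, 0 < j → j ≤ v → (j : K) ≠ 0) →
      PowerSeries.constantCoeff ((eul δ)^[v] (PowerSeries.X ^ v * h)) ≠ 0 := by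
  induction v with
  | zero => intro h hh _; simpa using hh
  | succ v ih =>
    intro h hh hj
    rw [Function.iterate_succ_apply]
    have : eul δ (PowerSeries.X ^ (v + 1) * h) = PowerSeries.X ^ v *
        (δ * (((v + 1 : ℕ) : PowerSeries K) * h + PowerSeries.X * PowerSeries.derivative K h)) := by
      rw [eul, Derivation.leibniz, Derivation.leibniz_pow, PowerSeries.derivative_X]
      simp only [smul_eq_mul, nsmul_eq_mul, Nat.add_sub_cancel, mul_one]
      ring
    rw [this]
    refine ih _ ?_ (fun j h1 h2 => hj j h1 (by omega))
    have h1 := hj (v + 1) (by omega) le_rfl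
    simp only [map_mul, map_add, map_natCast, PowerSeries.constantCoeff_X, zero_mul, add_zero]
    exact mul_ne_zero hδ (mul_ne_zero h1 hh)

/-- Taylor's criterion: below the characteristic, the iterates of `δ · d/dT` detect the order of
vanishing. -/
lemma X_pow_dvd_of_eul {δ : PowerSeries K} (hδ : PowerSeries.constantCoeff δ ≠ 0) {M : ℕ}
    (hM : ∀ j : ℕ, 0 < j → j < M → (j : K) ≠ 0) (f : PowerSeries K)
    (hf : ∀ j < M, PowerSeries.constantCoeff ((eul δ)^[j] f) = 0) : PowerSeries.X ^ M ∣ f := by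
  have : ∀ m ≤ M, PowerSeries.X ^ m ∣ f := by
    intro m
    induction m with
    | zero => simp
    | succ m ih =>
      intro hm
      obtain ⟨h, rfl⟩ := ih (by omega)
      have h0 : PowerSeries.constantCoeff h = 0 := by
        by_contra hh
        exact constantCoeff_eul_iterate hδ m h hh (fun j h1 h2 => hM j h1 (by omega))
          (hf m (by omega))
      rw [pow_succ]
      exact mul_dvd_mul_left _ (PowerSeries.X_dvd_iff.mpr h0)
  exact this M le_rfl

end Taylor

/-- A derivation sending the variables to polynomials of degree at most `e` raises degrees by at most
`e`; this keeps the poles of iterated derivatives under control. -/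
lemma totalDegree_mkDerivation {k ι : Type*} [Field k] {e : ℕ} (f : ι → MvPolynomial ι k)
    (hf : ∀ i, (f i).totalDegree ≤ e) (p : MvPolynomial ι k) :
    (MvPolynomial.mkDerivation k f p).totalDegree ≤ p.totalDegree + e := by
  classical
  conv_lhs => rw [p.as_sum, map_sum]
  refine (MvPolynomial.totalDegree_finsetSum _ _).trans (Finset.sup_le fun s hs => ?_)
  rw [MvPolynomial.mkDerivation_monomial]
  refine (MvPolynomial.totalDegree_smul_le _ _).trans ?_
  refine (MvPolynomial.totalDegree_finsetSum _ _).trans (Finset.sup_le fun i hi => ?_)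
  refine (MvPolynomial.totalDegree_mul _ _).trans (add_le_add ?_ (hf i))
  refine (MvPolynomial.totalDegree_monomial_le _ _).trans ?_
  refine le_trans ?_ (MvPolynomial.le_totalDegree hs)
  change (s - Finsupp.single i 1).degree ≤ s.degree
  exact Finsupp.degree_mono tsub_le_self

/-- A finite-dimensional space of Laurent series has at least as many orders as its dimension. -/
lemma card_orders {k Ω ι : Type*} [Field k] [Field Ω] [Algebra k Ω] [Fintype ι]
    (Φ : Ω →+* LaurentSeries k) (hΦ : ∀ c, Φ (algebraMap k Ω c) = HahnSeries.C c)
    (w : ι → Ω) (hw : LinearIndependent k w) (S : Finset ℤ)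
    (hS : ∀ u ∈ Submodule.span k (Set.range w), u ≠ 0 → (Φ u).order ∈ S) :
    ∃ S' : Finset ℤ, ∃ v : ℤ → Ω, Fintype.card ι ≤ S'.card ∧
      ∀ s ∈ S', v s ∈ Submodule.span k (Set.range w) ∧ v s ≠ 0 ∧ (Φ (v s)).order = s := by
  classical
  let S' := S.filter fun s => ∃ v ∈ Submodule.span k (Set.range w), v ≠ 0 ∧ (Φ v).order = s
  have h1 : ∀ s ∈ S', ∃ v ∈ Submodule.span k (Set.range w), v ≠ 0 ∧ (Φ v).order = s :=
    fun s hs => (Finset.mem_filter.mp hs).2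
  choose! v hv using h1
  refine ⟨S', v, ?_, hv⟩
  let W := Submodule.span k (Set.range w)
  have hW : Module.finrank k W = Fintype.card ι := finrank_span_eq_card hw
  let T : W →ₗ[k] (S' → k) :=
    { toFun := fun u s => (Φ u.1).coeff s.1
      map_add' := fun a b => by ext; simp
      map_smul' := fun c a => by ext; simp [Core.coeff_map_smul hΦ] }
  have hT : Function.Injective T := by
    rw [injective_iff_map_eq_zero]
    intro u hu
    by_contra hne
    have hne' : u.1 ≠ 0 := fun h => hne (Subtype.ext h)
    have hmem : (Φ u.1).order ∈ S' :=
      Finset.mem_filter.mpr ⟨hS _ u.2 hne', u.1, u.2, hne', rfl⟩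
    have := congrFun hu ⟨_, hmem⟩
    have h2 : (Φ u.1).coeff (Φ u.1).order ≠ 0 :=
      HahnSeries.coeff_order_eq_zero.not.mpr ((map_ne_zero Φ).mpr hne')
    exact h2 this
  have := LinearMap.finrank_le_finrank_of_injective hT
  rwa [hW, Module.finrank_fintype_fun_eq_card, Fintype.card_coe] at this

end Stepanov

/-! ### Functions with bounded poles at infinity -/

namespace InftyData

variable {k Ω G : Type*} [Field k] [Field Ω] [Algebra k Ω] [Group G] [Fintype G]
    [MulSemiringAction G Ω] {d L : ℕ} {g : k[X]} {Φ : Ω →+* LaurentSeries k}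
    {I : Subalgebra k Ω} {σ : G} {ζ : k} {y : Ω}

/-- `Pol G Φ I N u`: the element `u` is integral and has poles of order at most `N` at all the
places at infinity `Φ ∘ h`, `h ∈ G`. -/
def Pol (G : Type*) [Group G] [MulSemiringAction G Ω] (Φ : Ω →+* LaurentSeries k)
    (I : Subalgebra k Ω) (N : ℕ) (u : Ω) : Prop :=
  u ∈ I ∧ ∀ (h : G) (j : ℤ), j < -(N : ℤ) → (Φ (h • u)).coeff j = 0

lemma act_ne (h : G) {u : Ω} (hu : u ≠ 0) : h • u ≠ 0 := by
  rw [← smul_zero h]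
  exact (MulAction.injective h).ne hu

lemma Pol.zero (N : ℕ) : Pol G Φ I N 0 := ⟨I.zero_mem, fun h j _ => by simp⟩

lemma Pol.add {N : ℕ} {u v : Ω} (hu : Pol G Φ I N u) (hv : Pol G Φ I N v) :
    Pol G Φ I N (u + v) :=
  ⟨I.add_mem hu.1 hv.1, fun h j hj => by simp [smul_add, hu.2 h j hj, hv.2 h j hj]⟩

lemma Pol.sum {ι : Type*} (s : Finset ι) {N : ℕ} {u : ι → Ω} (hu : ∀ i ∈ s, Pol G Φ I N (u i)) :
    Pol G Φ I N (∑ i ∈ s, u i) :=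
  Finset.sum_induction _ (Pol G Φ I N) (fun _ _ => Pol.add) (Pol.zero N) hu

lemma Pol.mono {N N' : ℕ} (h : N ≤ N') {u : Ω} (hu : Pol G Φ I N u) : Pol G Φ I N' u :=
  ⟨hu.1, fun h' j hj => hu.2 h' j (by omega)⟩

lemma Pol.order {N : ℕ} {u : Ω} (hu : Pol G Φ I N u) (h0 : u ≠ 0) (h : G) :
    -(N : ℤ) ≤ (Φ (h • u)).order := by
  by_contra hlt
  push Not at hlt
  have : Φ (h • u) ≠ 0 := (map_ne_zero Φ).mpr (act_ne h h0)
  exact HahnSeries.coeff_order_eq_zero.not.mpr this (hu.2 h _ hlt)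

lemma pol_of_order {N : ℕ} {u : Ω} (hI : u ∈ I) (h : ∀ h : G, -(N : ℤ) ≤ (Φ (h • u)).order) :
    Pol G Φ I N u :=
  ⟨hI, fun h' _ hj => HahnSeries.coeff_eq_zero_of_lt_order (lt_of_lt_of_le hj (h h'))⟩

lemma Pol.mul {N N' : ℕ} {u v : Ω} (hu : Pol G Φ I N u) (hv : Pol G Φ I N' v) :
    Pol G Φ I (N + N') (u * v) := by
  by_cases hu0 : u = 0
  · subst hu0; rw [zero_mul]; exact Pol.zero _
  by_cases hv0 : v = 0
  · subst hv0; rw [mul_zero]; exact Pol.zero _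
  refine pol_of_order (I.mul_mem hu.1 hv.1) fun h => ?_
  have h1 := hu.order hu0 h
  have h2 := hv.order hv0 h
  rw [smul_mul', map_mul, HahnSeries.order_mul ((map_ne_zero Φ).mpr (act_ne h hu0))
    ((map_ne_zero Φ).mpr (act_ne h hv0))]
  push_cast
  omega

lemma Pol.act (D : InftyData d L g Φ I σ ζ y) {N : ℕ} {u : Ω} (hu : Pol G Φ I N u) (h : G) :
    Pol G Φ I N (h • u) :=
  ⟨D.smul_I h u hu.1, fun h' j hj => by rw [← mul_smul]; exact hu.2 _ j hj⟩

lemma pol_algebraMap (D : InftyData d L g Φ I σ ζ y) (c : k) : Pol G Φ I 0 (algebraMap k Ω c) :=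
  pol_of_order (I.algebraMap_mem c) fun h => by
    rw [D.smul_alg, D.map_alg, HahnSeries.order_C]; simp

lemma Pol.smul (D : InftyData d L g Φ I σ ζ y) {N : ℕ} {u : Ω} (hu : Pol G Φ I N u) (c : k) :
    Pol G Φ I N (c • u) := by
  rw [Algebra.smul_def]
  simpa using (D.pol_algebraMap c).mul hu

lemma Pol.pow (D : InftyData d L g Φ I σ ζ y) {N : ℕ} {u : Ω} (hu : Pol G Φ I N u) (e : ℕ) :
    Pol G Φ I (e * N) (u ^ e) := by
  induction e with
  | zero => simpa using D.pol_algebraMap 1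
  | succ e ih => rw [pow_succ, Nat.succ_mul]; exact ih.mul hu

lemma pol_lev [DecidableEq Ω] (D : InftyData d L g Φ I σ ζ y) (hd : 2 ≤ d) {x : Ω}
    (hx : x ∈ lev d L g σ y L) : Pol G Φ I 1 x := by
  have O := D.odometer hd
  obtain ⟨i, -, rfl⟩ := D.exists_of_mem hx
  refine pol_of_order (D.smul_I _ _ (D.iter_mem_I _)) fun h => ?_
  rw [D.order_lev hd (O.smul_mem L le_rfl h _ hx)]
  simp

/-- Evaluation of polynomials at the points of the top level of the tower. -/
noncomputable abbrev ev [DecidableEq Ω] (d L : ℕ) (g : k[X]) (σ : G) (y : Ω) :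
    MvPolynomial (lev d L g σ y L) k →ₐ[k] Ω :=
  MvPolynomial.aeval fun x => x.1

lemma pol_ev [DecidableEq Ω] (D : InftyData d L g Φ I σ ζ y) (hd : 2 ≤ d)
    (m : MvPolynomial (lev d L g σ y L) k) : Pol G Φ I m.totalDegree (ev d L g σ y m) := by
  classical
  conv => arg 5; rw [m.as_sum, map_sum]
  refine Pol.sum _ fun s hs => ?_
  rw [MvPolynomial.aeval_monomial, ← Algebra.smul_def]
  refine Pol.smul D ?_ _
  refine Pol.mono (MvPolynomial.le_totalDegree hs) ?_
  rw [Finsupp.prod, Finsupp.sum]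
  induction s.support using Finset.induction_on with
  | empty => simpa using D.pol_algebraMap 1
  | insert a s' ha ih =>
    rw [Finset.prod_insert ha, Finset.sum_insert ha]
    refine Pol.mul ?_ ih
    simpa using Pol.pow D (D.pol_lev hd a.2) (s a)

/-- The norm of `u`, a polynomial in `t`, has order at most `0` at infinity, so a large order of `u` at
one place would force poles of order more than `N` at another. -/
lemma Pol.order_le (D : InftyData d L g Φ I σ ζ y) {N : ℕ} {u : Ω} (hu : Pol G Φ I N u)
    (h0 : u ≠ 0) : (Φ u).order ≤ (Fintype.card G * N : ℕ) := by
  classical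
  have h1 := D.deg u hu.1 h0
  rw [← Finset.add_sum_erase _ _ (Finset.mem_univ (1 : G)), one_smul] at h1
  have h2 : ∑ h ∈ Finset.univ.erase (1 : G), -(N : ℤ) ≤
      ∑ h ∈ Finset.univ.erase (1 : G), (Φ (h • u)).order :=
    Finset.sum_le_sum fun h _ => hu.order h0 h
  rw [Finset.sum_const, Finset.card_erase_of_mem (Finset.mem_univ _), Finset.card_univ,
    nsmul_eq_mul] at h2
  have h3 : ((Fintype.card G - 1 : ℕ) : ℤ) * N ≤ Fintype.card G * N := by
    gcongr; omega
  push_cast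
  nlinarith

/-- The cyclic group generated by `σ` permutes the `d ^ L` roots at level `L` simply transitively, so the
stabilizer of `y` represents the places at infinity modulo the decomposition group. -/
lemma card_stabilizer [DecidableEq Ω] (D : InftyData d L g Φ I σ ζ y) (hd : 2 ≤ d)
    [Fintype (MulAction.stabilizer G y)] :
    d ^ L * Fintype.card (MulAction.stabilizer G y) = Fintype.card G := by
  classical
  have O := D.odometer hd
  have hy : y ∈ lev d L g σ y L := (D.mem_lev hd le_rfl).mpr rfl
  let _ : Fintype (MulAction.orbit G y) := (Set.finite_range fun h : G => h • y).fintype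
  have h1 := MulAction.card_orbit_mul_card_stabilizer_eq_card_group G y
  rw [← h1]
  congr 1
  have h2 := D.card_fibre hd (n := 0) (m := L) (x := y) (by omega) (by simpa using hy)
  rw [← h2, ← Set.toFinset_card]
  congr 1
  ext z
  rw [Set.mem_toFinset, Finset.mem_filter, Nat.zero_add]
  constructor
  · rintro ⟨h, -⟩
    obtain ⟨i, hi⟩ := O.trans L le_rfl y hy z h
    exact ⟨σ ^ i, hi⟩
  · rintro ⟨h, rfl⟩
    have := O.smul_mem L le_rfl h y hy
    exact ⟨this, (D.mem_lev hd le_rfl).mp this⟩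

/-- An element with bounded poles vanishes as soon as its polar and constant parts do at one
representative of each place at infinity. -/
lemma Pol.eq_zero [DecidableEq Ω] (D : InftyData d L g Φ I σ ζ y) (hd : 2 ≤ d)
    {N : ℕ} {u : Ω} (hu : Pol G Φ I N u)
    (h : ∀ (c : MulAction.stabilizer G y) (j : ℕ), j < N + 1 →
      (Φ (c • u)).coeff (-(j : ℤ)) = 0) : u = 0 := by
  classical
  by_contra h0
  have hy : y ∈ lev d L g σ y L := (D.mem_lev hd le_rfl).mpr rfl
  have h1 := D.deg_stabilizer hd le_rfl hy hu.1 h0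
  have h2 : ∀ c : MulAction.stabilizer G y, 0 < (Φ (c • u)).order := by
    intro c
    by_contra hle
    push Not at hle
    have hlow := hu.order h0 c.1
    have : Φ (c • u) ≠ 0 := (map_ne_zero Φ).mpr (act_ne c.1 h0)
    refine HahnSeries.coeff_order_eq_zero.not.mpr this ?_
    have h3 := h c (-(Φ (c • u)).order).toNat (by
      have : (Φ (c • u)).order = (Φ (c.1 • u)).order := rfl
      omega)
    rwa [Int.toNat_of_nonneg (by omega), neg_neg] at h3
  have h3 : 0 < ∑ c : MulAction.stabilizer G y, (Φ (c • u)).order :=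
    Finset.sum_pos (fun c _ => h2 c) Finset.univ_nonempty
  omega

end InftyData

/-! ### Places at finite distance -/

namespace InftyData

variable {k Ω G : Type*} [Field k] [Field Ω] [Algebra k Ω] [Group G] [Fintype G]
    [MulSemiringAction G Ω] {d L : ℕ} {g : k[X]} {Φ : Ω →+* LaurentSeries k}
    {I : Subalgebra k Ω} {σ : G} {ζ : k} {y : Ω}

/-- The action of `G` on the integral elements. -/
def actI (D : InftyData d L g Φ I σ ζ y) (h : G) : I →+* I where
  toFun u := ⟨h • u.1, D.smul_I h _ u.2⟩
  map_one' := Subtype.ext (smul_one h)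
  map_mul' u v := Subtype.ext (smul_mul' h u.1 v.1)
  map_zero' := Subtype.ext (smul_zero h)
  map_add' u v := Subtype.ext (smul_add h u.1 v.1)

/-- The `L`-th iterate of `g` as a polynomial. -/
noncomputable def iter (g : k[X]) (L : ℕ) : k[X] := (g.comp)^[L] X

lemma aeval_iter {R : Type*} [CommRing R] [Algebra k R] (g : k[X]) (L : ℕ) (x : R) :
    aeval x (iter g L) = (fun x => aeval x g)^[L] x := by
  induction L with
  | zero => simp [iter]
  | succ L ih =>
    rw [Function.iterate_succ_apply', ← ih, iter, Function.iterate_succ_apply', aeval_comp]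
    rfl

lemma natDegree_iter (g : k[X]) (L : ℕ) : (iter g L).natDegree = g.natDegree ^ L := by
  rw [iter, natDegree_iterate_comp, natDegree_X, mul_one]

variable [DecidableEq Ω]

/-- Evaluation at the points of the top level, with values in the integral elements. -/
noncomputable def evI (D : InftyData d L g Φ I σ ζ y) (hd : 2 ≤ d) :
    MvPolynomial (lev d L g σ y L) k →ₐ[k] I :=
  MvPolynomial.aeval fun x => ⟨x.1, (D.pol_lev hd x.2).1⟩

lemma coe_evI (D : InftyData d L g Φ I σ ζ y) (hd : 2 ≤ d)
    (m : MvPolynomial (lev d L g σ y L) k) : (D.evI hd m : Ω) = ev d L g σ y m := by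
  have : I.val.comp (D.evI hd) = ev d L g σ y := by
    apply MvPolynomial.algHom_ext
    intro x
    simp [evI]
  exact DFunLike.congr_fun this m

/-- A place at finite distance: a homomorphism from the integral elements to power series,
sending `t` to `a + T`, unramified, whose residual Frobenius is `g₀`. -/
structure IsPlace {K : Type*} [Field K] (D : InftyData d L g Φ I σ ζ y) (hd : 2 ≤ d) (ρ : k →+* K)
    (q : ℕ) (a : k) (g₀ : G) (ψ : I →+* PowerSeries K) : Prop where
  map_alg : ∀ c, ψ (algebraMap k I c) = PowerSeries.C (ρ c)
  map_iter : ∀ u : I, (u : Ω) = (dyn g)^[L] y → ψ u = PowerSeries.C (ρ a) + PowerSeries.X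
  frob : ∀ u, PowerSeries.constantCoeff (ψ u) ^ q = PowerSeries.constantCoeff (ψ (D.actI g₀ u))
  der : ∀ x, PowerSeries.constantCoeff
    (ψ (D.evI hd (aeval (MvPolynomial.X x) (derivative (iter g L))))) ≠ 0

/-- The derivation `(∏ F'(Y_x)) · d/dt` in terms of the coordinates `Y_x`. -/
noncomputable def vder (d L : ℕ) (g : k[X]) (σ : G) (y : Ω) :
    Derivation k (MvPolynomial (lev d L g σ y L) k) (MvPolynomial (lev d L g σ y L) k) :=
  MvPolynomial.mkDerivation k fun x =>
    ∏ x' ∈ Finset.univ.erase x, aeval (MvPolynomial.X x') (derivative (iter g L))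

/-- The discriminant factor `∏ F'(Y_x)`. -/
noncomputable def disc (d L : ℕ) (g : k[X]) (σ : G) (y : Ω) :
    MvPolynomial (lev d L g σ y L) k :=
  ∏ x, aeval (MvPolynomial.X x) (derivative (iter g L))

lemma totalDegree_aeval_X {ι : Type*} (x : ι) (P : k[X]) :
    (aeval (MvPolynomial.X x : MvPolynomial ι k) P).totalDegree ≤ P.natDegree := by
  rw [aeval_eq_sum_range]
  refine (MvPolynomial.totalDegree_finsetSum _ _).trans (Finset.sup_le fun i hi => ?_)
  refine (MvPolynomial.totalDegree_smul_le _ _).trans ?_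
  rw [MvPolynomial.totalDegree_X_pow]
  exact Nat.lt_succ_iff.mp (Finset.mem_range.mp hi)

lemma card_lev (D : InftyData d L g Φ I σ ζ y) (hd : 2 ≤ d) :
    Fintype.card (lev d L g σ y L) = d ^ L := by
  have hy : y ∈ lev d L g σ y L := (D.mem_lev hd le_rfl).mpr rfl
  have h2 := D.card_fibre hd (n := 0) (m := L) (x := y) (by omega) (by simpa using hy)
  rw [Fintype.card_coe, ← h2]
  congr 1
  ext z
  rw [Finset.mem_filter, Nat.zero_add]
  exact ⟨fun h => ⟨h, (D.mem_lev hd le_rfl).mp h⟩, fun h => h.1⟩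

lemma totalDegree_vder_iterate (D : InftyData d L g Φ I σ ζ y) (hd : 2 ≤ d) (j : ℕ)
    (p : MvPolynomial (lev d L g σ y L) k) :
    ((vder d L g σ y)^[j] p).totalDegree ≤ p.totalDegree + j * (d ^ L * d ^ L) := by
  induction j with
  | zero => simp
  | succ j ih =>
    rw [Function.iterate_succ_apply', Nat.succ_mul, ← add_assoc]
    refine (Stepanov.totalDegree_mkDerivation _ (e := d ^ L * d ^ L) (fun x => ?_) _).trans
      (Nat.add_le_add_right ih _)
    refine (MvPolynomial.totalDegree_finsetProd _ _).trans ?_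
    refine (Finset.sum_le_card_nsmul _ _ (d ^ L) fun x' _ => ?_).trans ?_
    · refine (totalDegree_aeval_X _ _).trans ((natDegree_derivative_le _).trans ?_)
      rw [natDegree_iter, D.natDegree]
      omega
    · rw [smul_eq_mul]
      gcongr
      refine (Finset.card_erase_le).trans ?_
      rw [Finset.card_univ, D.card_lev hd]

section place

variable {K : Type*} [Field K] {ρ : k →+* K} {q : ℕ} {a : k} {g₀ : G} {ψ : I →+* PowerSeries K}
  {D : InftyData d L g Φ I σ ζ y} {hd : 2 ≤ d}

lemma IsPlace.map_aeval (H : D.IsPlace hd ρ q a g₀ ψ) (u : I) (P : k[X]) :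
    ψ (aeval u P) = aeval (ψ u) (P.map ρ) := by
  rw [aeval_def, hom_eval₂, aeval_def, eval₂_map]
  congr 1
  ext1 c
  exact H.map_alg c

/-- The relation `F(Y_x) = t`, differentiated with respect to `T = t - a`. -/
lemma IsPlace.derivative_mul (H : D.IsPlace hd ρ q a g₀ ψ) (x : lev d L g σ y L) :
    ψ (D.evI hd (aeval (MvPolynomial.X x) (derivative (iter g L)))) *
      PowerSeries.derivative K (ψ (D.evI hd (MvPolynomial.X x))) = 1 := by
  have h1 : ψ (aeval (D.evI hd (MvPolynomial.X x)) (iter g L)) =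
      PowerSeries.C (ρ a) + PowerSeries.X := by
    apply H.map_iter
    have : ((aeval (D.evI hd (MvPolynomial.X x)) (iter g L) : I) : Ω) =
        aeval (D.evI hd (MvPolynomial.X x) : Ω) (iter g L) := by
      rw [← Subalgebra.coe_val, ← aeval_algHom_apply]
    rw [this, coe_evI, aeval_iter, MvPolynomial.aeval_X]
    exact (D.mem_lev hd le_rfl).mp x.2
  have h2 := congrArg (PowerSeries.derivative K) h1
  rw [H.map_aeval, Derivation.map_aeval, map_add, PowerSeries.derivative_C,
    PowerSeries.derivative_X, zero_add, derivative_map, ← H.map_aeval, smul_eq_mul] at h2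
  rw [← h2, aeval_algHom_apply]

lemma eul_mul (δ f w : PowerSeries K) :
    Stepanov.eul δ (f * w) = f * Stepanov.eul δ w + w * Stepanov.eul δ f := by
  simp only [Stepanov.eul, Derivation.leibniz, smul_eq_mul]; ring

/-- At every place the derivation `vder` becomes `δ · d/dT`. -/
lemma IsPlace.map_vder (H : D.IsPlace hd ρ q a g₀ ψ) (p : MvPolynomial (lev d L g σ y L) k) :
    ψ (D.evI hd (vder d L g σ y p)) =
      Stepanov.eul (ψ (D.evI hd (disc d L g σ y))) (ψ (D.evI hd p)) := by
  induction p using MvPolynomial.induction_on with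
  | C c =>
    rw [← MvPolynomial.algebraMap_eq, Derivation.map_algebraMap, map_zero, map_zero,
      AlgHom.commutes, H.map_alg, Stepanov.eul, PowerSeries.derivative_C, mul_zero]
  | add p p' h h' =>
    simp only [map_add, h, h', Stepanov.eul, mul_add]
  | mul_X p x h =>
    have hx : ψ (D.evI hd (vder d L g σ y (MvPolynomial.X x))) =
      Stepanov.eul (ψ (D.evI hd (disc d L g σ y))) (ψ (D.evI hd (MvPolynomial.X x))) := by
      rw [vder, MvPolynomial.mkDerivation_X, Stepanov.eul, disc,
        ← Finset.mul_prod_erase _ _ (Finset.mem_univ x), map_mul, map_mul, mul_right_comm,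
        H.derivative_mul, one_mul]
    rw [Derivation.leibniz, smul_eq_mul, smul_eq_mul, map_add, map_mul, map_mul, map_add, map_mul,
      map_mul, h, hx, map_mul, map_mul, eul_mul]

lemma IsPlace.disc_ne (H : D.IsPlace hd ρ q a g₀ ψ) :
    PowerSeries.constantCoeff (ψ (D.evI hd (disc d L g σ y))) ≠ 0 := by
  rw [disc, map_prod, map_prod, map_prod]
  exact Finset.prod_ne_zero_iff.mpr fun x _ => H.der x

/-- In characteristic dividing `q` the `q`-th powers are constants for the derivation, which therefore
acts only on the factors `B i`. -/
lemma IsPlace.iterate {ι : Type*} [Fintype ι] (H : D.IsPlace hd ρ q a g₀ ψ) (hq : (q : K) = 0)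
    (c : ι → k) (B : ι → MvPolynomial (lev d L g σ y L) k) (u : ι → I) (j : ℕ) :
    (Stepanov.eul (ψ (D.evI hd (disc d L g σ y))))^[j]
      (ψ (∑ i, algebraMap k I (c i) * D.evI hd (B i) * u i ^ q)) =
    ψ (∑ i, algebraMap k I (c i) * D.evI hd ((vder d L g σ y)^[j] (B i)) * u i ^ q) := by
  induction j with
  | zero => rfl
  | succ j ih =>
    rw [Function.iterate_succ_apply', ih, map_sum, map_sum]
    have hs : ∀ (s : Finset ι) (f : ι → PowerSeries K),
        Stepanov.eul (ψ (D.evI hd (disc d L g σ y))) (∑ i ∈ s, f i) =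
        ∑ i ∈ s, Stepanov.eul (ψ (D.evI hd (disc d L g σ y))) (f i) := by
      intro s f
      simp only [Stepanov.eul, map_sum, Finset.mul_sum]
    rw [hs]
    refine Finset.sum_congr rfl fun i _ => ?_
    have h1 : Stepanov.eul (ψ (D.evI hd (disc d L g σ y))) (ψ (u i) ^ q) = 0 := by
      rw [Stepanov.eul, Derivation.leibniz_pow, nsmul_eq_mul, ← map_natCast (PowerSeries.C (R := K)),
        hq, map_zero, zero_mul, mul_zero]
    have h2 : Stepanov.eul (ψ (D.evI hd (disc d L g σ y))) (ψ (algebraMap k I (c i))) = 0 := by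
      rw [H.map_alg, Stepanov.eul, PowerSeries.derivative_C, mul_zero]
    simp only [map_mul, map_pow]
    rw [eul_mul, eul_mul, h1, h2, Function.iterate_succ_apply', H.map_vder]
    ring

/-- If the auxiliary relations `C_j = 0` hold for `j < M`, then the auxiliary function vanishes to
order `M` at the place. -/
lemma IsPlace.X_pow_dvd {ι : Type*} [Fintype ι] (H : D.IsPlace hd ρ q a g₀ ψ) (hq : (q : K) = 0)
    (c : ι → k) (B : ι → MvPolynomial (lev d L g σ y L) k) (u : ι → I) {M : ℕ}
    (hM : ∀ j : ℕ, 0 < j → j < M → (j : K) ≠ 0)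
    (hC : ∀ j < M, ∑ i, algebraMap k I (c i) * D.evI hd ((vder d L g σ y)^[j] (B i)) *
      D.actI g₀ (u i) = 0) :
    PowerSeries.X ^ M ∣ ψ (∑ i, algebraMap k I (c i) * D.evI hd (B i) * u i ^ q) := by
  refine Stepanov.X_pow_dvd_of_eul H.disc_ne hM _ fun j hj => ?_
  rw [H.iterate hq]
  have := congrArg (fun w => PowerSeries.constantCoeff (ψ w)) (hC j hj)
  simp only [map_sum, map_mul, map_pow, H.frob, map_zero] at this ⊢
  exact this

end place

end InftyData

/-! ### Zeros and poles of the auxiliary function -/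

namespace Stepanov

/-- Multiplicity of a root, read off the expansion of `P` at `t = a`. -/
lemma le_rootMultiplicity_of_X_pow_dvd {k K : Type*} [Field k] [Field K] (ρ : k →+* K) {P : k[X]}
    (hP : P ≠ 0) (a : k) {m : ℕ}
    (h : (PowerSeries.X : PowerSeries K) ^ m ∣
      aeval (PowerSeries.C (ρ a) + PowerSeries.X : PowerSeries K) (P.map ρ)) :
    m ≤ P.rootMultiplicity a := by
  have e : aeval (PowerSeries.C (ρ a) + PowerSeries.X : PowerSeries K) (P.map ρ) =
      (((P.map ρ).comp (X + C (ρ a)) : K[X]) : PowerSeries K) := by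
    have h1 : (PowerSeries.C (ρ a) + PowerSeries.X : PowerSeries K) =
        coeToPowerSeries.algHom K (X + C (ρ a)) := by
      simp [coeToPowerSeries.algHom_apply, add_comm]
    rw [h1, aeval_algHom_apply, coeToPowerSeries.algHom_apply]
    simp [comp, aeval_def]
  rw [e, PowerSeries.X_pow_dvd_iff] at h
  have h2 : (X : K[X]) ^ m ∣ (P.map ρ).comp (X + C (ρ a)) := by
    rw [X_pow_dvd_iff]
    intro j hj
    simpa using h j hj
  have hP' : P.map ρ ≠ 0 := (Polynomial.map_ne_zero_iff ρ.injective).mpr hP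
  have hc : (P.map ρ).comp (X + C (ρ a)) ≠ 0 := by
    intro h0
    rcases comp_eq_zero_iff.mp h0 with h1 | ⟨-, h1⟩
    · exact hP' h1
    · have := congrArg natDegree h1
      simp at this
  rw [eq_rootMultiplicity_map ρ.injective, rootMultiplicity_eq_rootMultiplicity,
    le_rootMultiplicity_iff hc]
  simpa using h2

lemma sum_rootMultiplicity_le {k : Type*} [Field k] (P : k[X]) (A : Finset k) :
    ∑ a ∈ A, P.rootMultiplicity a ≤ P.natDegree := by
  classical
  refine le_trans ?_ (card_roots' P)
  rw [← Multiset.toFinset_sum_count_eq P.roots]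
  simp only [← count_roots]
  rw [← Finset.sum_inter_add_sum_sdiff A P.roots.toFinset]
  have : ∑ a ∈ A \ P.roots.toFinset, P.roots.count a = 0 :=
    Finset.sum_eq_zero fun a ha => Multiset.count_eq_zero.mpr fun h =>
      (Finset.mem_sdiff.mp ha).2 (Multiset.mem_toFinset.mpr h)
  rw [this, add_zero]
  exact Finset.sum_le_sum_of_subset Finset.inter_subset_right

end Stepanov

namespace InftyData

variable {k Ω G : Type*} [Field k] [Field Ω] [Algebra k Ω] [Group G] [Fintype G]
    [MulSemiringAction G Ω] {d L : ℕ} {g : k[X]} {Φ : Ω →+* LaurentSeries k}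
    {I : Subalgebra k Ω} {σ : G} {ζ : k} {y : Ω} [DecidableEq Ω]

/-- The summands `A_s v_s^q` have pairwise distinct orders at infinity, so their sum does not
vanish. -/
lemma sum_ne_zero (D : InftyData d L g Φ I σ ζ y) {S : Finset ℤ} {v A : ℤ → Ω} {N q : ℕ}
    (hq : (Fintype.card G + 1) * N < q) (hv : ∀ s ∈ S, v s ≠ 0 ∧ (Φ (v s)).order = s)
    (hA : ∀ s ∈ S, Pol G Φ I N (A s)) (h0 : ∃ s ∈ S, A s ≠ 0) :
    ∑ s ∈ S, A s * v s ^ q ≠ 0 := by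
  classical
  let S1 := S.filter fun s => A s ≠ 0
  have hS1 : S1.Nonempty := by
    obtain ⟨s, hs, h⟩ := h0
    exact ⟨s, Finset.mem_filter.mpr ⟨hs, h⟩⟩
  obtain ⟨s0, hs0, hmin⟩ := S1.exists_min_image (fun s => (Φ (A s * v s ^ q)).order) hS1
  have hord : ∀ s ∈ S1, (Φ (A s * v s ^ q)).order = (Φ (A s)).order + q * s := by
    intro s hs
    obtain ⟨h1, h2⟩ := Finset.mem_filter.mp hs
    obtain ⟨h3, h4⟩ := hv s h1
    rw [map_mul, map_pow, HahnSeries.order_mul ((map_ne_zero Φ).mpr h2)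
      (pow_ne_zero _ ((map_ne_zero Φ).mpr h3)), HahnSeries.order_pow, h4, nsmul_eq_mul]
  have hb : ∀ s ∈ S1, -(N : ℤ) ≤ (Φ (A s)).order ∧ (Φ (A s)).order ≤ (Fintype.card G * N : ℕ) := by
    intro s hs
    obtain ⟨h1, h2⟩ := Finset.mem_filter.mp hs
    refine ⟨?_, Pol.order_le D (hA s h1) h2⟩
    have := (hA s h1).order h2 1
    rwa [one_smul] at this
  have hqz : ((Fintype.card G * N : ℕ) : ℤ) + N < q := by
    have : Fintype.card G * N + N < q := by rw [← Nat.succ_mul]; exact hq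
    exact_mod_cast this
  intro hsum
  have hc := congrArg (fun w => (Φ w).coeff ((Φ (A s0 * v s0 ^ q)).order)) hsum
  simp only [map_sum, HahnSeries.coeff_sum, map_zero, HahnSeries.coeff_zero] at hc
  have hs0S := (Finset.mem_filter.mp hs0).1
  rw [Finset.sum_eq_single_of_mem s0 hs0S] at hc
  · refine HahnSeries.coeff_order_eq_zero.not.mpr ((map_ne_zero Φ).mpr ?_) hc
    exact mul_ne_zero (Finset.mem_filter.mp hs0).2 (pow_ne_zero _ (hv s0 hs0S).1)
  · intro s hs hne
    by_cases hAs : A s = 0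
    · simp [hAs]
    · have hs1 : s ∈ S1 := Finset.mem_filter.mpr ⟨hs, hAs⟩
      apply HahnSeries.coeff_eq_zero_of_lt_order
      refine lt_of_le_of_ne (hmin s hs1) ?_
      rw [hord s hs1, hord s0 hs0]
      intro he
      obtain ⟨a1, a2⟩ := hb s hs1
      obtain ⟨b1, b2⟩ := hb s0 hs0
      rcases lt_or_gt_of_ne hne with h | h
      · have : (q : ℤ) * (s + 1) ≤ q * s0 := by gcongr; omega
        nlinarith
      · have : (q : ℤ) * (s0 + 1) ≤ q * s := by gcongr; omega
        nlinarith

/-- If the auxiliary function vanishes to order `M` at many places, comparison of zeros and poles of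
its norm bounds the number of these places. -/
lemma sum_card_le (D : InftyData d L g Φ I σ ζ y)
    (hnorm : ∀ u ∈ I, u ≠ 0 → ∃ P : k[X], aeval ((dyn g)^[L] y) P = ∏ h : G, h • u ∧
      ∑ h : G, (Φ (h • u)).order = -((d ^ L * P.natDegree : ℕ) : ℤ))
    (hd : 2 ≤ d) {K : Type*} [Field K] (ρ : k →+* K) {q : ℕ} {g₀ : G} (A : Finset k)
    (Ψ : k → (I →+* PowerSeries K)) (T : k → Finset G)
    (hT : ∀ a ∈ A, ∀ τ ∈ T a, D.IsPlace hd ρ q a g₀ ((Ψ a).comp (D.actI τ)))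
    (w : I) (hw : (w : Ω) ≠ 0) {N M : ℕ} (hN : Pol G Φ I N (w : Ω))
    (hM : ∀ a ∈ A, ∀ τ ∈ T a, PowerSeries.X ^ M ∣ (Ψ a).comp (D.actI τ) w) :
    d ^ L * (M * ∑ a ∈ A, (T a).card) ≤ Fintype.card G * N := by
  classical
  obtain ⟨P, hP, hdeg⟩ := hnorm w w.2 hw
  have hP0 : P ≠ 0 := by
    rintro rfl
    rw [map_zero] at hP
    obtain ⟨h, -, hh⟩ := Finset.prod_eq_zero_iff.mp hP.symm
    exact act_ne h hw hh
  have h1 : ((d ^ L * P.natDegree : ℕ) : ℤ) ≤ (Fintype.card G * N : ℕ) := by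
    have : ∑ h : G, -(N : ℤ) ≤ ∑ h : G, (Φ (h • w.1)).order :=
      Finset.sum_le_sum fun h _ => hN.order hw h
    rw [Finset.sum_const, Finset.card_univ, nsmul_eq_mul, hdeg] at this
    push_cast at this ⊢
    linarith
  have h2 : M * ∑ a ∈ A, (T a).card ≤ P.natDegree := by
    refine le_trans ?_ (Stepanov.sum_rootMultiplicity_le P A)
    rw [Finset.mul_sum]
    refine Finset.sum_le_sum fun a ha => ?_
    rcases (T a).eq_empty_or_nonempty with he | ⟨τ0, hτ0⟩
    · simp [he]
    refine Stepanov.le_rootMultiplicity_of_X_pow_dvd ρ hP0 a ?_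
    have H := hT a ha τ0 hτ0
    have htmem : (dyn g)^[L] y ∈ I := D.iter_mem_I L
    have hprod : aeval (⟨_, htmem⟩ : I) P = ∏ h : G, D.actI h w := by
      apply Subtype.ext
      have e1 : ((aeval (⟨_, htmem⟩ : I) P : I) : Ω) = aeval ((dyn g)^[L] y) P := by
        rw [← Subalgebra.coe_val, ← aeval_algHom_apply]; rfl
      rw [e1, hP, ← Subalgebra.coe_val, map_prod]
      rfl
    have hprod' : D.actI τ0 (∏ h : G, D.actI h w) = ∏ h : G, D.actI h w := by
      rw [← hprod]
      apply Subtype.ext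
      have e1 : ((aeval (⟨_, htmem⟩ : I) P : I) : Ω) = ∏ h : G, h • w.1 := by
        rw [hprod, ← Subalgebra.coe_val, map_prod]; rfl
      change τ0 • ((aeval (⟨_, htmem⟩ : I) P : I) : Ω) = _
      rw [e1, Finset.smul_prod']
      simp only [← mul_smul]
      exact Fintype.prod_equiv (Equiv.mulLeft τ0) _ _ fun h => rfl
    have key : aeval (PowerSeries.C (ρ a) + PowerSeries.X : PowerSeries K) (P.map ρ) =
        ∏ h : G, Ψ a (D.actI h w) := by
      rw [← H.map_iter ⟨_, htmem⟩ rfl, ← H.map_aeval, hprod, RingHom.comp_apply, hprod', map_prod]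
    rw [key]
    calc (PowerSeries.X : PowerSeries K) ^ (M * (T a).card)
        = ∏ τ ∈ T a, PowerSeries.X ^ M := by rw [Finset.prod_const, pow_mul]
      _ ∣ ∏ τ ∈ T a, Ψ a (D.actI τ w) := Finset.prod_dvd_prod_of_dvd _ _ fun τ hτ => hM a ha τ hτ
      _ ∣ _ := Finset.prod_dvd_prod_of_subset _ _ _ (Finset.subset_univ _)
  have h3 : d ^ L * P.natDegree ≤ Fintype.card G * N := by exact_mod_cast h1
  exact (Nat.mul_le_mul_left _ h2).trans h3

end InftyData

/-! ### Stepanov's method -/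

namespace Stepanov

/-- Number of powers of `t` allowed in the coefficient functions: large enough for the auxiliary function
to have more free coefficients than there are linear conditions on them. -/
def numB (D n : ℕ) : ℕ :=
  (D + 2) * (2 * (D * D) + n * (D + 1) * (D * D) + D * (D + 2) + 1)

/-- The size of the field from which the counting bound holds, for a cover with `n` automorphisms
and an iterate of degree `D`. -/
def bound (D n : ℕ) : ℕ := (n + 1) * (D * numB D n + D * D)

end Stepanov

namespace InftyData

universe uG

variable {k Ω : Type*} {G : Type uG} [Field k] [Field Ω] [Algebra k Ω] [Group G] [Fintype G]
    [MulSemiringAction G Ω] {d L : ℕ} {g : k[X]} {Φ : Ω →+* LaurentSeries k}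
    {I : Subalgebra k Ω} {σ : G} {ζ : k} {y : Ω} [DecidableEq Ω]

/-- The polynomial `F(Y_y)^s m_j`, which evaluates to `t^s ω_j`. -/
noncomputable def mono (D : InftyData d L g Φ I σ ζ y) (hd : 2 ≤ d)
    (m : G → MvPolynomial (lev d L g σ y L) k) (p : ℕ × G) : MvPolynomial (lev d L g σ y L) k :=
  (aeval (MvPolynomial.X ⟨y, (D.mem_lev hd le_rfl).mpr rfl⟩) (iter g L)) ^ p.1 * m p.2

lemma ev_mono (D : InftyData d L g Φ I σ ζ y) (hd : 2 ≤ d)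
    (m : G → MvPolynomial (lev d L g σ y L) k) (p : ℕ × G) :
    ev d L g σ y (D.mono hd m p) = ((dyn g)^[L] y) ^ p.1 * ev d L g σ y (m p.2) := by
  rw [mono, map_mul, map_pow, ← aeval_algHom_apply, MvPolynomial.aeval_X, aeval_iter]
  rfl

lemma totalDegree_mono (D : InftyData d L g Φ I σ ζ y) (hd : 2 ≤ d)
    (m : G → MvPolynomial (lev d L g σ y L) k)
    (hm : ∀ j, (m j).totalDegree ≤ d ^ L * d ^ L) (p : ℕ × G) {s : ℕ} (hs : p.1 ≤ s) :
    (D.mono hd m p).totalDegree ≤ d ^ L * s + d ^ L * d ^ L := by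
  refine (MvPolynomial.totalDegree_mul _ _).trans (add_le_add ?_ (hm _))
  refine (MvPolynomial.totalDegree_pow _ _).trans ?_
  rw [mul_comm (d ^ L)]
  gcongr
  refine (totalDegree_aeval_X _ _).trans ?_
  rw [natDegree_iter, D.natDegree]

/-- Stepanov's auxiliary function `∑ c_i B_i u_i ^ q`. The factors `u_i` have distinct orders at infinity,
so it is nonzero as soon as the coefficients `c_i` are not all zero. At a place with residual Frobenius
`g₀` the residues of `u_i ^ q` and `g₀ u_i` agree, so the derivative of order `j` vanishes there as soon
as the `j`-th auxiliary relation holds. Those relations are linear in the `c_i` and fewer in number. -/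
lemma exists_aux (D : InftyData d L g Φ I σ ζ y) (hd : 2 ≤ d)
    (m : G → MvPolynomial (lev d L g σ y L) k)
    (hm : ∀ j, (m j).totalDegree ≤ d ^ L * d ^ L)
    (hli : LinearIndependent k fun p : ℕ × G => ((dyn g)^[L] y) ^ p.1 * ev d L g σ y (m p.2))
    (g₀ : G) {D0 n : ℕ} (hD0 : D0 = d ^ L) (hn : n = Fintype.card G) {q : ℕ}
    (hq : Stepanov.bound D0 n < q) :
    ∃ (ι : Type uG) (_ : Fintype ι) (c : ι → k) (B : ι → MvPolynomial (lev d L g σ y L) k) (u : ι → I),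
      (∀ j < n * (D0 + 1), ∑ i, algebraMap k I (c i) * D.evI hd ((vder d L g σ y)^[j] (B i)) *
        D.actI g₀ (u i) = 0) ∧
      ((∑ i, algebraMap k I (c i) * D.evI hd (B i) * u i ^ q : I) : Ω) ≠ 0 ∧
      Pol G Φ I (D0 * Stepanov.numB D0 n + D0 * D0 + q * (D0 * (D0 + 2) + D0 * D0))
        ((∑ i, algebraMap k I (c i) * D.evI hd (B i) * u i ^ q : I) : Ω) := by
  classical
  obtain ⟨b, hb⟩ : ∃ b, b = Stepanov.numB D0 n := ⟨_, rfl⟩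
  have hD1 : 0 < D0 := by rw [hD0]; positivity
  have hn0 : 0 < n := by rw [hn]; exact Fintype.card_pos
  have hn' : (Fintype.card G : ℕ) = n := hn.symm
  obtain ⟨t, ht⟩ : ∃ t, t = (dyn g)^[L] y := ⟨_, rfl⟩
  rw [← ht] at hli
  -- bounds for the poles of `t ^ s ω_j`
  have hBdeg : ∀ (r : ℕ) (p : ℕ × G), p.1 ≤ r →
      (D.mono hd m p).totalDegree ≤ D0 * r + D0 * D0 := fun r p hp => by
    rw [hD0]; exact D.totalDegree_mono hd m hm p hp
  have hpol : ∀ (r : ℕ) (p : ℕ × G), p.1 ≤ r →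
      Pol G Φ I (D0 * r + D0 * D0) (t ^ p.1 * ev d L g σ y (m p.2)) := fun r p hp => by
    rw [ht, ← D.ev_mono hd]
    exact Pol.mono (hBdeg r p hp) (D.pol_ev hd _)
  have hlir : ∀ r : ℕ, LinearIndependent k
      fun p : Fin r × G => t ^ (p.1 : ℕ) * ev d L g σ y (m p.2) := fun r =>
    hli.comp (fun p : Fin r × G => ((p.1 : ℕ), p.2)) fun p p' h => by
      simp only [Prod.mk.injEq] at h
      exact Prod.ext (Fin.ext h.1) h.2
  -- the functions `v s`, `s ∈ S`, with prescribed orders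
  obtain ⟨S, v, hScard, hS⟩ := Stepanov.card_orders Φ D.map_alg _ (hlir (D0 + 2))
    (Finset.Icc (-((D0 * (D0 + 2) + D0 * D0 : ℕ) : ℤ))
      (Fintype.card G * (D0 * (D0 + 2) + D0 * D0) : ℕ)) (by
    intro u hu hu0
    have hP : Pol G Φ I (D0 * (D0 + 2) + D0 * D0) u := by
      induction hu using Submodule.span_induction with
      | mem x hx => obtain ⟨p, rfl⟩ := hx; exact hpol _ (p.1, p.2) p.1.2.le
      | zero => exact absurd rfl hu0
      | add x x' hx hx' h h' =>
        by_cases h0 : x = 0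
        · rw [h0, zero_add] at hu0 ⊢; exact h' hu0
        by_cases h0' : x' = 0
        · rw [h0', add_zero] at hu0 ⊢; exact h hu0
        exact (h h0).add (h' h0')
      | smul c x hx h => exact Pol.smul D (h (by rintro rfl; simp at hu0)) c
    have := hP.order hu0 1
    rw [one_smul] at this
    exact Finset.mem_Icc.mpr ⟨this, Pol.order_le D hP hu0⟩)
  rw [Fintype.card_prod, Fintype.card_fin, hn'] at hScard
  have hvP : ∀ s ∈ S, Pol G Φ I (D0 * (D0 + 2) + D0 * D0) (v s) := by
    intro s hs
    have hu := (hS s hs).1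
    generalize v s = w at hu
    induction hu using Submodule.span_induction with
    | mem x hx => obtain ⟨p, rfl⟩ := hx; exact hpol _ (p.1, p.2) p.1.2.le
    | zero => exact Pol.zero _
    | add x x' hx hx' h h' => exact h.add h'
    | smul c x hx h => exact h.smul D c
  let B : (Fin b × G) × S → MvPolynomial (lev d L g σ y L) k := fun p =>
    D.mono hd m ((p.1.1 : ℕ), p.1.2)
  let u : (Fin b × G) × S → I := fun p => ⟨v p.2, (hvP p.2 p.2.2).1⟩
  obtain ⟨M, hM⟩ : ∃ M, M = n * (D0 + 1) := ⟨_, rfl⟩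
  obtain ⟨γ, hγ⟩ : ∃ γ, γ = (D0 * b + D0 * D0 + M * (D0 * D0)) + (D0 * (D0 + 2) + D0 * D0) :=
    ⟨_, rfl⟩
  -- the linear conditions
  let w : ℕ → (Fin b × G) × S → Ω := fun j p =>
    ev d L g σ y ((vder d L g σ y)^[j] (B p)) * g₀ • v p.2
  let Λ : ((Fin b × G) × S → k) →ₗ[k]
      ((Fin M × MulAction.stabilizer G y) × Fin (γ + 1) → k) :=
    { toFun := fun c e => ∑ p, c p * (Φ (e.1.2 • w e.1.1 p)).coeff (-((e.2 : ℕ) : ℤ))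
      map_add' := fun c c' => by
        ext e; simp only [Pi.add_apply, add_mul, Finset.sum_add_distrib]
      map_smul' := fun r c => by
        ext e; simp only [Pi.smul_apply, smul_eq_mul, mul_assoc, Finset.mul_sum, RingHom.id_apply] }
  have hker : LinearMap.ker Λ ≠ ⊥ := by
    apply LinearMap.ker_ne_bot_of_finrank_lt
    rw [Module.finrank_fintype_fun_eq_card, Module.finrank_fintype_fun_eq_card]
    simp only [Fintype.card_prod, Fintype.card_fin, Fintype.card_coe, hn']
    have hst := D.card_stabilizer hd
    rw [hn', ← hD0] at hst
    set st := Fintype.card (MulAction.stabilizer G y)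
    have hst0 : 0 < st := Fintype.card_pos
    refine lt_of_lt_of_le ?_ (Nat.mul_le_mul_left (b * n) hScard)
    obtain ⟨R, hR⟩ : ∃ R, R = 2 * (D0 * D0) + n * (D0 + 1) * (D0 * D0) + D0 * (D0 + 2) + 1 :=
      ⟨_, rfl⟩
    have hbR : b = (D0 + 2) * R := by rw [hb, hR, Stepanov.numB]
    have hγR : γ + 1 = D0 * b + R := by rw [hγ, hR, hM]; ring
    have hR0 : 0 < R := by rw [hR]; omega
    have key : (D0 + 1) * (D0 * b + R) < D0 * b * (D0 + 2) := by
      have e : D0 * b * (D0 + 2) = (D0 + 1) * (D0 * b) + D0 * b := by ring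
      rw [e, mul_add]
      have : (D0 + 1) * R < 1 * ((D0 + 2) * R) := by nlinarith
      have h2 : 1 * ((D0 + 2) * R) ≤ D0 * b := by rw [hbR]; gcongr; omega
      omega
    rw [hM, hγR]
    calc n * (D0 + 1) * st * (D0 * b + R) = n * st * ((D0 + 1) * (D0 * b + R)) := by ring
      _ < n * st * (D0 * b * (D0 + 2)) := by gcongr
      _ = b * n * ((D0 + 2) * (D0 * st)) := by ring
      _ = _ := by rw [hst]
  obtain ⟨c, hcker, hc0⟩ := (Submodule.ne_bot_iff _).mp hker
  refine ⟨(Fin b × G) × S, inferInstance, c, B, u, ?_, ?_, ?_⟩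
  · intro j hj
    apply Subtype.ext
    have e1 : ((∑ i, algebraMap k I (c i) * D.evI hd ((vder d L g σ y)^[j] (B i)) *
        D.actI g₀ (u i) : I) : Ω) = ∑ p, c p • w j p := by
      rw [← Subalgebra.coe_val, map_sum]
      refine Finset.sum_congr rfl fun p _ => ?_
      simp only [map_mul, Subalgebra.coe_val, coe_evI, w, Algebra.smul_def, mul_assoc]
      rfl
    rw [e1, ZeroMemClass.coe_zero]
    have hwP : ∀ p, Pol G Φ I γ (w j p) := by
      intro p
      rw [hγ]
      refine Pol.mul ?_ ((hvP _ p.2.2).act D g₀)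
      refine Pol.mono ?_ (D.pol_ev hd _)
      refine (D.totalDegree_vder_iterate hd j _).trans ?_
      refine add_le_add (hBdeg b _ p.1.1.2.le) ?_
      rw [← hD0]
      gcongr
      omega
    refine Pol.eq_zero D hd (N := γ) (Pol.sum _ fun p _ => (hwP p).smul D _) fun h i hi => ?_
    have := congrFun (LinearMap.mem_ker.mp hcker) ((⟨j, by omega⟩, h), ⟨i, hi⟩)
    rw [Pi.zero_apply] at this
    rw [Finset.smul_sum, map_sum, HahnSeries.coeff_sum, ← this]
    refine Finset.sum_congr rfl fun p _ => ?_
    have e2 : h • (c p • w j p) = c p • (h • w j p) := by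
      rw [Algebra.smul_def, smul_mul', Algebra.smul_def]
      congr 1
      exact D.smul_alg h.1 _
    rw [e2, Core.coeff_map_smul D.map_alg]
  · let A : ℤ → Ω := fun s => if hs : s ∈ S then
      ∑ l : Fin b × G, c (l, ⟨s, hs⟩) • (t ^ (l.1 : ℕ) * ev d L g σ y (m l.2)) else 0
    have e1 : ((∑ i, algebraMap k I (c i) * D.evI hd (B i) * u i ^ q : I) : Ω) =
        ∑ s ∈ S, A s * v s ^ q := by
      rw [← Subalgebra.coe_val, map_sum, ← Finset.sum_coe_sort S, Fintype.sum_prod_type_right]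
      refine Finset.sum_congr rfl fun s _ => ?_
      simp only [A, dif_pos s.2, Finset.sum_mul]
      refine Finset.sum_congr rfl fun l _ => ?_
      simp only [map_mul, map_pow, Subalgebra.coe_val, coe_evI, B, u, ev_mono, Algebra.smul_def, ht]
      rfl
    rw [e1]
    refine D.sum_ne_zero (N := D0 * b + D0 * D0) ?_ (fun s hs => (hS s hs).2) ?_ ?_
    · rw [hn', hb]; exact hq
    · intro s hs
      simp only [A, dif_pos hs]
      exact Pol.sum _ fun l _ => (hpol b (l.1, l.2) l.1.2.le).smul D _
    · by_contra hcon
      push Not at hcon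
      apply hc0
      ext ⟨l, s⟩
      have h1 := hcon s s.2
      simp only [A, dif_pos s.2] at h1
      exact Fintype.linearIndependent_iff.mp (hlir b) _ h1 l
  · rw [← Subalgebra.coe_val, map_sum]
    refine Pol.sum _ fun p _ => ?_
    simp only [map_mul, map_pow, Subalgebra.coe_val, coe_evI]
    refine Pol.mul ?_ (Pol.pow D (hvP _ p.2.2) q)
    have h1 := D.pol_algebraMap (c p)
    have h2 := Pol.mono (hBdeg b _ p.1.1.2.le) (D.pol_ev hd (B p))
    have := h1.mul h2
    rw [zero_add, hb] at this
    exact this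

/-- The number of pairs `(a, τ)` such that the translate by `τ` of the chosen place above `t = a` has
residual Frobenius `g₀` is at most `3 q`. The auxiliary function vanishes at all these places to order
`n (D + 1)`, where `D = d ^ L` and `n = |G|`; its poles bound the number of its zeros. The factor `3` is
the price of elementary choices of parameters and is uniform in `L`, which is all that matters. -/
theorem stepanov (D : InftyData d L g Φ I σ ζ y) (hd : 2 ≤ d)
    (hnorm : ∀ u ∈ I, u ≠ 0 → ∃ P : k[X], aeval ((dyn g)^[L] y) P = ∏ h : G, h • u ∧
      ∑ h : G, (Φ (h • u)).order = -((d ^ L * P.natDegree : ℕ) : ℤ))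
    (m : G → MvPolynomial (lev d L g σ y L) k)
    (hm : ∀ j, (m j).totalDegree ≤ d ^ L * d ^ L)
    (hli : LinearIndependent k fun p : ℕ × G => ((dyn g)^[L] y) ^ p.1 * ev d L g σ y (m p.2))
    {K : Type*} [Field K] (ρ : k →+* K) {q : ℕ} (hqK : (q : K) = 0)
    (hsm : ∀ j : ℕ, 0 < j → j < q → (j : K) ≠ 0)
    (hq : Stepanov.bound (d ^ L) (Fintype.card G) < q) {g₀ : G} (A : Finset k)
    (Ψ : k → (I →+* PowerSeries K)) (T : k → Finset G)
    (hT : ∀ a ∈ A, ∀ τ ∈ T a, D.IsPlace hd ρ q a g₀ ((Ψ a).comp (D.actI τ))) :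
    ∑ a ∈ A, (T a).card ≤ 3 * q := by
  obtain ⟨n, hn⟩ : ∃ n, n = Fintype.card G := ⟨_, rfl⟩
  obtain ⟨D0, hD0⟩ : ∃ D0, D0 = d ^ L := ⟨_, rfl⟩
  have hD1 : 0 < D0 := by rw [hD0]; positivity
  have hn0 : 0 < n := by rw [hn]; exact Fintype.card_pos
  rw [← hn, ← hD0] at hq
  obtain ⟨ι, _, c, B, u, h1, h2, h3⟩ := D.exists_aux hd m hm hli g₀ hD0 hn hq
  have hb : Stepanov.numB D0 n + D0 ≤ Stepanov.bound D0 n := by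
    rw [Stepanov.bound]
    have : 1 * (1 * Stepanov.numB D0 n + 1 * D0) ≤
      (n + 1) * (D0 * Stepanov.numB D0 n + D0 * D0) := by gcongr <;> omega
    simpa using this
  have hM : n * (D0 + 1) ≤ Stepanov.numB D0 n := by
    rw [Stepanov.numB]
    nlinarith [Nat.mul_le_mul_left (n * (D0 + 1)) (Nat.mul_pos hD1 hD1), Nat.zero_le (D0 * D0),
      Nat.zero_le (n * (D0 + 1) * (D0 * D0)), Nat.zero_le (D0 * (n * (D0 + 1) * (D0 * D0)))]
  have h4 := D.sum_card_le hnorm hd ρ A Ψ T hT _ h2 h3 (M := n * (D0 + 1))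
    fun a ha τ hτ => (hT a ha τ hτ).X_pow_dvd hqK c B u
      (fun j hj1 hj2 => hsm j hj1 (by omega)) h1
  rw [← hn, ← hD0] at h4
  set s := ∑ a ∈ A, (T a).card
  set b := Stepanov.numB D0 n
  have h5 : n * D0 * ((D0 + 1) * s) ≤ n * D0 * (b + D0 + q * (D0 + 2 + D0)) := by
    calc _ = D0 * (n * (D0 + 1) * s) := by ring
      _ ≤ _ := h4
      _ = _ := by ring
  have h6 := Nat.le_of_mul_le_mul_left h5 (by positivity)
  have h7 : (D0 + 1) * s ≤ (D0 + 1) * (3 * q) := by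
    have : b + D0 ≤ (D0 + 1) * q := by nlinarith
    nlinarith
  exact Nat.le_of_mul_le_mul_left h7 (by omega)

end InftyData

/-! ### Power series, Laurent series and the expansion at infinity -/

namespace Places

section generic

/-- A monic polynomial of degree `D` with `D` distinct roots splits and is separable. -/
lemma splits_separable_of_roots {E : Type*} [Field E] {Q : E[X]} (hQ : Q.Monic) {D : ℕ}
    (hD : Q.natDegree = D) (s : Finset E) (hs : s.card = D) (hr : ∀ z ∈ s, Q.IsRoot z) :
    Q = ∏ z ∈ s, (X - C z) := by
  apply Polynomial.eq_of_monic_of_dvd_of_natDegree_le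
    (monic_prod_of_monic s (fun z => X - C z) fun i _ => monic_X_sub_C i) hQ
  · exact Finset.prod_dvd_of_coprime
      (fun x _ y _ hxy => pairwise_coprime_X_sub_C Function.injective_id hxy)
      fun z hz => dvd_iff_isRoot.mpr (hr z hz)
  · rw [natDegree_prod_of_monic _ _ fun i _ => monic_X_sub_C i]
    simp [hD, hs]

lemma splits_prod {E : Type*} [Field E] (s : Finset E) : (∏ z ∈ s, (X - C z)).Splits :=
  Splits.prod fun z _ => Splits.X_sub_C z

lemma separable_prod {E : Type*} [Field E] (s : Finset E) : (∏ z ∈ s, (X - C z)).Separable :=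
  separable_prod_X_sub_C_iff' (f := fun z => z).mpr fun _ _ _ _ h => h

/-- Hensel's lemma for power series over a field. -/
lemma hensel {K : Type*} [Field K] (f : (PowerSeries K)[X]) (hf : f.Monic) (a : K)
    (h0 : (f.map PowerSeries.constantCoeff).eval a = 0)
    (h1 : (derivative (f.map PowerSeries.constantCoeff)).eval a ≠ 0) :
    ∃ z, f.IsRoot z ∧ PowerSeries.constantCoeff z = a := by
  have hm : ∀ (z : PowerSeries K), z ∈ Ideal.span {PowerSeries.X} ↔ PowerSeries.constantCoeff z = 0 :=
    fun z => by rw [Ideal.mem_span_singleton, PowerSeries.X_dvd_iff]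
  obtain ⟨z, hz, hza⟩ := HenselianRing.is_henselian (I := Ideal.span {(PowerSeries.X : PowerSeries K)})
    f hf (PowerSeries.C a) (by
      rw [hm, ← eval_map_apply]; simpa using h0) (by
      apply IsUnit.map
      rw [PowerSeries.isUnit_iff_constantCoeff, ← eval_map_apply, ← derivative_map]
      simpa using h1)
  refine ⟨z, hz, ?_⟩
  rw [hm] at hza
  simpa [sub_eq_zero] using hza

end generic

section twist

variable {k : Type*} [Field k]

/-- The series `f(ζ⁻¹ w)`. -/
noncomputable def twistFun (ζ : k) (f : LaurentSeries k) : LaurentSeries k where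
  coeff j := ζ ^ (-j) * f.coeff j
  isPWO_support' := f.isPWO_support.mono fun j hj h => hj (by simp [h])

lemma support_twistFun {ζ : k} (hζ : ζ ≠ 0) (f : LaurentSeries k) :
    (twistFun ζ f).support = f.support := by
  ext j
  simp [HahnSeries.mem_support, twistFun, zpow_ne_zero _ hζ]

/-- The automorphism `w ↦ ζ⁻¹ w` of the field of Laurent series in `w`. -/
noncomputable def twist (ζ : k) (hζ : ζ ≠ 0) : LaurentSeries k →+* LaurentSeries k where
  toFun f := twistFun ζ f
  map_one' := by
    ext j
    by_cases h : j = 0 <;> simp [h, HahnSeries.coeff_one, twistFun]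
  map_zero' := by ext; simp [twistFun]
  map_add' f g := by ext; simp [mul_add, twistFun]
  map_mul' f g := by
    ext j
    rw [HahnSeries.coeff_mul]
    have h0 : (twistFun ζ (f * g)).coeff j = ζ ^ (-j) * (f * g).coeff j := rfl
    rw [h0, HahnSeries.coeff_mul, Finset.mul_sum]
    apply Finset.sum_congr
    · ext ij
      simp only [Finset.mem_antidiagonal, support_twistFun hζ]
    · intro ij hij
      simp only [Finset.mem_antidiagonal] at hij
      simp only [twistFun]
      rw [← hij.2.2, neg_add, zpow_add₀ hζ]
      ring

lemma coeff_twist (ζ : k) (hζ : ζ ≠ 0) (f : LaurentSeries k) (j : ℤ) :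
    (twist ζ hζ f).coeff j = ζ ^ (-j) * f.coeff j := rfl

lemma coeff_twist_pow (ζ : k) (hζ : ζ ≠ 0) (i : ℕ) (f : LaurentSeries k) (j : ℤ) :
    ((twist ζ hζ)^[i] f).coeff j = ζ ^ (-(i * j)) * f.coeff j := by
  induction i with
  | zero => simp
  | succ i ih =>
    rw [Function.iterate_succ_apply', coeff_twist, ih, ← mul_assoc, ← zpow_add₀ hζ]
    congr 2; push_cast; ring

end twist

section infinity

variable {k : Type*} [Field k]

/-- The embedding of `k[t]` in `k((w))` with `t = w⁻ᴰ`. -/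
noncomputable def infHom (k : Type*) [Field k] (D : ℕ) : k[X] →+* LaurentSeries k :=
  eval₂RingHom HahnSeries.C (HahnSeries.single (-(D : ℤ)) 1)

lemma infHom_C (D : ℕ) (c : k) : infHom k D (C c) = HahnSeries.C c := by simp [infHom]

lemma infHom_X (D : ℕ) : infHom k D X = HahnSeries.single (-(D : ℤ)) 1 := by simp [infHom]

lemma coeff_infHom {D : ℕ} (hD : 0 < D) (p : k[X]) (n : ℕ) :
    (infHom k D p).coeff (-((D * n : ℕ) : ℤ)) = p.coeff n := by
  induction p using Polynomial.induction_on' with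
  | add p q hp hq => rw [map_add, HahnSeries.coeff_add, hp, hq, coeff_add]
  | monomial m c =>
    rw [← C_mul_X_pow_eq_monomial, map_mul, map_pow, infHom_C, infHom_X, HahnSeries.single_pow,
      one_pow, HahnSeries.C_mul_eq_smul, HahnSeries.coeff_smul, coeff_C_mul_X_pow]
    by_cases h : n = m
    · subst h; rw [if_pos rfl]
      have : (n • (-(D:ℤ))) = (-((D * n : ℕ) : ℤ)) := by push_cast; simp; ring
      rw [this, HahnSeries.coeff_single_same]; simp
    · rw [if_neg h, HahnSeries.coeff_single_of_ne, smul_zero]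
      intro h2
      apply h
      have : (D : ℤ) * n = D * m := by
        simp only [smul_neg, nsmul_eq_mul, neg_inj] at h2; push_cast at h2; linarith
      exact_mod_cast mul_left_cancel₀ (by exact_mod_cast hD.ne') this

lemma infHom_injective {D : ℕ} (hD : 0 < D) : Function.Injective (infHom k D) := by
  intro p q h
  ext n
  rw [← coeff_infHom hD, h, coeff_infHom hD]

lemma order_infHom {D : ℕ} (hD : 0 < D) (p : k[X]) (hp : p ≠ 0) :
    (infHom k D p).order = -((D * p.natDegree : ℕ) : ℤ) := by
  apply le_antisymm
  · apply HahnSeries.order_le_of_coeff_ne_zero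
    rw [coeff_infHom hD]
    simpa using hp
  · have h0 : infHom k D p ≠ 0 := (map_ne_zero_iff _ (infHom_injective hD)).mpr hp
    have h1 := HahnSeries.coeff_order_eq_zero.not.mpr h0
    by_contra! hlt
    apply h1
    obtain ⟨j, hj⟩ : ∃ j, j = (infHom k D p).order := ⟨_, rfl⟩
    rw [← hj] at hlt ⊢
    conv_lhs => rw [p.as_sum_range_C_mul_X_pow]
    rw [map_sum, HahnSeries.coeff_sum]
    apply Finset.sum_eq_zero
    intro i hi
    rw [map_mul, map_pow, infHom_C, infHom_X, HahnSeries.single_pow,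
      one_pow, HahnSeries.C_mul_eq_smul, HahnSeries.coeff_smul, HahnSeries.coeff_single_of_ne,
      smul_zero]
    intro h2
    rw [h2] at hlt
    simp only [smul_neg, nsmul_eq_mul] at hlt
    have : D * i ≤ D * p.natDegree := Nat.mul_le_mul_left _ (by simp at hi; omega)
    have : (D * i : ℤ) ≤ (D * p.natDegree : ℕ) := by exact_mod_cast this
    push_cast at this hlt
    linarith

/-- The expansion at infinity: a Laurent series `y = w⁻¹ + ⋯` with `F(y) = w⁻ᴰ`. In terms of `w y` the
equation is a monic equation over `k⟦w⟧` whose reduction `z ^ D = 1` has the simple root `1`, to which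
Hensel's lemma applies. -/
lemma exists_root_inf {D : ℕ} (hD : 0 < D) (F : k[X]) (hF : F.Monic) (hFD : F.natDegree = D)
    (hDk : (D : k) ≠ 0) :
    ∃ y : LaurentSeries k, y.order = -1 ∧ y.leadingCoeff = 1 ∧
      F.eval₂ HahnSeries.C y = HahnSeries.single (-(D : ℤ)) 1 := by
  set F1 : (PowerSeries k)[X] := F.map PowerSeries.C with hF1
  have hF1m : F1.Monic := hF.map _
  have hF1d : F1.natDegree = D := by rw [hF1, hF.natDegree_map, hFD]
  have hsd : (scaleRoots F1 (PowerSeries.X : PowerSeries k)).natDegree = D := by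
    rw [natDegree_scaleRoots, hF1d]
  have hsm : (scaleRoots F1 (PowerSeries.X : PowerSeries k)).Monic :=
    (monic_scaleRoots_iff _).mpr hF1m
  have hmap : (scaleRoots F1 PowerSeries.X - 1).map PowerSeries.constantCoeff
      = (X ^ D - 1 : k[X]) := by
    rw [Polynomial.map_sub, Polynomial.map_one]
    congr 1
    ext i
    rw [coeff_map, coeff_scaleRoots, hF1d, coeff_X_pow, hF1, coeff_map]
    rcases lt_trichotomy i D with h | h | h
    · rw [if_neg h.ne]
      simp [Nat.sub_ne_zero_of_lt h]
    · subst h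
      simp only [map_mul, PowerSeries.constantCoeff_C, if_true]
      rw [← hFD]; simp [hF.coeff_natDegree]
    · rw [if_neg h.ne', coeff_eq_zero_of_natDegree_lt (by omega)]; simp
  obtain ⟨η, hη, hη1⟩ := hensel (scaleRoots F1 PowerSeries.X - 1)
    (hsm.sub_of_left (by
      rw [degree_one, ← natDegree_pos_iff_degree_pos, hsd]; exact hD)) 1 (by
      rw [hmap]; simp) (by
      rw [hmap, derivative_sub, derivative_one, sub_zero, derivative_X_pow]; simpa using hDk)
  set c : PowerSeries k →+* LaurentSeries k := algebraMap _ _ with hc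
  have hcC : ∀ a : k, c (PowerSeries.C a) = HahnSeries.C a := by
    intro a; simp [hc]
  have hcX : c PowerSeries.X = HahnSeries.single 1 1 := by
    simp [hc]
  obtain ⟨w', hw'⟩ : ∃ w' : LaurentSeries k, w' = HahnSeries.single (-1) 1 := ⟨_, rfl⟩
  have hww : c PowerSeries.X * w' = 1 := by
    rw [hcX, hw', HahnSeries.single_mul_single]; simp
  have hcoe : ∀ j, (c η).coeff j = if j < 0 then 0 else PowerSeries.coeff j.natAbs η :=
    fun j => PowerSeries.coeff_coe η j
  have hηc : (c η).coeff 0 = 1 := by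
    rw [hcoe]; simpa using hη1
  have hη0 : c η ≠ 0 := by intro h; rw [h] at hηc; simp at hηc
  have hηo : (c η).order = 0 := by
    apply le_antisymm
    · exact HahnSeries.order_le_of_coeff_ne_zero (by rw [hηc]; exact one_ne_zero)
    · by_contra! h
      have h1 := HahnSeries.coeff_order_eq_zero.not.mpr hη0
      rw [hcoe, if_pos h] at h1
      exact h1 rfl
  have hw0 : w' ≠ 0 := right_ne_zero_of_mul_eq_one hww
  refine ⟨w' * c η, ?_, ?_, ?_⟩
  · rw [HahnSeries.order_mul hw0 hη0, hηo, hw', HahnSeries.order_single one_ne_zero, add_zero]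
  · rw [HahnSeries.leadingCoeff_mul, HahnSeries.leadingCoeff_eq (x := c η), hηo, hηc, hw',
      HahnSeries.leadingCoeff_of_single, mul_one]
  · have h1 : eval₂ c (c PowerSeries.X * (w' * c η)) (scaleRoots F1 PowerSeries.X) = 1 := by
      rw [← mul_assoc, hww, one_mul, eval₂_at_apply]
      have : eval η (scaleRoots F1 PowerSeries.X) = 1 := by
        simpa [IsRoot, sub_eq_zero] using hη
      rw [this, map_one]
    rw [scaleRoots_eval₂_mul, hF1d, hF1, eval₂_map] at h1
    have h2 : c.comp PowerSeries.C = HahnSeries.C := RingHom.ext hcC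
    rw [h2] at h1
    have h3 : HahnSeries.single (-(D : ℤ)) 1 = w' ^ D := by
      rw [hw', HahnSeries.single_pow, one_pow]; congr 1; simp
    rw [h3]
    calc _ = (c PowerSeries.X * w') ^ D * eval₂ HahnSeries.C (w' * c η) F := by rw [hww]; simp
      _ = w' ^ D * (c PowerSeries.X ^ D * eval₂ HahnSeries.C (w' * c η) F) := by ring
      _ = _ := by rw [h1, mul_one]

end infinity
end Places

/-! ### Splitting fields of the fibres -/

namespace Places

section setup

/-- The polynomial `F(Z) - t` over `k[t]`. -/
noncomputable def fib {k : Type*} [Field k] (F : k[X]) : k[X][X] := F.map C - C X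

lemma fib_map {k E : Type*} [Field k] [CommRing E] (F : k[X]) (θ : k[X] →+* E) :
    (fib F).map θ = F.map (θ.comp C) - C (θ X) := by
  simp [fib, Polynomial.map_map]

lemma fib_monic {k : Type*} [Field k] {F : k[X]} (hF : F.Monic) (hD : 0 < F.natDegree) :
    (fib F).Monic :=
  (hF.map C).sub_of_left (by
    refine degree_C_le.trans_lt ?_
    rw [← natDegree_pos_iff_degree_pos, hF.natDegree_map]; exact hD)

lemma fib_natDegree {k : Type*} [Field k] {F : k[X]} (hF : F.Monic) :
    (fib F).natDegree = F.natDegree := by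
  rw [fib, natDegree_sub_C, hF.natDegree_map]

variable {k K₀ Ω : Type*} [Field k] [Field K₀] [Field Ω] [Algebra k[X] K₀] [IsFractionRing k[X] K₀]
  [Algebra K₀ Ω] [Algebra k[X] Ω] [IsScalarTower k[X] K₀ Ω] [Algebra k Ω] [IsScalarTower k k[X] Ω]

/-- A homomorphism `k[t] → E` over which `F(Z) - t` splits extends to the splitting field. -/
lemma exists_hom (F : k[X]) [IsSplittingField K₀ Ω ((fib F).map (algebraMap k[X] K₀))]
    {E : Type*} [Field E] (θ : k[X] →+* E) (hθ : Function.Injective θ)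
    (hs : ((fib F).map θ).Splits) : ∃ Φ : Ω →+* E, Φ.comp (algebraMap k[X] Ω) = θ := by
  let _ : Algebra K₀ E := (IsFractionRing.lift (K := K₀) hθ).toAlgebra
  have h : ∀ p, algebraMap K₀ E (algebraMap k[X] K₀ p) = θ p := fun p =>
    IsFractionRing.lift_algebraMap hθ p
  have h2 : (algebraMap K₀ E).comp (algebraMap k[X] K₀) = θ := RingHom.ext h
  refine ⟨(IsSplittingField.lift Ω ((fib F).map (algebraMap k[X] K₀)) (by
    rw [Polynomial.map_map, h2]; exact hs) : Ω →ₐ[K₀] E).toRingHom, ?_⟩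
  refine RingHom.ext fun p => ?_
  simp [IsScalarTower.algebraMap_apply k[X] K₀ Ω, h]

/-- Two embeddings of a normal extension which agree on the base are conjugate. -/
lemma exists_conj [Normal K₀ Ω] {E : Type*} [Field E] (Φ₁ Φ₂ : Ω →+* E)
    (h : Φ₁.comp (algebraMap k[X] Ω) = Φ₂.comp (algebraMap k[X] Ω)) :
    ∃ s : Ω ≃ₐ[K₀] Ω, ∀ x, Φ₂ x = Φ₁ (s x) := by
  have h1 : Φ₁.comp (algebraMap K₀ Ω) = Φ₂.comp (algebraMap K₀ Ω) := by
    apply IsLocalization.ringHom_ext (nonZeroDivisors k[X])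
    rw [RingHom.comp_assoc, RingHom.comp_assoc, ← IsScalarTower.algebraMap_eq]
    exact h
  let _ : Algebra Ω E := Φ₁.toAlgebra
  let _ : Algebra K₀ E := (Φ₁.comp (algebraMap K₀ Ω)).toAlgebra
  have : IsScalarTower K₀ Ω E := IsScalarTower.of_algebraMap_eq fun _ => rfl
  let φ₂ : Ω →ₐ[K₀] E := { Φ₂ with commutes' := fun r => (DFunLike.congr_fun h1 r).symm }
  refine ⟨Normal.algHomEquivAut K₀ E Ω φ₂, fun x => ?_⟩
  have := DFunLike.congr_fun ((Normal.algHomEquivAut K₀ E Ω).symm_apply_apply φ₂) x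
  exact this.symm

end setup

section finite

variable {k K : Type*} [Field k] [Field K]

/-- The embedding `t ↦ a + T` of `k[t]` in `K[[T]]`. -/
noncomputable def finHom (ρ : k →+* K) (a : k) : k[X] →+* PowerSeries K :=
  eval₂RingHom (PowerSeries.C.comp ρ) (PowerSeries.C (ρ a) + PowerSeries.X)

lemma finHom_C (ρ : k →+* K) (a c : k) : finHom ρ a (C c) = PowerSeries.C (ρ c) := by simp [finHom]

lemma finHom_X (ρ : k →+* K) (a : k) : finHom ρ a X = PowerSeries.C (ρ a) + PowerSeries.X := by
  simp [finHom]

lemma finHom_injective (ρ : k →+* K) (a : k) : Function.Injective (finHom ρ a) := by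
  have h : finHom ρ a = (Polynomial.coeToPowerSeries.ringHom).comp
      ((algEquivAevalXAddC (ρ a)).toRingEquiv.toRingHom.comp (mapRingHom ρ)) := by
    apply Polynomial.ringHom_ext <;> simp [finHom, add_comm]
  rw [h]
  refine (Polynomial.coe_injective K).comp ((algEquivAevalXAddC (ρ a)).injective.comp
    (Polynomial.map_injective _ ρ.injective))

/-- The fibre `F(Z) = a + T` splits over `K((T))` when `F - a` is separable. -/
lemma splits_fin [IsAlgClosed K] (ρ : k →+* K) (a : k) (F : k[X]) (hF : F.Monic)
    (hD : 0 < F.natDegree) (hsep : (F.map ρ - C (ρ a)).Separable) :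
    ((fib F).map ((algebraMap (PowerSeries K) (LaurentSeries K)).comp (finHom ρ a))).Splits := by
  classical
  have hmap : ((fib F).map (finHom ρ a)).map PowerSeries.constantCoeff = F.map ρ - C (ρ a) := by
    rw [Polynomial.map_map, fib_map]
    congr 2
    · ext x; simp [finHom]
    · simp [finHom]
  have hm : ((fib F).map (finHom ρ a)).Monic := (fib_monic hF hD).map _
  set P := F.map ρ - C (ρ a)
  have hP : P.natDegree = F.natDegree := by rw [natDegree_sub_C, hF.natDegree_map]
  have hP0 : P ≠ 0 := hsep.ne_zero
  have hroot : ∀ z ∈ P.roots.toFinset, ∃ w, ((fib F).map (finHom ρ a)).IsRoot w ∧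
      PowerSeries.constantCoeff w = z := by
    intro z hz
    have hz : P.IsRoot z := by simpa [hP0] using hz
    refine hensel _ hm z (by rw [hmap]; exact hz) ?_
    rw [hmap]
    exact hsep.eval₂_derivative_ne_zero (RingHom.id K) (by simpa using hz)
  choose! w hw1 hw2 using hroot
  set c := algebraMap (PowerSeries K) (LaurentSeries K)
  have hci : Function.Injective c := IsFractionRing.injective _ _
  have hcard : P.roots.toFinset.card = F.natDegree := by
    rw [Multiset.toFinset_card_of_nodup (nodup_roots hsep), ← hP]
    exact (splits_iff_card_roots.mp (IsAlgClosed.splits P))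
  rw [splits_separable_of_roots (D := F.natDegree) ((fib_monic hF hD).map _) (by
    rw [(fib_monic hF hD).natDegree_map, fib_natDegree hF])
    (P.roots.toFinset.image fun z => c (w z)) (by
      rw [Finset.card_image_of_injOn, hcard]
      intro z hz z' hz' h
      rw [← hw2 z hz, ← hw2 z' hz']
      exact congrArg _ (hci h)) (by
      intro z hz
      obtain ⟨z, hz', rfl⟩ := Finset.mem_image.mp hz
      rw [← Polynomial.map_map]
      exact (hw1 z hz').map)]
  exact splits_prod _

end finite

end Places

namespace Places

section infinity

variable {k : Type*} [Field k]

/-- The automorphism `w ↦ ζ⁻¹ w` fixes `t = w⁻ᴰ`, hence permutes the roots at infinity: it induces the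
generator of inertia. -/
lemma twist_infHom {D : ℕ} {ζ : k} (hζ0 : ζ ≠ 0) (hζ : ζ ^ D = 1) :
    (twist ζ hζ0).comp (infHom k D) = infHom k D := by
  apply Polynomial.ringHom_ext
  · intro c
    ext j
    rw [RingHom.comp_apply, coeff_twist, infHom_C, HahnSeries.C_apply]
    by_cases hj : j = 0
    · simp [hj]
    · rw [HahnSeries.coeff_single_of_ne hj, mul_zero]
  · ext j
    rw [RingHom.comp_apply, coeff_twist, infHom_X]
    by_cases hj : j = -(D : ℤ)
    · subst hj; simp only [neg_neg, zpow_natCast, hζ, one_mul]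
    · rw [HahnSeries.coeff_single_of_ne hj, mul_zero]

/-- The fibre at infinity consists of the `D` Laurent series `y(ζ⁻ⁱ w)`. -/
lemma fib_inf {D : ℕ} (hD : 0 < D) (F : k[X]) (hF : F.Monic) (hFD : F.natDegree = D)
    (hDk : (D : k) ≠ 0) {ζ : k} (hζ : IsPrimitiveRoot ζ D) :
    ∃ s : Finset (LaurentSeries k), (fib F).map (infHom k D) = ∏ z ∈ s, (X - C z) := by
  classical
  obtain ⟨y, hy1, hy2, hy3⟩ := exists_root_inf hD F hF hFD hDk
  have hζ0 : ζ ≠ 0 := hζ.ne_zero hD.ne'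
  have hfib : ∀ z : LaurentSeries k, ((fib F).map (infHom k D)).IsRoot z ↔
      F.eval₂ HahnSeries.C z = HahnSeries.single (-(D : ℤ)) 1 := by
    intro z
    have : (infHom k D).comp C = HahnSeries.C := RingHom.ext (infHom_C D)
    rw [fib_map, IsRoot, eval_sub, eval_C, infHom_X, sub_eq_zero, this, eval_map]
  have htw : ∀ i : ℕ, F.eval₂ HahnSeries.C ((twist ζ hζ0)^[i] y) =
      HahnSeries.single (-(D : ℤ)) 1 := by
    intro i
    induction i with
    | zero => exact hy3
    | succ i ih =>
      rw [Function.iterate_succ_apply']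
      have h1 := congrArg (twist ζ hζ0) ih
      rw [hom_eval₂] at h1
      have h2 : (twist ζ hζ0).comp HahnSeries.C = HahnSeries.C := by
        ext1 c
        rw [← infHom_C D, RingHom.comp_apply, ← infHom_C D, ← RingHom.comp_apply,
          twist_infHom hζ0 hζ.pow_eq_one]
      have h3 : twist ζ hζ0 (HahnSeries.single (-(D : ℤ)) 1) = HahnSeries.single (-(D : ℤ)) 1 := by
        rw [← infHom_X D, ← RingHom.comp_apply, twist_infHom hζ0 hζ.pow_eq_one]
      rw [h2, h3] at h1
      exact h1
  have hc : y.coeff (-1) ≠ 0 := by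
    rw [← hy1, ← HahnSeries.leadingCoeff_eq, hy2]; exact one_ne_zero
  refine ⟨(Finset.range D).image fun i => (twist ζ hζ0)^[i] y,
    splits_separable_of_roots (D := D) ((fib_monic hF (hFD ▸ hD)).map _) (by
      rw [(fib_monic hF (hFD ▸ hD)).natDegree_map, fib_natDegree hF, hFD]) _ ?_ ?_⟩
  · rw [Finset.card_image_of_injOn, Finset.card_range]
    intro i hi j hj h
    have h1 := congrArg (fun f => HahnSeries.coeff f (-1)) h
    simp only [coeff_twist_pow] at h1
    have h2 := mul_right_cancel₀ hc h1
    simp only [mul_neg, mul_one, neg_neg, zpow_natCast] at h2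
    exact hζ.pow_inj (by simpa using hi) (by simpa using hj) h2
  · intro z hz
    obtain ⟨i, -, rfl⟩ := Finset.mem_image.mp hz
    exact (hfib _).mpr (htw i)

end infinity

section setup

variable {k K₀ Ω : Type*} [Field k] [Field K₀] [Field Ω] [Algebra k[X] K₀] [IsFractionRing k[X] K₀]
  [Algebra K₀ Ω] [Algebra k[X] Ω] [IsScalarTower k[X] K₀ Ω] [Algebra k Ω] [IsScalarTower k k[X] Ω]

lemma exists_lift {E : Type*} [Field E] {θ : k[X] →+* E} (hθ : Function.Injective θ) :
    ∃ ψ : K₀ →+* E, ψ.comp (algebraMap k[X] K₀) = θ :=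
  ⟨IsFractionRing.lift hθ, RingHom.ext fun p => IsFractionRing.lift_algebraMap hθ p⟩

/-- Separability follows from the `D` distinct roots at infinity. -/
lemma isGalois {D : ℕ} (hD : 0 < D) (F : k[X]) (hF : F.Monic) (hFD : F.natDegree = D)
    (hDk : (D : k) ≠ 0) {ζ : k} (hζ : IsPrimitiveRoot ζ D)
    [IsSplittingField K₀ Ω ((fib F).map (algebraMap k[X] K₀))] : IsGalois K₀ Ω := by
  obtain ⟨s, hs⟩ := fib_inf hD F hF hFD hDk hζ
  obtain ⟨ψ, hψ⟩ : ∃ ψ : K₀ →+* LaurentSeries k, ψ.comp (algebraMap k[X] K₀) = infHom k D :=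
    exists_lift (infHom_injective hD)
  refine IsGalois.of_separable_splitting_field (p := (fib F).map (algebraMap k[X] K₀)) ?_
  rw [← separable_map ψ, Polynomial.map_map, hψ, hs]
  exact separable_prod s

/-- The norm of an integral element is a polynomial in `t`. -/
lemma exists_norm [FiniteDimensional K₀ Ω] [IsGalois K₀ Ω] {u : Ω} (hu : IsIntegral k[X] u) :
    ∃ P : k[X], algebraMap k[X] Ω P = ∏ h : Ω ≃ₐ[K₀] Ω, h • u := by
  obtain ⟨P, hP⟩ := IsIntegrallyClosed.isIntegral_iff.mp (Algebra.isIntegral_norm K₀ hu)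
  refine ⟨P, ?_⟩
  rw [IsScalarTower.algebraMap_apply k[X] K₀ Ω, hP, Algebra.norm_eq_prod_automorphisms]
  rfl

variable (k Ω) in
/-- The elements integral over `k[t]`, as a `k`-algebra. -/
noncomputable def intClosure : Subalgebra k Ω := (integralClosure k[X] Ω).restrictScalars k

lemma mem_intClosure {u : Ω} : u ∈ intClosure k Ω ↔ IsIntegral k[X] u := Iff.rfl

/-- Product formula for integral elements: the total order at infinity is read off the degree of the
norm. -/
lemma norm_order [FiniteDimensional K₀ Ω] [IsGalois K₀ Ω] {D : ℕ} (hD : 0 < D)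
    {Φ : Ω →+* LaurentSeries k} (hΦ : Φ.comp (algebraMap k[X] Ω) = infHom k D)
    {u : Ω} (hu : u ∈ intClosure k Ω) (hu0 : u ≠ 0) :
    ∃ P : k[X], algebraMap k[X] Ω P = ∏ h : Ω ≃ₐ[K₀] Ω, h • u ∧
      ∑ h : Ω ≃ₐ[K₀] Ω, (Φ (h • u)).order = -((D * P.natDegree : ℕ) : ℤ) := by
  obtain ⟨P, hP⟩ := exists_norm (K₀ := K₀) (mem_intClosure.mp hu)
  refine ⟨P, hP, ?_⟩
  have h0 : ∀ h : Ω ≃ₐ[K₀] Ω, Φ (h • u) ≠ 0 := fun h =>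
    (map_ne_zero_iff _ Φ.injective).mpr ((smul_ne_zero_iff_ne h).mpr hu0)
  have hP0 : P ≠ 0 := by
    rintro rfl
    rw [map_zero] at hP
    exact (Finset.prod_ne_zero_iff.mpr fun h _ => (smul_ne_zero_iff_ne h).mpr hu0) hP.symm
  rw [← order_infHom hD P hP0, ← hΦ, RingHom.comp_apply, hP, map_prod]
  have key : ∀ s : Finset (Ω ≃ₐ[K₀] Ω), (∏ h ∈ s, Φ (h • u)).order =
      ∑ h ∈ s, (Φ (h • u)).order := by
    classical
    intro s
    induction s using Finset.induction_on with
    | empty => simp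
    | insert a s ha ih =>
      rw [Finset.prod_insert ha, Finset.sum_insert ha, HahnSeries.order_mul (h0 a)
        (Finset.prod_ne_zero_iff.mpr fun h _ => h0 h), ih]
  exact (key _).symm

lemma splits_Ω (F : k[X]) [IsSplittingField K₀ Ω ((fib F).map (algebraMap k[X] K₀))] :
    ((fib F).map (algebraMap k[X] Ω)).Splits := by
  rw [IsScalarTower.algebraMap_eq k[X] K₀ Ω, ← Polynomial.map_map]
  exact IsSplittingField.splits Ω _

lemma isRoot_fib {F : k[X]} {x : Ω} : ((fib F).map (algebraMap k[X] Ω)).IsRoot x ↔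
    aeval x F = algebraMap k[X] Ω X := by
  rw [fib_map, IsRoot, eval_sub, eval_C, sub_eq_zero, eval_map, aeval_def,
    IsScalarTower.algebraMap_eq k k[X] Ω]
  rfl

lemma iter_monic {g : k[X]} (hg : g.Monic) (hgd : g.natDegree ≠ 0) (L : ℕ) :
    (InftyData.iter g L).Monic := by
  induction L with
  | zero => exact monic_X
  | succ L ih =>
    rw [InftyData.iter, Function.iterate_succ_apply']
    exact hg.comp ih (by
      change (InftyData.iter g L).natDegree ≠ 0
      rw [InftyData.natDegree_iter]; exact pow_ne_zero _ hgd)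

/-- The data at infinity of the splitting field of `g^L(Z) - t`. -/
theorem exists_inftyData {d L : ℕ} (hd : 2 ≤ d) (g : k[X]) (hg : g.Monic) (hgd : g.natDegree = d)
    (hdk : (d : k) ≠ 0) {ζ : k} (hζ : IsPrimitiveRoot ζ (d ^ L))
    [IsSplittingField K₀ Ω ((fib (InftyData.iter g L)).map (algebraMap k[X] K₀))]
    [FiniteDimensional K₀ Ω] [IsGalois K₀ Ω] :
    ∃ (Φ : Ω →+* LaurentSeries k) (σ : Ω ≃ₐ[K₀] Ω) (y : Ω),
      InftyData d L g Φ (intClosure k Ω) σ ζ y ∧ Φ.comp (algebraMap k[X] Ω) = infHom k (d ^ L) ∧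
      (fun x => aeval x g)^[L] y = algebraMap k[X] Ω X := by
  set F := InftyData.iter g L with hFdef
  have hF : F.Monic := by
    exact iter_monic hg (by omega) L
  have hFD : F.natDegree = d ^ L := by rw [hFdef, InftyData.natDegree_iter, hgd]
  have hD : 0 < d ^ L := by positivity
  have hDk : ((d ^ L : ℕ) : k) ≠ 0 := by push_cast; exact pow_ne_zero _ hdk
  obtain ⟨s, hs⟩ := fib_inf hD F hF hFD hDk hζ
  obtain ⟨Φ, hΦ⟩ := exists_hom (K₀ := K₀) (Ω := Ω) F (infHom k (d ^ L)) (infHom_injective hD)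
    (by rw [hs]; exact splits_prod s)
  have hζ0 : ζ ≠ 0 := hζ.ne_zero hD.ne'
  have htw : ((twist ζ hζ0).comp Φ).comp (algebraMap k[X] Ω) = Φ.comp (algebraMap k[X] Ω) := by
    rw [RingHom.comp_assoc, hΦ]
    exact twist_infHom hζ0 hζ.pow_eq_one
  obtain ⟨σ, hσ⟩ := exists_conj (k := k) (K₀ := K₀) Φ ((twist ζ hζ0).comp Φ) htw.symm
  obtain ⟨z, hz1, hz2, hz3⟩ := exists_root_inf hD F hF hFD hDk
  have hroot : ∃ y : Ω, Φ y = z ∧ aeval y F = algebraMap k[X] Ω X := by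
    have hsp := splits_Ω (K₀ := K₀) (Ω := Ω) F
    have h1 : z ∈ (((fib F).map (algebraMap k[X] Ω)).map Φ).roots := by
      rw [mem_roots (((fib_monic hF (hFD ▸ hD)).map _).map _).ne_zero, Polynomial.map_map, hΦ,
        fib_map, IsRoot, eval_sub, eval_C, infHom_X, sub_eq_zero, eval_map, ← hz3]
      congr 1
      exact RingHom.ext (infHom_C _)
    rw [hsp.roots_map] at h1
    obtain ⟨y, hy, rfl⟩ := Multiset.mem_map.mp h1
    refine ⟨y, rfl, ?_⟩
    rw [mem_roots ((fib_monic hF (hFD ▸ hD)).map _).ne_zero] at hy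
    exact isRoot_fib.mp hy
  obtain ⟨y, hy, hyF⟩ := hroot
  rw [hFdef, InftyData.aeval_iter] at hyF
  have halg : ∀ c : k, algebraMap k Ω c = algebraMap k[X] Ω (C c) := fun c => by
    rw [IsScalarTower.algebraMap_apply k k[X] Ω]; rfl
  have hfix : ∀ (h : Ω ≃ₐ[K₀] Ω) (p : k[X]), h • algebraMap k[X] Ω p = algebraMap k[X] Ω p := by
    intro h p
    rw [IsScalarTower.algebraMap_apply k[X] K₀ Ω]
    exact h.commutes _
  refine ⟨Φ, σ, y, ⟨hg, hgd, ?_, ?_, ?_, ?_, hζ, ?_, ?_, ?_, ?_, ?_⟩, hΦ, hyF⟩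
  · intro c
    rw [halg, ← RingHom.comp_apply, hΦ, infHom_C]
  · intro h c; rw [halg, hfix]
  · intro h u hu
    exact (mem_intClosure.mp hu).map (h.toAlgHom.restrictScalars k[X])
  · intro u hu hu0
    obtain ⟨P, -, h2⟩ := norm_order (K₀ := K₀) hD hΦ hu hu0
    rw [h2]; simp only [Left.neg_nonpos_iff]; positivity
  · intro u j
    rw [AlgEquiv.smul_def, ← hσ, RingHom.comp_apply, coeff_twist]
  · refine ⟨fib F, fib_monic hF (hFD ▸ hD), ?_⟩
    rw [eval₂_eq_eval_map]
    exact isRoot_fib.mpr (by rw [InftyData.aeval_iter, hyF])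
  · rw [hy, hz1]
  · rw [hy, hz2]
  · intro h; rw [hyF, hfix]

end setup

end Places

/-! ### A basis of monomials in the roots -/

namespace Places

section basis

variable {k K₀ Ω : Type*} [Field k] [Field K₀] [Field Ω] [Algebra k[X] K₀] [IsFractionRing k[X] K₀]
  [Algebra K₀ Ω] [Algebra k[X] Ω] [IsScalarTower k[X] K₀ Ω] [Algebra k Ω] [IsScalarTower k k[X] Ω]

/-- The span of the monomials in the roots with all exponents `< D`. -/
noncomputable def box (K₀ : Type*) {Ω : Type*} [Field K₀] [Field Ω] [Algebra K₀ Ω]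
    (S : Finset Ω) (D : ℕ) : Submodule K₀ Ω :=
  Submodule.span K₀ (Set.range fun e : S → Fin D => ∏ x : S, (x : Ω) ^ (e x : ℕ))

/-- The relation `F(x) = t`, with `F` monic of degree `D`, reduces the exponent `D` to lower ones; `t` lies
in the base field `K₀`. -/
lemma box_mul {S : Finset Ω} {D : ℕ} {F : k[X]} (hF : F.Monic)
    (hFD : F.natDegree = D) (hS : ∀ x ∈ S, aeval x F = algebraMap k[X] Ω X)
    {x v : Ω} (hx : x ∈ S) (hv : v ∈ box K₀ S D) : x * v ∈ box K₀ S D := by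
  classical
  rw [box] at hv
  induction hv using Submodule.span_induction with
  | zero => simp
  | add v w _ _ hv hw => rw [mul_add]; exact Submodule.add_mem _ hv hw
  | smul c v _ hv => rw [mul_smul_comm]; exact Submodule.smul_mem _ _ hv
  | mem v hv =>
    obtain ⟨e, rfl⟩ := hv
    set x' : S := ⟨x, hx⟩
    set r : Ω := ∏ z ∈ Finset.univ.erase x', (z : Ω) ^ (e z : ℕ)
    have h1 : ∀ n, n < D → x ^ n * r ∈ box K₀ S D := by
      intro n hn
      apply Submodule.subset_span
      refine ⟨Function.update e x' ⟨n, hn⟩, ?_⟩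
      simp only
      rw [← Finset.mul_prod_erase _ _ (Finset.mem_univ x')]
      congr 1
      · simp [x']
      · apply Finset.prod_congr rfl
        intro z hz
        rw [Function.update_of_ne (Finset.ne_of_mem_erase hz)]
    have h2 : x ^ D * r ∈ box K₀ S D := by
      have h3 := hS x hx
      rw [aeval_eq_sum_range, hFD, Finset.sum_range_succ, ← hFD, hF.coeff_natDegree, one_smul,
        hFD, ← eq_sub_iff_add_eq'] at h3
      rw [h3, sub_mul, Finset.sum_mul]
      refine Submodule.sub_mem _ ?_ (Submodule.sum_mem _ fun i hi => ?_)
      · rw [IsScalarTower.algebraMap_apply k[X] K₀ Ω, ← Algebra.smul_def]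
        have := h1 0 (hFD ▸ (e x').pos)
        rw [pow_zero, one_mul] at this
        exact Submodule.smul_mem _ _ this
      · rw [smul_mul_assoc, Algebra.smul_def, IsScalarTower.algebraMap_apply k k[X] Ω,
          IsScalarTower.algebraMap_apply k[X] K₀ Ω, ← Algebra.smul_def]
        exact Submodule.smul_mem _ _ (h1 i (by simpa using hi))
    simp only
    rw [← Finset.mul_prod_erase _ _ (Finset.mem_univ x'), ← mul_assoc, ← pow_succ']
    rcases Nat.lt_or_ge ((e x' : ℕ) + 1) D with h | h
    · exact h1 _ h
    · have : (e x' : ℕ) + 1 = D := le_antisymm (e x').2 h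
      rw [this]
      exact h2

lemma box_eq_top {S : Finset Ω} {D : ℕ} (hD : 0 < D) {F : k[X]} (hF : F.Monic)
    (hFD : F.natDegree = D) (hS : ∀ x, x ∈ S ↔ aeval x F = algebraMap k[X] Ω X)
    [IsSplittingField K₀ Ω ((fib F).map (algebraMap k[X] K₀))] : box K₀ S D = ⊤ := by
  have h1 : (1 : Ω) ∈ box K₀ S D := Submodule.subset_span ⟨fun _ => ⟨0, hD⟩, by simp⟩
  have h2 : ∀ a : Ω, ∀ v ∈ box K₀ S D, a * v ∈ box K₀ S D := by
    intro a
    have ha : a ∈ Algebra.adjoin K₀ (((fib F).map (algebraMap k[X] K₀)).rootSet Ω) := by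
      rw [IsSplittingField.adjoin_rootSet Ω]; trivial
    induction ha using Algebra.adjoin_induction with
    | mem x hx =>
      intro v hv
      refine box_mul hF hFD (fun x hx => (hS x).mp hx) ((hS x).mpr ?_) hv
      rw [mem_rootSet] at hx
      have := hx.2
      rw [aeval_map_algebraMap, aeval_def, eval₂_eq_eval_map] at this
      exact isRoot_fib.mp this
    | algebraMap r => intro v hv; rw [← Algebra.smul_def]; exact Submodule.smul_mem _ _ hv
    | add x y _ _ hx hy => intro v hv; rw [add_mul]; exact Submodule.add_mem _ (hx v hv) (hy v hv)
    | mul x y _ _ hx hy => intro v hv; rw [mul_assoc]; exact hx _ (hy v hv)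
  rw [eq_top_iff]
  intro a _
  simpa using h2 a 1 h1

/-- A `K₀`-basis of the splitting field made of monomials in the roots; together with the powers of `t` it
yields `k`-linearly independent functions with explicitly bounded poles. -/
lemma exists_basis {S : Finset Ω} {D : ℕ} (hD : 0 < D) {F : k[X]} (hF : F.Monic)
    (hFD : F.natDegree = D) (hS : ∀ x, x ∈ S ↔ aeval x F = algebraMap k[X] Ω X)
    (hcard : S.card = D)
    [IsSplittingField K₀ Ω ((fib F).map (algebraMap k[X] K₀))]
    [FiniteDimensional K₀ Ω] [IsGalois K₀ Ω] :
    ∃ m : (Ω ≃ₐ[K₀] Ω) → MvPolynomial S k, (∀ j, (m j).totalDegree ≤ D * D) ∧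
      LinearIndependent k fun p : ℕ × (Ω ≃ₐ[K₀] Ω) =>
        (algebraMap k[X] Ω X) ^ p.1 * MvPolynomial.aeval (fun x : S => (x : Ω)) (m p.2) := by
  obtain ⟨b, hb1, hb2, hb3⟩ := exists_linearIndependent K₀
    (Set.range fun e : S → Fin D => ∏ x : S, (x : Ω) ^ (e x : ℕ))
  have hb4 : Submodule.span K₀ b = ⊤ := hb2.trans (box_eq_top hD hF hFD hS)
  have hbas := Module.finrank_eq_nat_card_basis (Module.Basis.mk hb3 (by simp [hb4]))
  have hfin : b.Finite := (Set.finite_range _).subset hb1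
  have : Finite b := hfin
  obtain ⟨eq⟩ : Nonempty ((Ω ≃ₐ[K₀] Ω) ≃ b) := by
    refine Finite.card_eq.mp ?_
    rw [← hbas, IsGalois.card_aut_eq_finrank]
  have hm : ∀ j : Ω ≃ₐ[K₀] Ω, ∃ m : MvPolynomial S k, m.totalDegree ≤ D * D ∧
      MvPolynomial.aeval (fun x : S => (x : Ω)) m = (eq j : Ω) := by
    intro j
    obtain ⟨e, he⟩ := hb1 (eq j).2
    refine ⟨∏ x : S, MvPolynomial.X x ^ (e x : ℕ), ?_, ?_⟩
    · refine (MvPolynomial.totalDegree_finsetProd _ _).trans ?_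
      calc _ ≤ ∑ x : S, D := Finset.sum_le_sum fun x _ => by
            rw [MvPolynomial.totalDegree_X_pow]; exact (e x).2.le
        _ = D * D := by simp [hcard]
    · rw [map_prod, ← he]
      simp
  choose m hm1 hm2 using hm
  refine ⟨m, hm1, ?_⟩
  have h1 : LinearIndependent K₀ fun j => (eq j : Ω) := hb3.comp _ eq.injective
  have h2 : LinearIndependent k[X] fun j => (eq j : Ω) := by
    refine h1.restrict_scalars ?_
    intro p q h
    simpa [Algebra.smul_def] using h
  have h3 : LinearIndependent k fun n : ℕ => (X : k[X]) ^ n := by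
    simpa [Polynomial.coe_basisMonomials, ← X_pow_eq_monomial] using
      (basisMonomials k).linearIndependent
  convert linearIndependent_smul (S := k[X]) h3 h2 using 2 with p
  rw [hm2, Algebra.smul_def, map_pow]

end basis

end Places

/-! ### Unramified places and Frobenius elements -/

namespace Places

section generic

/-- An injective endomorphism of a domain extends to its field of fractions. -/
lemma exists_extend {R E : Type*} [CommRing R] [IsDomain R] [Field E] [Algebra R E]
    [IsFractionRing R E] (m : R →+* R) (hm : Function.Injective m) :
    ∃ φ : E →+* E, φ.comp (algebraMap R E) = (algebraMap R E).comp m :=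
  have h : Function.Injective ((algebraMap R E).comp m) :=
    (IsFractionRing.injective R E).comp hm
  ⟨IsFractionRing.lift h, RingHom.ext fun p => IsFractionRing.lift_algebraMap h p⟩

/-- Integral elements have integral images. -/
lemma exists_restrict {A Ω R E : Type*} [CommRing A] [Field Ω] [Algebra A Ω] [CommRing R]
    [IsDomain R] [IsIntegrallyClosed R] [Field E] [Algebra R E] [IsFractionRing R E]
    (Φ : Ω →+* E) (θ : A →+* R) (h : Φ.comp (algebraMap A Ω) = (algebraMap R E).comp θ)
    {S : Type*} [CommRing S] (j : S →+* Ω) (hj : ∀ u, IsIntegral A (j u)) :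
    ∃ Ψ : S →+* R, ∀ u, algebraMap R E (Ψ u) = Φ (j u) := by
  have h1 : ∀ u : S, ∃ r : R, algebraMap R E r = Φ (j u) := by
    intro u
    apply IsIntegrallyClosed.isIntegral_iff.mp
    obtain ⟨P, hP, hPu⟩ := hj u
    refine ⟨P.map θ, hP.map θ, ?_⟩
    rw [eval₂_map, ← h, ← hom_eval₂, hPu, map_zero]
  choose r hr using h1
  have hi := IsFractionRing.injective R E
  exact ⟨{ toFun := r
           map_one' := hi (by simp [hr])
           map_zero' := hi (by simp [hr])
           map_add' := fun x y => hi (by simp [hr])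
           map_mul' := fun x y => hi (by simp [hr]) }, hr⟩

end generic

section setup

variable {k K₀ Ω : Type*} [Field k] [Field K₀] [Field Ω] [Algebra k[X] K₀] [IsFractionRing k[X] K₀]
  [Algebra K₀ Ω] [Algebra k[X] Ω] [IsScalarTower k[X] K₀ Ω] [Algebra k Ω] [IsScalarTower k k[X] Ω]
  {K : Type*} [Field K]

/-- The coefficientwise Frobenius fixes the expansion at `t = a` because `a` is rational over `k`. -/
lemma finHom_frob (ρ : k →+* K) {q : ℕ} [Fact q.Prime] [CharP K q] (hk : ∀ c : k, c ^ q = c)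
    (a : k) : (PowerSeries.map (frobenius K q)).comp (finHom ρ a) = finHom ρ a := by
  apply Polynomial.ringHom_ext
  · intro c
    simp [finHom_C, frobenius_def, ← map_pow, hk]
  · simp [finHom_X, frobenius_def, ← map_pow, hk]

/-- Above every unramified point `t = a` there is a place, and it has a Frobenius element. -/
lemma exists_frob [IsAlgClosed K] (ρ : k →+* K) {q : ℕ} [Fact q.Prime] [CharP K q]
    (hk : ∀ c : k, c ^ q = c) (F : k[X]) (hF : F.Monic) (hD : 0 < F.natDegree)
    [IsSplittingField K₀ Ω ((fib F).map (algebraMap k[X] K₀))] [Normal K₀ Ω] (a : k)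
    (hsep : (F.map ρ - C (ρ a)).Separable) :
    ∃ (Ψ : intClosure k Ω →+* PowerSeries K) (s : Ω ≃ₐ[K₀] Ω),
      (∀ (u : intClosure k Ω) (p : k[X]), (u : Ω) = algebraMap k[X] Ω p → Ψ u = finHom ρ a p) ∧
      ∀ u v : intClosure k Ω, (v : Ω) = s u → PowerSeries.constantCoeff (Ψ u) ^ q =
        PowerSeries.constantCoeff (Ψ v) := by
  have hci : Function.Injective (algebraMap (PowerSeries K) (LaurentSeries K)) :=
    IsFractionRing.injective _ _
  obtain ⟨Φ, hΦ⟩ := exists_hom (K₀ := K₀) (Ω := Ω) F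
    ((algebraMap (PowerSeries K) (LaurentSeries K)).comp (finHom ρ a))
    (hci.comp (finHom_injective ρ a)) (splits_fin ρ a F hF hD hsep)
  obtain ⟨Ψ, hΨ⟩ := exists_restrict Φ (finHom ρ a) hΦ (intClosure k Ω).val.toRingHom
    (fun u => mem_intClosure.mp u.2)
  have hfi : Function.Injective (PowerSeries.map (frobenius K q)) := by
    intro f g h
    ext n
    have := congrArg (PowerSeries.coeff n) h
    exact (frobenius K q).injective (by simpa using this)
  obtain ⟨φ, hφ⟩ := exists_extend (E := LaurentSeries K) _ hfi
  obtain ⟨s, hs⟩ := exists_conj (k := k) (K₀ := K₀) Φ (φ.comp Φ) (by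
    rw [RingHom.comp_assoc, hΦ, ← RingHom.comp_assoc, hφ, RingHom.comp_assoc, finHom_frob ρ hk])
  refine ⟨Ψ, s, ?_, ?_⟩
  · intro u p hu
    apply hci
    rw [hΨ]
    change Φ u = _
    rw [hu, ← RingHom.comp_apply, hΦ]; rfl
  · intro u v hv
    have h1 : PowerSeries.map (frobenius K q) (Ψ u) = Ψ v := by
      apply hci
      rw [← RingHom.comp_apply, ← hφ, RingHom.comp_apply, hΨ, hΨ]
      change φ (Φ u) = Φ v
      rw [hv, ← hs]; rfl
    rw [← h1, ← PowerSeries.coeff_zero_eq_constantCoeff_apply,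
      ← PowerSeries.coeff_zero_eq_constantCoeff_apply, PowerSeries.coeff_map, frobenius_def]

end setup

section place

variable {k K₀ Ω : Type*} [Field k] [Field K₀] [Field Ω] [Algebra k[X] K₀] [IsFractionRing k[X] K₀]
  [Algebra K₀ Ω] [Algebra k[X] Ω] [IsScalarTower k[X] K₀ Ω] [Algebra k Ω] [IsScalarTower k k[X] Ω]
  {K : Type*} [Field K] [FiniteDimensional K₀ Ω] [IsGalois K₀ Ω] [DecidableEq Ω]

open InftyData in
/-- The place of `exists_frob` and all its translates in the sense of `IsPlace`: translating by `τ`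
conjugates the Frobenius element `s` by `τ`. If `a` is a value of the iterate on `k`, the root above `a`
with residue in `k` is fixed by `s`. -/
lemma exists_place {d L : ℕ} (hd : 2 ≤ d) (g : k[X])
    [IsSplittingField K₀ Ω ((fib (iter g L)).map (algebraMap k[X] K₀))]
    {Φ : Ω →+* LaurentSeries k} {σ : Ω ≃ₐ[K₀] Ω} {y : Ω} {ζ : k}
    (D : InftyData d L g Φ (intClosure k Ω) σ ζ y)
    (hy : (dyn g)^[L] y = algebraMap k[X] Ω X)
    [IsAlgClosed K] (ρ : k →+* K) {q : ℕ} [Fact q.Prime] [CharP K q]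
    (hk : ∀ c : k, c ^ q = c) (a : k) (hsep : ((iter g L).map ρ - C (ρ a)).Separable) :
    ∃ (Ψ : intClosure k Ω →+* PowerSeries K) (s : Ω ≃ₐ[K₀] Ω),
      (∀ τ g₀, s * τ = τ * g₀ → D.IsPlace hd ρ q a g₀ (Ψ.comp (D.actI τ))) ∧
      ((∃ c : k, (iter g L).eval c = a) → 0 < Odometer.numFix (lev d L g σ y) L s) := by
  have hF : (iter g L).Monic := iter_monic D.monic (by rw [D.natDegree]; omega) L
  have hFD : (iter g L).natDegree = d ^ L := by rw [natDegree_iter, D.natDegree]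
  have hD : 0 < (iter g L).natDegree := by rw [hFD]; positivity
  obtain ⟨Ψ, s, h1, h2⟩ := exists_frob (K₀ := K₀) (Ω := Ω) ρ hk (iter g L) hF hD a hsep
  have halg : ∀ c, Ψ (algebraMap k _ c) = PowerSeries.C (ρ c) := by
    intro c
    rw [h1 _ (C c), finHom_C]
    change algebraMap k Ω c = _
    rw [IsScalarTower.algebraMap_apply k k[X] Ω]; rfl
  have hX : ∀ u : intClosure k Ω, (u : Ω) = (dyn g)^[L] y →
      Ψ u = PowerSeries.C (ρ a) + PowerSeries.X := by
    intro u hu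
    rw [h1 u X (by rw [hu, hy]), finHom_X]
  have hevalF : ∀ u : intClosure k Ω, (dyn g)^[L] (u : Ω) = (dyn g)^[L] y →
      ((iter g L).map ρ - C (ρ a)).IsRoot (PowerSeries.constantCoeff (Ψ u)) := by
    intro u hu
    have : Ψ (aeval u (iter g L)) = PowerSeries.C (ρ a) + PowerSeries.X := by
      apply hX
      rw [← hu]
      change (intClosure k Ω).val (aeval u (iter g L)) = _
      rw [← aeval_algHom_apply, aeval_iter]; rfl
    have h3 := congrArg PowerSeries.constantCoeff this
    rw [aeval_def, hom_eval₂, hom_eval₂] at h3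
    have h4 : PowerSeries.constantCoeff.comp (Ψ.comp (algebraMap k (intClosure k Ω))) = ρ := by
      ext c; simp [halg]
    rw [h4] at h3
    simpa [IsRoot, sub_eq_zero, eval_map] using h3
  have hχ : (PowerSeries.constantCoeff.comp Ψ).comp (algebraMap k (intClosure k Ω)) = ρ := by
    ext c; simp [halg]
  refine ⟨Ψ, s, ?_, ?_⟩
  · intro τ g₀ hτ
    refine ⟨?_, ?_, ?_, ?_⟩
    · intro c
      rw [← halg]
      exact congrArg Ψ (Subtype.ext (D.smul_alg τ c))
    · intro u hu
      apply hX
      change τ • (u : Ω) = _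
      rw [hu]; exact D.fix τ
    · intro u
      apply h2
      change τ • (g₀ • (u : Ω)) = s • (τ • (u : Ω))
      rw [← mul_smul, ← mul_smul, hτ]
    · intro x
      obtain ⟨w, hw⟩ : ∃ w, w = D.actI τ (D.evI hd (MvPolynomial.X x)) := ⟨_, rfl⟩
      have hw0 : (w : Ω) = τ • (x : Ω) := by
        rw [hw]; change τ • (D.evI hd (MvPolynomial.X x) : Ω) = _
        rw [D.coe_evI]; simp
      have hroot := hevalF w (by
        rw [hw0, D.iter_smul, (D.mem_lev hd le_rfl).mp x.2]; exact D.fix τ)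
      have h5 : PowerSeries.constantCoeff ((Ψ.comp (D.actI τ))
          (D.evI hd (aeval (MvPolynomial.X x) (derivative (iter g L))))) =
          (derivative ((iter g L).map ρ - C (ρ a))).eval (PowerSeries.constantCoeff (Ψ w)) := by
        rw [← aeval_algHom_apply, aeval_def, RingHom.comp_apply, hom_eval₂, hom_eval₂, hom_eval₂,
          ← hw, derivative_sub, derivative_C, sub_zero, derivative_map, eval_map]
        congr 1
        ext c
        have : D.actI τ (algebraMap k (intClosure k Ω) c) = algebraMap k (intClosure k Ω) c :=
          Subtype.ext (D.smul_alg τ c)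
        simp [this, halg]
      rw [h5]
      exact hsep.eval₂_derivative_ne_zero (RingHom.id K) (by simpa using hroot)
  · rintro ⟨c, hc⟩
    let Y : lev d L g σ y L → intClosure k Ω := fun x => D.evI hd (MvPolynomial.X x)
    have hY : ∀ x, (Y x : Ω) = x := fun x => by
      change (D.evI hd (MvPolynomial.X x) : Ω) = _
      rw [D.coe_evI]; simp
    have hyL : y ∈ lev d L g σ y L := (D.mem_lev hd le_rfl).mpr rfl
    have h3 : (iter g L).map (algebraMap k (intClosure k Ω)) -
        C (aeval (Y ⟨y, hyL⟩) (iter g L)) = ∏ x, (X - C (Y x)) := by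
      apply Polynomial.map_injective (intClosure k Ω).val.toRingHom Subtype.val_injective
      have e1 : (intClosure k Ω).val.toRingHom.comp (algebraMap k (intClosure k Ω)) =
        algebraMap k Ω := rfl
      have e2 : (intClosure k Ω).val.toRingHom (aeval (Y ⟨y, hyL⟩) (iter g L)) =
          (dyn g)^[L] y := by
        change (intClosure k Ω).val (aeval (Y ⟨y, hyL⟩) (iter g L)) = _
        rw [← aeval_algHom_apply, aeval_iter]
        change (dyn g)^[L] (Y ⟨y, hyL⟩ : Ω) = _
        rw [hY]
      rw [Polynomial.map_sub, Polynomial.map_map, Polynomial.map_C, e1, e2, Polynomial.map_prod]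
      have e3 : ∀ x : lev d L g σ y L, (X - C (Y x)).map (intClosure k Ω).val.toRingHom = X - C (x : Ω) := by
        intro x
        rw [Polynomial.map_sub, map_X, map_C]
        change X - C (Y x : Ω) = _
        rw [hY]
      simp only [e3]
      rw [Finset.prod_coe_sort (lev d L g σ y L) fun x => X - C x]
      have e4 : ((iter g L).map (algebraMap k Ω)).natDegree = d ^ L := by
        rw [hF.natDegree_map, hFD]
      apply splits_separable_of_roots (D := d ^ L)
      · refine (hF.map _).sub_of_left (degree_C_le.trans_lt ?_)
        rw [← natDegree_pos_iff_degree_pos, e4]; positivity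
      · rw [natDegree_sub_C, e4]
      · rw [← D.card_lev hd, Fintype.card_coe]
      · intro z hz
        rw [IsRoot, eval_sub, eval_C, sub_eq_zero, eval_map, ← aeval_def, aeval_iter]
        exact (D.mem_lev hd le_rfl).mp hz
    have h4 := congrArg (Polynomial.map (PowerSeries.constantCoeff.comp Ψ)) h3
    rw [Polynomial.map_sub, Polynomial.map_map, hχ, map_C, Polynomial.map_prod] at h4
    have h5 : PowerSeries.constantCoeff.comp Ψ (aeval (Y ⟨y, hyL⟩) (iter g L)) = ρ a := by
      have : Ψ (aeval (Y ⟨y, hyL⟩) (iter g L)) = PowerSeries.C (ρ a) + PowerSeries.X := by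
        apply hX
        change (intClosure k Ω).val (aeval (Y ⟨y, hyL⟩) (iter g L)) = _
        rw [← aeval_algHom_apply, aeval_iter]
        change (dyn g)^[L] (Y ⟨y, hyL⟩ : Ω) = _
        rw [hY]
      rw [RingHom.comp_apply, this]; simp
    rw [h5] at h4
    simp only [Polynomial.map_sub, map_X, map_C] at h4
    have h6 := hsep
    rw [h4, separable_prod_X_sub_C_iff] at h6
    have h7 : (∏ x, (X - C (PowerSeries.constantCoeff.comp Ψ (Y x)))).eval (ρ c) = 0 := by
      rw [← h4, eval_sub, eval_C, eval_map, eval₂_at_apply, hc, sub_self]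
    rw [eval_prod, Finset.prod_eq_zero_iff] at h7
    obtain ⟨x, -, hx⟩ := h7
    rw [eval_sub, eval_X, eval_C, sub_eq_zero] at hx
    have hsx : s • (x : Ω) ∈ lev d L g σ y L := by
      rw [D.mem_lev hd le_rfl, D.iter_smul, (D.mem_lev hd le_rfl).mp x.2]; exact D.fix s
    have h8 := h2 (Y x) (Y ⟨_, hsx⟩) (by rw [hY, hY]; rfl)
    have h9 : (⟨_, hsx⟩ : lev d L g σ y L) = x := by
      apply h6
      change PowerSeries.constantCoeff (Ψ (Y ⟨_, hsx⟩)) = _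
      rw [← h8]
      change (PowerSeries.constantCoeff.comp Ψ (Y x)) ^ q = _
      rw [← hx, ← map_pow, hk]
      exact hx
    rw [Odometer.numFix, Finset.card_pos]
    refine ⟨x, ?_⟩
    exact (@Finset.mem_filter _ _ (fun _ => Classical.propDecidable _) _ _).mpr
      ⟨x.2, congrArg Subtype.val h9⟩

end place

end Places

/-! ### Values of iterates over finite prime fields -/

namespace Places

open InftyData

universe u

section value

variable {k K₀ Ω : Type u} [Field k] [Field K₀] [Field Ω] [Algebra k[X] K₀] [IsFractionRing k[X] K₀]
  [Algebra K₀ Ω] [Algebra k[X] Ω] [IsScalarTower k[X] K₀ Ω] [Algebra k Ω] [IsScalarTower k k[X] Ω]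

/-- An automorphism is determined by its action on the roots of `F(X) = t`. -/
lemma card_aut_le {S : Finset Ω} {D : ℕ} {F : k[X]}
    (hS : ∀ x, x ∈ S ↔ aeval x F = algebraMap k[X] Ω X) (hcard : S.card = D)
    [IsSplittingField K₀ Ω ((fib F).map (algebraMap k[X] K₀))] :
    Nat.card (Ω ≃ₐ[K₀] Ω) ≤ D ^ D := by
  classical
  have hst : ∀ (h : Ω ≃ₐ[K₀] Ω) (x : Ω), x ∈ S → h x ∈ S := by
    intro h x hx
    have e : ∀ p : k[X], h (algebraMap k[X] Ω p) = algebraMap k[X] Ω p := by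
      intro p
      rw [IsScalarTower.algebraMap_apply k[X] K₀ Ω]; exact h.commutes _
    rw [hS] at hx ⊢
    have h2 : h (aeval x F) = aeval (h x) F := by
      rw [aeval_def, aeval_def]
      change (h : Ω →+* Ω) _ = _
      rw [hom_eval₂]
      congr 1
      ext c
      change h (algebraMap k Ω c) = _
      rw [IsScalarTower.algebraMap_apply k k[X] Ω, e]
    rw [← h2, hx, e]
  have hinj : Function.Injective fun (h : Ω ≃ₐ[K₀] Ω) (x : S) => (⟨h x, hst h x x.2⟩ : S) := by
    intro h₁ h₂ he
    have : (h₁ : Ω →ₐ[K₀] Ω) = h₂ := by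
      apply AlgHom.ext_of_adjoin_eq_top
        (IsSplittingField.adjoin_rootSet Ω ((fib F).map (algebraMap k[X] K₀)))
      intro x hx
      have hx0 := (mem_rootSet.mp hx).2
      rw [aeval_def, eval₂_map, ← IsScalarTower.algebraMap_eq, eval₂_eq_eval_map] at hx0
      have hxS := (hS x).mpr (isRoot_fib.mp hx0)
      exact congrArg Subtype.val (congrFun he ⟨x, hxS⟩)
    exact AlgEquiv.coe_toAlgHom_injective this
  have := Nat.card_le_card_of_injective _ hinj
  simpa [hcard] using this

open Classical in
/-- There are at most `D` branch points, since each is the value of `F` at a zero of `F'`. -/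
lemma card_bad_le {K : Type*} [Field K] [IsAlgClosed K] [Fintype k] (ρ : k →+* K)
    (F : k[X]) {D : ℕ} (hF : F.Monic) (hFD : F.natDegree = D) (hDk : (D : k) ≠ 0) :
    (Finset.univ.filter fun a : k => ¬ (F.map ρ - C (ρ a)).Separable).card ≤ D := by
  classical
  have hF' : derivative (F.map ρ) ≠ 0 := by
    intro h
    have h1 := congrArg (coeff · (D - 1)) h
    have hD : 0 < D := by
      rcases Nat.eq_zero_or_pos D with h0 | h0
      · simp [h0] at hDk
      · exact h0
    simp only [coeff_derivative, coeff_map, coeff_zero] at h1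
    rw [Nat.sub_add_cancel hD, ← hFD, hF.coeff_natDegree, hFD, map_one, one_mul] at h1
    apply hDk
    apply ρ.injective
    rw [map_natCast, map_zero, ← h1, ← Nat.cast_succ, Nat.succ_eq_add_one,
      Nat.sub_add_cancel hD]
  have hsub : (Finset.univ.filter fun a : k => ¬ (F.map ρ - C (ρ a)).Separable).image ρ ⊆
      (derivative (F.map ρ)).roots.toFinset.image fun z => (F.map ρ).eval z := by
    intro b hb
    obtain ⟨a, ha, rfl⟩ := Finset.mem_image.mp hb
    have ha := (Finset.mem_filter.mp ha).2
    rw [separable_def, isCoprime_iff_aeval_ne_zero_of_isAlgClosed (k := K) K] at ha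
    push Not at ha
    obtain ⟨z, hz1, hz2⟩ := ha
    rw [Finset.mem_image]
    refine ⟨z, ?_, ?_⟩
    · rw [Multiset.mem_toFinset, mem_roots hF']
      simpa using hz2
    · simpa [sub_eq_zero] using hz1
  calc _ = _ := (Finset.card_image_of_injective _ ρ.injective).symm
    _ ≤ _ := Finset.card_le_card hsub
    _ ≤ _ := Finset.card_image_le
    _ ≤ _ := Multiset.toFinset_card_le _
    _ ≤ _ := card_roots' _
    _ ≤ _ := natDegree_derivative_le _
    _ ≤ (F.map ρ).natDegree := Nat.sub_le _ _
    _ = D := by rw [hF.natDegree_map, hFD]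

/-- Over a prime field, each value `a` of the iterate which is not a branch point contributes `|G|` pairs
`(a, τ)`, whose Frobenius elements all fix a root at level `L`. The proportion of such elements in `G` is
at most `ε`, and each is the Frobenius of at most `3 q` pairs. -/
lemma card_image_le {d L : ℕ} (hd : 2 ≤ d) {ε : ℝ}
    (hL : ∀ (G Ω k : Type u) [Group G] [MulAction G Ω] [Fintype G] [Field k]
      (X : ℕ → Finset Ω) (π : Ω → Ω) (σ : G) (lc : Ω → k) (w : ℕ → k),
      Odometer d L X π σ → Odometer.Mixing d L X π σ lc w →
      ((Finset.univ.filter (fun g : G => 0 < Odometer.numFix X L g)).card : ℝ) ≤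
        ε * Fintype.card G)
    (g : k[X]) (hg : g.Monic) (hgd : g.natDegree = d) (hnd : ¬ IsDickson g d)
    {ζ : k} (hζ : IsPrimitiveRoot ζ (d ^ L)) {q : ℕ} [Fact q.Prime] [CharP k q]
    [Fintype k] [DecidableEq k] (hk : ∀ c : k, c ^ q = c) (hdq : d < q)
    (hq' : (d ^ L) ^ (d ^ L) < q)
    (hq : ∀ n ≤ (d ^ L) ^ (d ^ L), Stepanov.bound (d ^ L) n < q)
    [IsSplittingField K₀ Ω ((fib (iter g L)).map (algebraMap k[X] K₀))] :
    ((Finset.univ.image fun c : k => (iter g L).eval c).card : ℝ) ≤ 3 * ε * q + (d ^ L : ℕ) := by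
  classical
  have hsm : ∀ {R : Type u} [Field R] [CharP R q] (j : ℕ), 0 < j → j < q → (j : R) ≠ 0 := by
    intro R _ _ j h0 hj h
    exact absurd (Nat.le_of_dvd h0 ((CharP.cast_eq_zero_iff R q j).mp h)) (by omega)
  have hdk : (d : k) ≠ 0 := hsm d (by omega) hdq
  have hF : (iter g L).Monic := iter_monic hg (by omega) L
  have hFD : (iter g L).natDegree = d ^ L := by rw [natDegree_iter, hgd]
  have hD : 0 < d ^ L := by positivity
  have hDk : ((d ^ L : ℕ) : k) ≠ 0 := by push_cast; exact pow_ne_zero _ hdk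
  have := IsSplittingField.finiteDimensional Ω ((fib (iter g L)).map (algebraMap k[X] K₀))
  have := isGalois (K₀ := K₀) (Ω := Ω) hD _ hF hFD hDk hζ
  obtain ⟨Φ, σ, y, D, hΦ, hy⟩ := exists_inftyData (K₀ := K₀) (Ω := Ω) hd g hg hgd hdk hζ
  have hS : ∀ x, x ∈ lev d L g σ y L ↔ aeval x (iter g L) = algebraMap k[X] Ω X := by
    intro x
    rw [D.mem_lev hd le_rfl, aeval_iter, ← hy]; rfl
  have hSc : (lev d L g σ y L).card = d ^ L := by rw [← D.card_lev hd, Fintype.card_coe]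
  have hGc := card_aut_le (K₀ := K₀) hS hSc
  obtain ⟨m, hm, hli⟩ := exists_basis (K₀ := K₀) hD hF hFD hS hSc
  have hFix := hL (Ω ≃ₐ[K₀] Ω) Ω k _ _ σ _ _ (D.odometer hd)
    (D.mixing hd hnd (fun j h0 hj => hsm j h0 (by omega)) hdk)
  let K := AlgebraicClosure k
  let ρ : k →+* K := algebraMap k K
  have : CharP K q := charP_of_injective_algebraMap ρ.injective q
  set V := Finset.univ.image fun c : k => (iter g L).eval c with hV
  set A := V.filter fun a => ((iter g L).map ρ - C (ρ a)).Separable with hA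
  set B := Finset.univ.filter fun a : k => ¬ ((iter g L).map ρ - C (ρ a)).Separable with hB
  have hBc : B.card ≤ d ^ L := card_bad_le ρ _ hF hFD hDk
  have hVc : V.card ≤ A.card + B.card := by
    rw [hA, ← Finset.card_filter_add_card_filter_not (s := V)
      (fun a => ((iter g L).map ρ - C (ρ a)).Separable)]
    exact Nat.add_le_add_left (Finset.card_le_card (Finset.filter_subset_filter _
      (Finset.subset_univ _))) _
  have hε0 : 0 ≤ ε := by
    have h1 : (0 : ℝ) < Fintype.card (Ω ≃ₐ[K₀] Ω) := by exact_mod_cast Fintype.card_pos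
    have h2 := (Nat.cast_nonneg _).trans hFix
    exact nonneg_of_mul_nonneg_left h2 h1
  have hkey : (A.card : ℝ) ≤ 3 * ε * q := by
    rcases A.eq_empty_or_nonempty with h0 | ⟨a₀, ha₀⟩
    · rw [h0]; simp only [Finset.card_empty, Nat.cast_zero]; positivity
    obtain ⟨Ψ₀, -⟩ := exists_place hd g D hy ρ hk a₀ (Finset.mem_filter.mp ha₀).2
    have hplace : ∀ a : k, ∃ (Ψ : intClosure k Ω →+* PowerSeries K) (s : Ω ≃ₐ[K₀] Ω), a ∈ A →
        (∀ τ g₀, s * τ = τ * g₀ → D.IsPlace hd ρ q a g₀ (Ψ.comp (D.actI τ))) ∧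
        0 < Odometer.numFix (lev d L g σ y) L s := by
      intro a
      by_cases h : a ∈ A
      · obtain ⟨h1, h2⟩ := Finset.mem_filter.mp h
        obtain ⟨Ψ, s, h3, h4⟩ := exists_place hd g D hy ρ hk a h2
        obtain ⟨c, -, hc⟩ := Finset.mem_image.mp h1
        exact ⟨Ψ, s, fun _ => ⟨h3, h4 ⟨c, hc⟩⟩⟩
      · exact ⟨Ψ₀, 1, fun h' => absurd h' h⟩
    choose Ψ s hΨs using hplace
    let T : (Ω ≃ₐ[K₀] Ω) → k → Finset (Ω ≃ₐ[K₀] Ω) := fun g₀ a =>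
      Finset.univ.filter fun τ => s a * τ = τ * g₀
    have hst : ∀ g₀, ∑ a ∈ A, (T g₀ a).card ≤ 3 * q := by
      intro g₀
      refine D.stepanov hd ?_ m hm ?_ ρ (CharP.cast_eq_zero K q) (fun j => hsm j) ?_ (g₀ := g₀) A Ψ
        (T g₀) ?_
      · intro u hu hu0
        obtain ⟨P, h1, h2⟩ := norm_order (K₀ := K₀) hD hΦ hu hu0
        refine ⟨P, ?_, h2⟩
        rw [← h1]
        change aeval ((fun x => aeval x g)^[L] y) P = _
        rw [hy, aeval_algebraMap_apply, aeval_X_left_apply]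
      · have : (dyn g)^[L] y = algebraMap k[X] Ω X := hy
        rw [this]; exact hli
      · exact hq _ (by rw [← Nat.card_eq_fintype_card]; exact hGc)
      · intro a ha τ hτ
        exact (hΨs a ha).1 τ g₀ (Finset.mem_filter.mp hτ).2
    set Fix := Finset.univ.filter fun h : Ω ≃ₐ[K₀] Ω => 0 < Odometer.numFix (lev d L g σ y) L h
      with hFixd
    -- automorphisms with a fixed root form a union of conjugacy classes
    have hconj : ∀ a ∈ A, ∀ τ : Ω ≃ₐ[K₀] Ω, τ⁻¹ * s a * τ ∈ Fix := by
      intro a ha τ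
      rw [hFixd, Finset.mem_filter]
      refine ⟨Finset.mem_univ _, ?_⟩
      obtain ⟨x, hx⟩ := Finset.card_pos.mp (hΨs a ha).2
      obtain ⟨hx1, hx2⟩ := (@Finset.mem_filter _ _ (fun _ => Classical.propDecidable _) _ _).mp hx
      refine Finset.card_pos.mpr ⟨τ⁻¹ • x,
        (@Finset.mem_filter _ _ (fun _ => Classical.propDecidable _) _ _).mpr
          ⟨(D.odometer hd).smul_mem L le_rfl _ x hx1, ?_⟩⟩
      rw [mul_smul, mul_smul, smul_inv_smul, hx2]
    have hfib : ∀ a ∈ A, Fintype.card (Ω ≃ₐ[K₀] Ω) = ∑ g₀ ∈ Fix, (T g₀ a).card := by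
      intro a ha
      rw [← Finset.card_univ, Finset.card_eq_sum_card_fiberwise (f := fun τ => τ⁻¹ * s a * τ)
        (t := Fix) (fun τ _ => hconj a ha τ)]
      refine Finset.sum_congr rfl fun g₀ _ => congrArg Finset.card ?_
      refine Finset.filter_congr fun τ _ => ?_
      rw [mul_assoc, inv_mul_eq_iff_eq_mul]
    have hsum : A.card * Fintype.card (Ω ≃ₐ[K₀] Ω) ≤ Fix.card * (3 * q) := by
      calc _ = ∑ a ∈ A, ∑ g₀ ∈ Fix, (T g₀ a).card := by
            rw [← Finset.sum_congr rfl hfib, Finset.sum_const, smul_eq_mul]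
        _ = ∑ g₀ ∈ Fix, ∑ a ∈ A, (T g₀ a).card := Finset.sum_comm
        _ ≤ _ := Finset.sum_le_card_nsmul _ _ _ fun g₀ _ => hst g₀
    have hsum' : (A.card : ℝ) * Fintype.card (Ω ≃ₐ[K₀] Ω) ≤ Fix.card * (3 * q) := by
      exact_mod_cast hsum
    have hG0 : (0 : ℝ) < Fintype.card (Ω ≃ₐ[K₀] Ω) := by exact_mod_cast Fintype.card_pos
    have hF2 : (Fix.card : ℝ) * (3 * q) ≤ ε * Fintype.card (Ω ≃ₐ[K₀] Ω) * (3 * q) :=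
      mul_le_mul_of_nonneg_right hFix (by positivity)
    refine le_of_mul_le_mul_right (hsum'.trans (hF2.trans (le_of_eq ?_))) hG0
    ring
  push_cast
  have h1 : (V.card : ℝ) ≤ A.card + B.card := by exact_mod_cast hVc
  have h2 : (B.card : ℝ) ≤ (d : ℝ) ^ L := by exact_mod_cast hBc
  linarith

end value

end Places

universe u

/-- Periodic points lie in the image of every iterate. -/
lemma perCount_le_card_image {k : Type*} [Field k] [Fintype k] [DecidableEq k] (g : k[X]) (L : ℕ) :
    perCount g ≤ (Finset.univ.image fun c : k => (InftyData.iter g L).eval c).card := by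
  have hev : ∀ c : k, (InftyData.iter g L).eval c = (fun x => g.eval x)^[L] c := by
    intro c
    have := InftyData.aeval_iter (k := k) g L c
    simpa only [coe_aeval_eq_eval] using this
  rw [perCount, Nat.card_coe_set_eq, ← Set.ncard_coe_finset]
  refine Set.ncard_le_ncard ?_ (Finset.finite_toSet _)
  rintro α ⟨m, hm, hα⟩
  rw [Finset.mem_coe, Finset.mem_image]
  refine ⟨(fun x => g.eval x)^[m * L - L] α, Finset.mem_univ _, ?_⟩
  have hL : L + (m * L - L) = m * L := Nat.add_sub_cancel' (Nat.le_mul_of_pos_left L hm)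
  rw [hev, ← Function.iterate_add_apply, hL, Function.iterate_mul, Function.iterate_fixed hα]

/-- If `g` is not of Chebyshev type, few points of a large prime field are periodic: these lie in the image
of the iterate of order `L`, whose size `card_image_le` bounds. -/
theorem exists_perCount_le (d : ℕ) (hd : 2 ≤ d) (ε : ℝ) (hε : 0 < ε) :
    ∃ L C : ℕ, ∀ (k : Type u) [Field k] [Fintype k] (q : ℕ) [Fact q.Prime] [CharP k q],
      (∀ c : k, c ^ q = c) → C < q → ∀ ζ : k, IsPrimitiveRoot ζ (d ^ L) →
      ∀ g : k[X], g.Monic → g.natDegree = d → ¬ IsDickson g d → (perCount g : ℝ) ≤ ε * q := by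
  obtain ⟨L, hL⟩ := Odometer.exists_height.{u} d hd (ε / 6) (by positivity)
  obtain ⟨N, hN⟩ := exists_nat_gt ((d ^ L : ℕ) / (ε / 2))
  refine ⟨L, d + (d ^ L) ^ (d ^ L) +
    (Finset.range ((d ^ L) ^ (d ^ L) + 1)).sup (Stepanov.bound (d ^ L)) + N, ?_⟩
  intro k _ _ q _ _ hk hC ζ hζ g hg hgd hnd
  classical
  let P := (Places.fib (InftyData.iter g L)).map (algebraMap k[X] (FractionRing k[X]))
  have : IsScalarTower k k[X] P.SplittingField := by
    refine IsScalarTower.of_algebraMap_eq fun c => ?_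
    rw [IsScalarTower.algebraMap_apply k (FractionRing k[X]) P.SplittingField,
      IsScalarTower.algebraMap_apply k[X] (FractionRing k[X]) P.SplittingField,
      IsScalarTower.algebraMap_apply k k[X] (FractionRing k[X])]
  have hP : IsSplittingField (FractionRing k[X]) P.SplittingField P := inferInstance
  have h1 := Places.card_image_le (K₀ := FractionRing k[X]) (Ω := P.SplittingField) hd hL g hg hgd
    hnd hζ hk (by omega) (by omega) (fun n hn => by
      have := Finset.le_sup (f := Stepanov.bound (d ^ L))
        (Finset.mem_range.mpr (Nat.lt_succ_of_le hn))
      rw [Nat.succ_eq_add_one] at this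
      omega)
  have h2 : (perCount g : ℝ) ≤ _ := (Nat.cast_le.mpr (perCount_le_card_image g L)).trans h1
  have h3 : ((d ^ L : ℕ) : ℝ) < N * (ε / 2) := (div_lt_iff₀ (by positivity)).mp hN
  have h4 : (N : ℝ) * (ε / 2) ≤ q * (ε / 2) := by
    have : (N : ℝ) ≤ q := by exact_mod_cast (by omega : N ≤ q)
    gcongr
  linarith

/-! ### Homomorphisms from rings of algebraic numbers to finite prime fields -/

namespace Spec

/-- A nonconstant integer polynomial has roots modulo arbitrarily large primes. -/
lemma exists_prime_root (m : ℤ[X]) (hm : 0 < m.natDegree) (B : ℕ) :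
    ∃ p : ℕ, p.Prime ∧ B < p ∧ ∃ r : ℤ, (p : ℤ) ∣ m.eval r := by
  set c := m.eval 0 with hc
  by_cases hc0 : c = 0
  · obtain ⟨p, hp, hpp⟩ := Nat.exists_infinite_primes (B + 1)
    exact ⟨p, hpp, by omega, 0, by rw [← hc, hc0]; exact dvd_zero _⟩
  set N : ℤ := (B.factorial : ℤ) with hN
  have hN0 : N ≠ 0 := by rw [hN]; exact_mod_cast B.factorial_ne_zero
  obtain ⟨Q, hQ⟩ : X ∣ m - C c := by
    rw [X_dvd_iff, coeff_sub, coeff_C_zero, hc, coeff_zero_eq_eval_zero, sub_self]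
  -- all but finitely many multiples `r` of `c N` satisfy `m(r) ≠ ± c`
  obtain ⟨t, ht⟩ : ∃ t : ℤ, m.eval (c * N * t) ≠ c ∧ m.eval (c * N * t) ≠ -c := by
    by_contra! hcon
    have hne : ∀ b : ℤ, m - C b ≠ 0 := by
      intro b h
      rw [sub_eq_zero.mp h, natDegree_C] at hm
      exact lt_irrefl _ hm
    have hfin : ((m - C c) * (m - C (-c))).rootSet ℤ |>.Finite := rootSet_finite _ _
    have hsub : Set.range (fun t : ℤ => c * N * t) ⊆ ((m - C c) * (m - C (-c))).rootSet ℤ := by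
      rintro _ ⟨t, rfl⟩
      rw [mem_rootSet]
      refine ⟨mul_ne_zero (hne _) (hne _), ?_⟩
      by_cases h : m.eval (c * N * t) = c
      · simp [aeval_def, h]
      · have := hcon t h
        simp [aeval_def, this]
    have hinj : Function.Injective fun t : ℤ => c * N * t := fun a b h =>
      mul_left_cancel₀ (mul_ne_zero hc0 hN0) h
    exact Set.infinite_range_of_injective hinj (hfin.subset hsub)
  set w : ℤ := 1 + N * t * Q.eval (c * N * t) with hw
  have hmw : m.eval (c * N * t) = c * w := by
    have := congrArg (eval (c * N * t)) hQ
    rw [eval_sub, eval_C, eval_mul, eval_X] at this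
    rw [hw]; linear_combination this
  have hw1 : w.natAbs ≠ 1 := by
    intro h
    rcases Int.natAbs_eq_iff.mp h with h | h
    · exact ht.1 (by rw [hmw, h]; simp)
    · exact ht.2 (by rw [hmw, h]; simp)
  have key : ∀ p : ℕ, p.Prime → (p : ℤ) ∣ w → B < p := by
    intro p hp hpw
    by_contra hle
    have h1 : (p : ℤ) ∣ N := by
      rw [hN]; exact_mod_cast hp.dvd_factorial.mpr (by omega)
    have h2 : (p : ℤ) ∣ 1 := by
      have : (1 : ℤ) = w - N * (t * Q.eval (c * N * t)) := by rw [hw]; ring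
      rw [this]; exact dvd_sub hpw (h1.mul_right _)
    exact hp.one_lt.ne' (by exact_mod_cast Int.eq_one_of_dvd_one (by positivity) h2)
  obtain ⟨p, hp, hpw⟩ := Nat.exists_prime_and_dvd hw1
  have hpw' : (p : ℤ) ∣ w := Int.natCast_dvd.mpr hpw
  exact ⟨p, hp, key p hp hpw', c * N * t, by rw [hmw]; exact hpw'.mul_left _⟩

/-- A homomorphism `v` to a field that factors through `u` extends to every ring of fractions
whose denominators are powers of a given element with nonzero image. -/
lemma exists_hom_of_denom {Z E F : Type*} [CommRing Z] [Field E] [Field F] (u : Z →+* E)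
    (v : Z →+* F) (huv : ∀ z, u z = 0 → v z = 0) (n : Z) (hvn : v n ≠ 0)
    (A : Subring E) (hA : ∀ a ∈ A, ∃ (j : ℕ) (P : Z), u n ^ j * a = u P) :
    Nonempty (A →+* F) := by
  have hA' : ∀ a : A, ∃ (j : ℕ) (P : Z), u n ^ j * (a : E) = u P := fun a => hA a a.2
  choose j P hP using hA'
  have key : ∀ (a : A) (i : ℕ) (Q : Z), u n ^ i * (a : E) = u Q →
      v (P a) / v n ^ j a = v Q / v n ^ i := by
    intro a i Q h
    have h1 : v (n ^ i * P a - n ^ j a * Q) = 0 := by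
      apply huv
      rw [map_sub, map_mul, map_mul, map_pow, map_pow, ← hP, ← h]; ring
    rw [map_sub, map_mul, map_mul, map_pow, map_pow, sub_eq_zero] at h1
    rw [div_eq_div_iff (pow_ne_zero _ hvn) (pow_ne_zero _ hvn)]
    linear_combination h1
  refine ⟨{ toFun := fun a => v (P a) / v n ^ j a
            map_one' := ?_, map_mul' := ?_, map_zero' := ?_, map_add' := ?_ }⟩
  · rw [key 1 0 1 (by simp)]; simp
  · intro a b
    rw [key (a * b) (j a + j b) (P a * P b), map_mul, pow_add, mul_div_mul_comm]
    rw [map_mul, ← hP, ← hP, Subring.coe_mul]; ring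
  · rw [key 0 0 0 (by simp)]; simp
  · intro a b
    rw [key (a + b) (j a + j b) (n ^ j b * P a + n ^ j a * P b), map_add, map_mul, map_mul,
      map_pow, map_pow, pow_add]
    · field_simp
    · rw [map_add, map_mul, map_mul, map_pow, map_pow, ← hP, ← hP, Subring.coe_add]; ring

/-- A finitely generated ring of algebraic numbers has homomorphisms to `𝔽_p` for arbitrarily
large primes `p`. -/
theorem exists_hom_zmod (S : Finset ℂ) (hS : ∀ s ∈ S, IsAlgebraic ℚ s) (B : ℕ) :
    ∃ p : ℕ, ∃ _ : Fact p.Prime, B < p ∧ Nonempty (Subring.closure (S : Set ℂ) →+* ZMod p) := by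
  classical
  have hfd : FiniteDimensional ℚ (IntermediateField.adjoin ℚ (S : Set ℂ)) :=
    IntermediateField.finiteDimensional_adjoin fun s hs => (hS s hs).isIntegral
  obtain ⟨θ₀, hθ₀⟩ := Field.exists_primitive_element ℚ (IntermediateField.adjoin ℚ (S : Set ℂ))
  have hθ₀a : IsAlgebraic ℤ θ₀ :=
    (IsFractionRing.isAlgebraic_iff ℤ ℚ _).mpr (IsAlgebraic.of_finite ℚ θ₀)
  obtain ⟨b, hb0, hb⟩ := hθ₀a.exists_integral_multiple
  set θ := b • θ₀ with hθ
  have htop : Algebra.adjoin ℚ {θ₀} = ⊤ := by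
    rw [← IntermediateField.adjoin_simple_toSubalgebra_of_isAlgebraic (IsAlgebraic.of_finite ℚ θ₀),
      hθ₀, IntermediateField.top_toSubalgebra]
  have hden : ∀ x : IntermediateField.adjoin ℚ (S : Set ℂ),
      ∃ (n : ℤ) (P : ℤ[X]), n ≠ 0 ∧ (n : IntermediateField.adjoin ℚ (S : Set ℂ)) * x = aeval θ P := by
    intro x
    have hx : x ∈ Algebra.adjoin ℚ {θ₀} := htop ▸ Algebra.mem_top
    induction hx using Algebra.adjoin_induction with
    | mem x hx =>
      rw [Set.mem_singleton_iff] at hx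
      exact ⟨b, X, hb0, by rw [hx, aeval_X, hθ, zsmul_eq_mul]⟩
    | algebraMap c =>
      refine ⟨c.den, C c.num, by exact_mod_cast c.den_ne_zero, ?_⟩
      rw [aeval_C, algebraMap_int_eq, eq_intCast, eq_ratCast (algebraMap ℚ _)]
      have : (c.den : ℚ) * c = c.num := by
        rw [mul_comm]; exact Rat.mul_den_eq_num c
      exact_mod_cast congrArg (Rat.cast (K := IntermediateField.adjoin ℚ (S : Set ℂ))) this
    | add x y _ _ hx hy =>
      obtain ⟨n, P, hn, hP⟩ := hx
      obtain ⟨n', P', hn', hP'⟩ := hy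
      refine ⟨n * n', C n' * P + C n * P', mul_ne_zero hn hn', ?_⟩
      rw [map_add, map_mul, map_mul, aeval_C, aeval_C, ← hP, ← hP', algebraMap_int_eq,
        eq_intCast, eq_intCast]
      push_cast; ring
    | mul x y _ _ hx hy =>
      obtain ⟨n, P, hn, hP⟩ := hx
      obtain ⟨n', P', hn', hP'⟩ := hy
      refine ⟨n * n', P * P', mul_ne_zero hn hn', ?_⟩
      rw [map_mul, ← hP, ← hP']
      push_cast; ring
  have hden' : ∀ s : ℂ, ∃ (n : ℤ) (P : ℤ[X]), n ≠ 0 ∧ (s ∈ S → (n : ℂ) * s = aeval (θ : ℂ) P) := by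
    intro s
    by_cases hs : s ∈ S
    · obtain ⟨n, P, hn, hP⟩ := hden ⟨s, IntermediateField.subset_adjoin ℚ _ hs⟩
      refine ⟨n, P, hn, fun _ => ?_⟩
      have := congrArg Subtype.val hP
      rw [← IntermediateField.aeval_coe]  at this
      simpa using this
    · exact ⟨1, 0, one_ne_zero, fun h => absurd h hs⟩
  choose n P hn hP using hden'
  set N : ℤ := ∏ s ∈ S, n s with hN
  have hN0 : N ≠ 0 := Finset.prod_ne_zero_iff.mpr fun s _ => hn s
  have hint : IsIntegral ℤ (θ : ℂ) := hb.map
    ((IntermediateField.adjoin ℚ (S : Set ℂ)).val.restrictScalars ℤ)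
  obtain ⟨p, hp, hBp, r, hr⟩ := exists_prime_root (minpoly ℤ (θ : ℂ))
    (minpoly.natDegree_pos hint) (B + N.natAbs)
  have : Fact p.Prime := ⟨hp⟩
  refine ⟨p, this, by omega, ?_⟩
  refine exists_hom_of_denom (aeval (θ : ℂ)).toRingHom
    (eval₂RingHom (Int.castRingHom (ZMod p)) (r : ZMod p)) ?_ (C N) ?_ _ ?_
  · intro Q hQ
    obtain ⟨R, rfl⟩ := minpoly.isIntegrallyClosed_dvd hint hQ
    rw [map_mul]
    have : eval₂RingHom (Int.castRingHom (ZMod p)) (r : ZMod p) (minpoly ℤ (θ : ℂ)) = 0 := by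
      rw [coe_eval₂RingHom, ← eq_intCast (Int.castRingHom (ZMod p)) r, eval₂_at_apply, eq_intCast]
      exact (ZMod.intCast_zmod_eq_zero_iff_dvd _ _).mpr hr
    rw [this, zero_mul]
  · rw [coe_eval₂RingHom, eval₂_C, eq_intCast, Ne, ZMod.intCast_zmod_eq_zero_iff_dvd]
    intro h
    have := Nat.le_of_dvd (Int.natAbs_pos.mpr hN0) (Int.natCast_dvd.mp h)
    omega
  · have hu : ∀ c : ℤ, (aeval (θ : ℂ)).toRingHom (C c) = (c : ℂ) := fun c => by
      simp
    intro a ha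
    rw [hu]
    induction ha using Subring.closure_induction with
    | mem s hs =>
      refine ⟨1, C (∏ t ∈ S.erase s, n t) * P s, ?_⟩
      rw [map_mul, hu, pow_one, hN, ← Finset.mul_prod_erase S n hs]
      change _ = _ * aeval (θ : ℂ) (P s)
      rw [← hP s hs]; push_cast; ring
    | zero => exact ⟨0, 0, by simp⟩
    | one => exact ⟨0, 1, by simp⟩
    | add x y _ _ hx hy =>
      obtain ⟨i, Q, h1⟩ := hx
      obtain ⟨j, R, h2⟩ := hy
      refine ⟨i + j, C (N ^ j) * Q + C (N ^ i) * R, ?_⟩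
      rw [map_add, map_mul, map_mul, hu, hu, ← h1, ← h2]; push_cast; ring
    | neg x _ hx =>
      obtain ⟨i, Q, h1⟩ := hx
      exact ⟨i, -Q, by rw [map_neg, ← h1]; ring⟩
    | mul x y _ _ hx hy =>
      obtain ⟨i, Q, h1⟩ := hx
      obtain ⟨j, R, h2⟩ := hy
      exact ⟨i + j, Q * R, by rw [map_mul, ← h1, ← h2]; ring⟩

end Spec

/-! ### Scaling to monic polynomials and the obstruction to being Dickson -/

/-- Dickson polynomials with a square parameter `μ ^ 2` are scalings of the Chebyshev polynomial. -/
lemma eval_dickson_scale {k : Type*} [CommRing k] (μ x : k) (n : ℕ) :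
    (dickson 1 (μ ^ 2) n).eval (μ * x) = μ ^ n * (dickson 1 1 n).eval x := by
  induction n using Nat.strong_induction_on with
  | _ n ih =>
    match n with
    | 0 => simp [dickson_zero]
    | 1 => simp [dickson_one]
    | n + 2 =>
      rw [dickson_add_two, dickson_add_two, eval_sub, eval_sub, eval_mul, eval_mul, eval_mul,
        eval_mul, eval_X, eval_X, eval_C, eval_C, ih n (by omega), ih (n + 1) (by omega)]
      ring

lemma perCount_congr {F F' : Type*} [CommRing F] [CommRing F'] (e : F ≃ F') (g : F[X]) (g' : F'[X])
    (h : ∀ x, e (g.eval x) = g'.eval (e x)) : perCount g = perCount g' := by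
  have hs : Function.Semiconj e (fun x => g.eval x) (fun x => g'.eval x) := h
  refine Nat.card_congr (e.subtypeEquiv fun α => ?_)
  refine exists_congr fun m => and_congr_right fun _ => ?_
  rw [← (hs.iterate_right m) α, e.injective.eq_iff]

/-- The monic conjugate of `f` by the scaling `l`, where `l' = l⁻¹` and `l ^ (d - 1)` is the leading
coefficient of `f`. -/
noncomputable def scale {R : Type*} [CommRing R] (f : R[X]) (l l' : R) : R[X] :=
  C l * f.comp (C l' * X)

lemma scale_map {R S : Type*} [CommRing R] [CommRing S] (φ : R →+* S) (f : R[X]) (l l' : R) :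
    (scale f l l').map φ = scale (f.map φ) (φ l) (φ l') := by
  simp [scale, Polynomial.map_comp]

lemma eval_scale {R : Type*} [CommRing R] (f : R[X]) (l l' x : R) :
    (scale f l l').eval x = l * f.eval (l' * x) := by
  simp [scale]

lemma perCount_scale {R : Type*} [CommRing R] (f : R[X]) (l l' : R) (h : l * l' = 1) :
    perCount (scale f l l') = perCount f := by
  refine (perCount_congr ⟨fun x => l * x, fun x => l' * x, fun x => ?_, fun x => ?_⟩ _ _
    fun x => ?_).symm
  · change l' * (l * x) = x
    rw [← mul_assoc, mul_comm l', h, one_mul]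
  · change l * (l' * x) = x
    rw [← mul_assoc, h, one_mul]
  · change l * f.eval x = (scale f l l').eval (l * x)
    rw [eval_scale, ← mul_assoc l', mul_comm l', h, one_mul]

lemma scale_monic {k : Type*} [Field k] (f : k[X]) {d : ℕ} (hd : 2 ≤ d) (hf : f.natDegree = d)
    {l : k} (hl : l ^ (d - 1) = f.leadingCoeff) (hl0 : l ≠ 0) :
    (scale f l l⁻¹).Monic ∧ (scale f l l⁻¹).natDegree = d := by
  have h1 : (C l⁻¹ * X : k[X]).natDegree = 1 := natDegree_C_mul_X _ (inv_ne_zero hl0)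
  have h2 : (scale f l l⁻¹).natDegree = d := by
    rw [scale, natDegree_C_mul hl0, natDegree_comp, h1, hf, mul_one]
  refine ⟨?_, h2⟩
  rw [Monic, scale, leadingCoeff_mul, leadingCoeff_C, leadingCoeff_comp (by rw [h1]; simp),
    leadingCoeff_C_mul_X, hf, ← hl]
  obtain ⟨n, rfl⟩ : ∃ n, d = n + 2 := ⟨d - 2, by omega⟩
  rw [show n + 2 - 1 = n + 1 by omega, inv_pow]
  field_simp
  ring

/-- The centre, in terms of `1 / d`, of the coordinate in which `g` is centred. -/
noncomputable def cen {R : Type*} [CommRing R] (g : R[X]) (d : ℕ) (e : R) : R :=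
  -(e * g.coeff (d - 1))

/-- The conjugate of `g` by the translation by its centre. -/
noncomputable def centred {R : Type*} [CommRing R] (g : R[X]) (d : ℕ) (e : R) : R[X] :=
  g.comp (X + C (cen g d e)) - C (cen g d e)

/-- The only possible parameter of a Dickson polynomial conjugate to `g` by a translation. -/
noncomputable def param {R : Type*} [CommRing R] (g : R[X]) (d : ℕ) (e : R) : R :=
  -(e * (centred g d e).coeff (d - 2))

section maps

variable {R S : Type*} [CommRing R] [CommRing S] (φ : R →+* S) (g : R[X]) (d : ℕ) (e : R)

lemma cen_map : cen (g.map φ) d (φ e) = φ (cen g d e) := by simp [cen]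

lemma centred_map : centred (g.map φ) d (φ e) = (centred g d e).map φ := by
  simp [centred, cen_map, Polynomial.map_comp]

lemma param_map : param (g.map φ) d (φ e) = φ (param g d e) := by
  simp [param, centred_map]

end maps

/-- When `d` is invertible, the centre and the parameter of a Dickson polynomial are determined by its two
coefficients below the leading one. -/
lemma isDickson_iff {k : Type*} [Field k] (g : k[X]) {d : ℕ} (hd : 2 ≤ d) {e : k}
    (he : e * d = 1) : IsDickson g d ↔
      param g d e ^ (d - 1) = 1 ∧ centred g d e = dickson 1 (param g d e) d := by
  constructor
  · rintro ⟨c, κ, hκ, hg⟩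
    obtain ⟨n, rfl⟩ : ∃ n, d = n + 2 := ⟨d - 2, by omega⟩
    obtain ⟨h1, h2, h3⟩ := dickson_coeffs κ n
    set D := dickson 1 κ (n + 2) with hD
    have hR : (D - X ^ (n + 2)).natDegree ≤ n := by
      rw [natDegree_le_iff_coeff_eq_zero]
      intro j hj
      rw [coeff_sub, coeff_X_pow]
      rcases lt_trichotomy j (n + 2) with h | h | h
      · obtain rfl : j = n + 1 := by omega
        rw [h2, if_neg (by omega), sub_zero]
      · rw [h, h1, if_pos rfl, sub_self]
      · rw [coeff_eq_zero_of_natDegree_lt ((dickson_natDegree_le κ (n + 2)).trans_lt h),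
          if_neg (by omega), sub_zero]
    have hcen : cen g (n + 2) e = c := by
      have h4 : g = (X + C (-c)) ^ (n + 2) + (D - X ^ (n + 2)).comp (X - C c) + C c := by
        rw [hg, sub_comp, X_pow_comp, C_neg]; ring
      have h5 : ((D - X ^ (n + 2)).comp (X - C c)).coeff (n + 1) = 0 := by
        apply coeff_eq_zero_of_natDegree_lt
        rw [natDegree_comp, natDegree_X_sub_C, mul_one]; omega
      have h6 : g.coeff (n + 1) = -c * (n + 2 : ℕ) := by
        rw [h4, coeff_add, coeff_add, h5, coeff_X_add_C_pow, coeff_C, if_neg (by omega),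
          show n + 2 - (n + 1) = 1 by omega, pow_one, add_zero, add_zero]
        congr 2
        exact Nat.choose_succ_self_right (n + 1)
      rw [cen, show n + 2 - 1 = n + 1 by omega, h6]
      linear_combination c * he
    have hcent : centred g (n + 2) e = D := by
      rw [centred, hcen, hg, add_comp, comp_assoc]
      simp
    have hpar : param g (n + 2) e = κ := by
      rw [param, hcent, show n + 2 - 2 = n by omega, h3]
      linear_combination κ * he
    rw [hpar, hcent]
    exact ⟨hκ, rfl⟩
  · rintro ⟨h1, h2⟩
    refine ⟨cen g d e, param g d e, h1, ?_⟩
    rw [← h2, centred, sub_comp, C_comp, comp_assoc, sub_add_cancel]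
    simp

/-- A monic polynomial conjugate to a Dickson polynomial with parameter `κ`, `κ ^ (d - 1) = 1`, is
conjugate to `± T_d`. -/
lemma isLinConj_of_isDickson {R : Type*} [CommRing R] (ρ : R →+* ℂ) (f : R[X]) {d : ℕ} (hd : 2 ≤ d)
    {l : ℂ} (hl : l ≠ 0) (h : IsDickson (scale (f.map ρ) l l⁻¹) d) : IsLinConjChebyshev ρ f d := by
  obtain ⟨c, κ, hκ, hg⟩ := h
  obtain ⟨μ, hμ⟩ := IsAlgClosed.exists_pow_nat_eq κ (n := 2) (by norm_num)
  have hμ0 : μ ≠ 0 := by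
    rintro rfl
    rw [← hμ, zero_pow two_ne_zero, zero_pow (by omega)] at hκ
    exact zero_ne_one hκ
  refine ⟨μ ^ (d - 1), l / μ, -c / μ, ?_, div_ne_zero hl hμ0, fun x => ?_⟩
  · rw [← sq_eq_sq_iff_eq_or_eq_neg, one_pow]
    rw [← pow_mul, mul_comm, pow_mul, hμ, hκ]
  · have h1 := congrArg (eval (l * x)) hg
    rw [eval_scale, inv_mul_cancel_left₀ hl, eval_add, eval_comp, eval_sub, eval_X, eval_C, ← hμ,
      show l * x - c = μ * (l / μ * x + -c / μ) by field_simp; ring, eval_dickson_scale] at h1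
    have h2 : μ ^ d = μ ^ (d - 1) * μ := by rw [← pow_succ]; congr 1; omega
    rw [h2] at h1
    generalize eval (l / μ * x + -c / μ) (dickson 1 1 d : ℂ[X]) = T at h1 ⊢
    field_simp
    linear_combination h1

/-- The family of obstructions to `g` being conjugate by a translation to a Dickson polynomial with parameter
`κ`, `κ ^ (d - 1) = 1`: they are polynomial in the coefficients of `g` and in `e = 1 / d`, hence
compatible with reduction. -/
noncomputable def obs {R : Type*} [CommRing R] (i : Option ℕ) (g : R[X]) (d : ℕ) (e : R) : R :=
  i.elim (param g d e ^ (d - 1) - 1) fun n => (centred g d e - dickson 1 (param g d e) d).coeff n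

lemma obs_map {R S : Type*} [CommRing R] [CommRing S] (φ : R →+* S) (i : Option ℕ) (g : R[X])
    (d : ℕ) (e : R) : obs i (g.map φ) d (φ e) = φ (obs i g d e) := by
  cases i with
  | none => simp [obs, param_map]
  | some n =>
    simp only [obs, Option.elim]
    rw [param_map, centred_map, ← map_dickson, ← Polynomial.map_sub, coeff_map]

lemma isDickson_iff_obs {k : Type*} [Field k] (g : k[X]) {d : ℕ} (hd : 2 ≤ d) {e : k}
    (he : e * d = 1) : IsDickson g d ↔ ∀ i, obs i g d e = 0 := by
  rw [isDickson_iff g hd he]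
  constructor
  · rintro ⟨h1, h2⟩ (_ | n)
    · simp [obs, h1]
    · simp [obs, h2]
  · intro h
    refine ⟨sub_eq_zero.mp (h none), ?_⟩
    ext n
    exact sub_eq_zero.mp ((coeff_sub _ _ n).symm.trans (h (some n)))

/-! ### Number fields -/

lemma exists_lift_subring {R : Type*} [CommRing R] (j : R →+* ℂ) (A : Subring ℂ)
    (hj : ∀ x, j x ∈ A) : ∃ jA : R →+* A, A.subtype.comp jA = j :=
  ⟨j.codRestrict A hj, RingHom.ext fun _ => rfl⟩

/-- There are prime ideals of arbitrarily large norm modulo which the proportion of periodic points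
of `f` is small. -/
theorem exists_prime_perCount_le (K : Type*) [Field K] [NumberField K]
    (ι : K →+* ℂ) (d : ℕ) (hd : 2 ≤ d) (f : (𝓞 K)[X]) (hdeg : f.natDegree = d)
    (hnot : ¬ IsLinConjChebyshev (ι.comp (algebraMap (𝓞 K) K)) f d)
    (ε : ℝ) (hε : 0 < ε) (B : ℕ) :
    ∃ 𝔭 : {I : Ideal (𝓞 K) // I.IsPrime ∧ I ≠ ⊥}, B ≤ Ideal.absNorm 𝔭.1 ∧
      (perCount (f.map (Ideal.Quotient.mk 𝔭.1)) : ℝ) / (Ideal.absNorm 𝔭.1 : ℝ) ≤ ε := by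
  classical
  obtain ⟨L, C₀, hFF⟩ := exists_perCount_le.{0} d hd ε hε
  set j : 𝓞 K →+* ℂ := ι.comp (algebraMap (𝓞 K) K) with hj
  have hji : Function.Injective j :=
    ι.injective.comp (FaithfulSMul.algebraMap_injective (𝓞 K) K)
  have hjd : (f.map j).natDegree = d := by rw [natDegree_map_eq_of_injective hji, hdeg]
  have hf0 : f.map j ≠ 0 := by
    intro h
    rw [h, natDegree_zero] at hjd; omega
  have hd0 : (d : ℂ) ≠ 0 := by exact_mod_cast (by omega : d ≠ 0)
  have hD0 : d ^ L ≠ 0 := pow_ne_zero _ (by omega)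
  -- conjugation by the scaling `l` makes `f` monic
  obtain ⟨l, hl⟩ := IsAlgClosed.exists_pow_nat_eq (f.map j).leadingCoeff
    (n := d - 1) (by omega)
  have hl0 : l ≠ 0 := by
    rintro rfl
    rw [zero_pow (by omega)] at hl
    exact hf0 (leadingCoeff_eq_zero.mp hl.symm)
  have hlinv : l * l⁻¹ = 1 := mul_inv_cancel₀ hl0
  obtain ⟨hGm, hGd⟩ := scale_monic (f.map j) hd hjd hl hl0
  have hGnd : ¬ IsDickson (scale (f.map j) l l⁻¹) d := fun h =>
    hnot (isLinConj_of_isDickson j f hd hl0 h)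
  rw [isDickson_iff_obs _ hd (inv_mul_cancel₀ hd0)] at hGnd
  push Not at hGnd
  -- `w` is a nonzero obstruction; its inverse is adjoined to the ring `A` below so that it stays
  -- nonzero under every homomorphism to a field
  obtain ⟨i, hw⟩ := hGnd
  set w := obs i (scale (f.map j) l l⁻¹) d (d : ℂ)⁻¹ with hwd
  -- the ring `A` contains the data defining `w`
  have hobs : ∀ (A : Subring ℂ) (jA : 𝓞 K →+* A) (a a' e : A), A.subtype.comp jA = j →
      (a : ℂ) = l → (a' : ℂ) = l⁻¹ → (e : ℂ) = (d : ℂ)⁻¹ →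
      (scale (f.map jA) a a').map A.subtype = scale (f.map j) l l⁻¹ ∧
      ((obs i (scale (f.map jA) a a') d e : A) : ℂ) = w := by
    intro A jA a a' e h1 h2 h3 h4
    have h5 : (scale (f.map jA) a a').map A.subtype = scale (f.map j) l l⁻¹ := by
      rw [scale_map, Polynomial.map_map, h1, ← h3, ← h2]; rfl
    refine ⟨h5, ?_⟩
    rw [hwd, ← h5, ← h4]
    exact (obs_map A.subtype i _ d e).symm
  have hja : ∀ x, IsAlgebraic ℚ (j x) := by
    intro x
    have h1 : IsIntegral ℤ (j x) := (RingOfIntegers.isIntegral x).map j.toIntAlgHom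
    exact h1.tower_top.isAlgebraic
  have hla : IsAlgebraic ℚ l := by
    apply IsAlgebraic.of_pow (n := d - 1) (by omega)
    rw [hl, leadingCoeff, coeff_map]
    exact hja _
  have hda : IsAlgebraic ℚ (d : ℂ)⁻¹ := (isAlgebraic_natCast d).inv
  have hwa : IsAlgebraic ℚ w := by
    let A := (Subalgebra.algebraicClosure ℚ ℂ).toSubring
    have hA : ∀ {x : ℂ}, IsAlgebraic ℚ x → x ∈ A := fun hx =>
      (Subalgebra.mem_algebraicClosure ℚ ℂ).mpr hx
    obtain ⟨jA, hjA⟩ := exists_lift_subring j A fun x => hA (hja x)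
    have := (hobs A jA ⟨l, hA hla⟩ ⟨l⁻¹, hA hla.inv⟩ ⟨_, hA hda⟩ hjA rfl rfl rfl).2
    rw [← this]
    exact (Subalgebra.mem_algebraicClosure ℚ ℂ).mp (Subtype.property _)
  obtain ⟨ζ, hζ⟩ : ∃ ζ : ℂ, IsPrimitiveRoot ζ (d ^ L) := ⟨_, Complex.isPrimitiveRoot_exp _ hD0⟩
  obtain ⟨T, hT⟩ : (⊤ : Submodule ℤ (𝓞 K)).FG := Module.Finite.fg_top
  obtain ⟨p, hp, hpB, ⟨φ⟩⟩ := Spec.exists_hom_zmod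
    (T.image j ∪ {ζ, l, l⁻¹, (d : ℂ)⁻¹, w⁻¹}) (by
      intro s hs
      simp only [Finset.mem_union, Finset.mem_image, Finset.mem_insert,
        Finset.mem_singleton] at hs
      rcases hs with ⟨x, -, rfl⟩ | rfl | rfl | rfl | rfl | rfl
      · exact hja x
      · refine IsAlgebraic.of_pow (n := d ^ L) (by omega) ?_
        rw [hζ.pow_eq_one]; exact isAlgebraic_one
      · exact hla
      · exact hla.inv
      · exact hda
      · exact hwa.inv) (B + C₀ + d)
  set A := Subring.closure ((T.image j ∪ {ζ, l, l⁻¹, (d : ℂ)⁻¹, w⁻¹} : Finset ℂ) : Set ℂ) with hA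
  have hAmem : ∀ x : ℂ, x ∈ ({ζ, l, l⁻¹, (d : ℂ)⁻¹, w⁻¹} : Finset ℂ) → x ∈ A := fun x hx =>
    Subring.subset_closure (Finset.mem_coe.mpr (Finset.mem_union_right _ hx))
  obtain ⟨jA, hjA⟩ := exists_lift_subring j A (by
    intro x
    have hx : x ∈ Submodule.span ℤ (T : Set (𝓞 K)) := hT ▸ Submodule.mem_top
    induction hx using Submodule.span_induction with
    | mem x hx =>
      exact Subring.subset_closure (Finset.mem_coe.mpr (Finset.mem_union_left _
        (Finset.mem_image_of_mem j hx)))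
    | zero => rw [map_zero]; exact zero_mem _
    | add x y _ _ hx hy => rw [map_add]; exact add_mem hx hy
    | smul n x _ hx => rw [map_zsmul]; exact zsmul_mem hx n)
  let a : A := ⟨l, hAmem _ (by simp)⟩
  let a' : A := ⟨l⁻¹, hAmem _ (by simp)⟩
  let e : A := ⟨(d : ℂ)⁻¹, hAmem _ (by simp)⟩
  let z : A := ⟨ζ, hAmem _ (by simp)⟩
  let w' : A := ⟨w⁻¹, hAmem _ (by simp)⟩
  obtain ⟨hg1, hg2⟩ := hobs A jA a a' e hjA rfl rfl rfl
  have hAi : Function.Injective A.subtype := Subtype.val_injective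
  set g := scale (f.map jA) a a' with hg
  have hgm : g.Monic := monic_of_injective hAi (by rw [hg1]; exact hGm)
  have hgd : g.natDegree = d := by rw [← natDegree_map_eq_of_injective hAi, hg1, hGd]
  set ψ := φ.comp jA with hψ
  have hdp : ((d : ℕ) : ZMod p) ≠ 0 := by
    rw [Ne, ZMod.natCast_eq_zero_iff]
    intro h
    have := Nat.le_of_dvd (by omega) h
    omega
  have hDp : ((d ^ L : ℕ) : ZMod p) ≠ 0 := by
    rw [Nat.cast_pow]; exact pow_ne_zero _ hdp
  have hzA : IsPrimitiveRoot z (d ^ L) := by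
    rw [← IsPrimitiveRoot.map_iff_of_injective (f := A.subtype) hAi]; exact hζ
  have hzp : IsPrimitiveRoot (φ z) (d ^ L) := by
    have : NeZero ((d ^ L : ℕ) : ZMod p) := ⟨hDp⟩
    -- the order of the root of unity is preserved because `d ^ L` is invertible in `ZMod p`
    rw [← isRoot_cyclotomic_iff, ← map_cyclotomic _ φ]
    exact (hzA.isRoot_cyclotomic (Nat.pos_of_ne_zero hD0)).map
  have hgp : (g.map φ) = scale (f.map ψ) (φ a) (φ a') := by
    rw [hg, scale_map, Polynomial.map_map]
  have hnd : ¬ IsDickson (g.map φ) d := by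
    have he : φ e * (d : ZMod p) = 1 := by
      rw [← map_natCast φ, ← map_mul, ← map_one φ]
      congr 1
      exact Subtype.ext (by simpa [e] using inv_mul_cancel₀ hd0)
    rw [isDickson_iff_obs _ hd he]
    intro h
    have h1 := h i
    rw [obs_map] at h1
    have h2 : obs i g d e * w' = 1 := Subtype.ext (by
      rw [Subring.coe_mul, hg2]; exact mul_inv_cancel₀ hw)
    have h3 := congrArg φ h2
    rw [map_mul, h1, zero_mul, map_one] at h3
    exact zero_ne_one h3
  have hmain := hFF (ZMod p) p (fun c => ZMod.pow_card c) (by omega) _ hzp (g.map φ) (hgm.map φ)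
    (by rw [hgm.natDegree_map, hgd]) hnd
  have haa : φ a * φ a' = 1 := by
    rw [← map_mul, ← map_one φ]; congr 1; exact Subtype.ext hlinv
  rw [hgp, perCount_scale _ _ _ haa] at hmain
  have hψs : Function.Surjective ψ := ZMod.ringHom_surjective ψ
  -- the prime ideal is the kernel of `ψ`, of residue degree one
  let E := RingHom.quotientKerEquivOfSurjective hψs
  have hnorm : Ideal.absNorm (RingHom.ker ψ) = p := by
    rw [Ideal.absNorm_apply, Submodule.cardQuot_apply, Nat.card_congr E.toEquiv, Nat.card_zmod]
  have hcount : perCount (f.map (Ideal.Quotient.mk (RingHom.ker ψ))) = perCount (f.map ψ) := by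
    refine perCount_congr E.toEquiv _ _ fun x => ?_
    have h1 : (E : 𝓞 K ⧸ RingHom.ker ψ →+* ZMod p).comp (Ideal.Quotient.mk (RingHom.ker ψ)) = ψ :=
      RingHom.ext fun x => rfl
    change (E : 𝓞 K ⧸ RingHom.ker ψ →+* ZMod p) _ = eval ((E : 𝓞 K ⧸ RingHom.ker ψ →+* ZMod p) x) _
    rw [← eval_map_apply, Polynomial.map_map, h1]
  refine ⟨⟨RingHom.ker ψ, RingHom.ker_isPrime ψ, ?_⟩, ?_, ?_⟩
  · intro h
    rw [h, Ideal.absNorm_bot] at hnorm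
    omega
  · change B ≤ Ideal.absNorm (RingHom.ker ψ)
    rw [hnorm]; omega
  · change (perCount (f.map (Ideal.Quotient.mk (RingHom.ker ψ))) : ℝ) /
      (Ideal.absNorm (RingHom.ker ψ) : ℝ) ≤ ε
    rw [hnorm, hcount, div_le_iff₀ (by exact_mod_cast hp.out.pos)]
    exact hmain

theorem perInf_of_not_conj_chebyshev (K : Type*) [Field K] [NumberField K]
    (ι : K →+* ℂ) (d : ℕ) (hd : 2 ≤ d) (f : (𝓞 K)[X]) (hdeg : f.natDegree = d)
    (hnot : ¬ IsLinConjChebyshev (ι.comp (algebraMap (𝓞 K) K)) f d) :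
    perInf K f = 0 := by
  have hfreq : ∀ ε : ℝ, 0 < ε →
      ∃ᶠ 𝔭 : {I : Ideal (𝓞 K) // I.IsPrime ∧ I ≠ ⊥} in comap (fun 𝔭 => Ideal.absNorm 𝔭.1) atTop,
        (perCount (f.map (Ideal.Quotient.mk 𝔭.1)) : ℝ) / (Ideal.absNorm 𝔭.1 : ℝ) ≤ ε := by
    intro ε hε
    rw [(atTop_basis.comap _).frequently_iff]
    intro B _
    obtain ⟨𝔭, h1, h2⟩ := exists_prime_perCount_le K ι d hd f hdeg hnot ε hε B
    exact ⟨𝔭, h1, h2⟩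
  have hnn : ∀ᶠ 𝔭 : {I : Ideal (𝓞 K) // I.IsPrime ∧ I ≠ ⊥} in
      comap (fun 𝔭 => Ideal.absNorm 𝔭.1) atTop,
      (0 : ℝ) ≤ (perCount (f.map (Ideal.Quotient.mk 𝔭.1)) : ℝ) / (Ideal.absNorm 𝔭.1 : ℝ) :=
    Eventually.of_forall fun 𝔭 => by positivity
  apply le_antisymm
  · refine le_of_forall_pos_le_add fun ε hε => ?_
    rw [zero_add]
    exact liminf_le_of_frequently_le (hfreq ε hε) ⟨0, hnn⟩
  · exact le_liminf_of_le (IsCoboundedUnder.of_frequently_le (hfreq 1 one_pos)) hnn
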